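/- arXiv:1709.07264 — 2 statements merged into one kernel-verified Lean document; each statement's English description precedes it below -/
import Mathlib

section
/- Suppose T_n converges in distribution under P_(n) to ξ1 and under Q_(n) to ξ2 (values in [−∞,∞]). Then the following are equivalent: (a) ξ1 and ξ2 are both Gaussian, or ξ1 = ξ2 ≡ 0 a.s.; (b) ξ1 ∼ N(−σ²/2, σ²) for some σ² ∈ [0,∞); (c) ξ2 ∼ N(σ²/2, σ²) for some σ² ∈ [0,∞); (d) ξ2 is real-valued a.s. and ξ1 ∼ N(a,σ²) for some a ∈ ℝ, σ² ∈ [0,∞); (e) ξ2 ∼ N(a,σ²) for some a ∈ ℝ, σ² ∈ [0,∞); (f) Z_n = Σ_{i=1}^{k_n} ε_{n,i}(dμ_{n,i}/dP_{n,i} − 1) converges in distribution under P_(n) to N(0,σ²) for some σ² ∈ [0,∞); (g) ξ2 is real-valued a.s. and max_{1≤i≤k_n} dQ_{n,i}/dP_{n,i} → 1 in P_(n)-probability; (h) ξ2 is real-valued a.s. and max_{1≤i≤k_n} ε_{n,i}·dμ_{n,i}/dP_{n,i} → 0 in P_(n)-probability; (i) for some τ ∈ (0,∞): I_{n,1,x}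 → 0 for all x > 0 and I_{n,2,τ} → σ² ∈ [0,∞). Moreover, if one of (b), (c), (f), (i) holds with a given σ² ∈ [0,∞), then all of them hold with the same σ². -/
open MeasureTheory Filter Topology

noncomputable section

/-- Mixture `Q = (1-e)·P + e·μ`. -/
def Qmix {α : Type*} [MeasurableSpace α] (P μ : Measure α) (e : ℝ) : Measure α :=
  (ENNReal.ofReal (1 - e)) • P + (ENNReal.ofReal e) • μ

/-- Product null measure `P_(n) = ⊗_{i<k_n} P_{n,i}`. -/
def Pprod {α : Type*} [MeasurableSpace α] (P : ℕ → ℕ → Measure α) (k : ℕ → ℕ) (n : ℕ) :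
    Measure (Fin (k n) → α) :=
  Measure.pi (fun i => P n i)

/-- Product alternative measure `Q_(n) = ⊗_{i<k_n} Q_{n,i}`. -/
def Qprod {α : Type*} [MeasurableSpace α] (P μ : ℕ → ℕ → Measure α) (ε : ℕ → ℕ → ℝ)
    (k : ℕ → ℕ) (n : ℕ) : Measure (Fin (k n) → α) :=
  Measure.pi (fun i => Qmix (P n i) (μ n i) (ε n i))

/-- Extended likelihood ratio `dQ/dP` with values in `[0,∞]` (equal to `+∞` on the
`P`-singular part of `Q`), computed via densities w.r.t. `P + Q`. -/
def elr {α : Type*} [MeasurableSpace α] (Q P : Measure α) (a : α) : ENNReal :=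
  Q.rnDeriv (P + Q) a / P.rnDeriv (P + Q) a

/-- Log-likelihood ratio statistic `T_n = Σ_{i<k_n} log(dQ_{n,i}/dP_{n,i})(y_i)`,
with values in `[−∞,∞]`. -/
def Tstat {α : Type*} [MeasurableSpace α] (P μ : ℕ → ℕ → Measure α) (ε : ℕ → ℕ → ℝ)
    (k : ℕ → ℕ) (n : ℕ) (y : Fin (k n) → α) : EReal :=
  ∑ i : Fin (k n), ENNReal.log (elr (Qmix (P n i) (μ n i) (ε n i)) (P n i) (y i))

/-- Law of `T_n` under the null `P_(n)`. -/
def lawP {α : Type*} [MeasurableSpace α] (P μ : ℕ → ℕ → Measure α) (ε : ℕ → ℕ → ℝ)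
    (k : ℕ → ℕ) (n : ℕ) : Measure EReal :=
  (Pprod P k n).map (Tstat P μ ε k n)

/-- Law of `T_n` under the alternative `Q_(n)`. -/
def lawQ {α : Type*} [MeasurableSpace α] (P μ : ℕ → ℕ → Measure α) (ε : ℕ → ℕ → ℝ)
    (k : ℕ → ℕ) (n : ℕ) : Measure EReal :=
  (Qprod P μ ε k n).map (Tstat P μ ε k n)

/-- Weak convergence of a sequence of measures (convergence in distribution):
integrals of bounded continuous functions converge. -/
def WeakLim {β : Type*} [MeasurableSpace β] [TopologicalSpace β]
    (μs : ℕ → Measure β) (ν : Measure β) : Prop :=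
  ∀ f : BoundedContinuousFunction β ℝ,
    Tendsto (fun n => ∫ x, f x ∂(μs n)) atTop (nhds (∫ x, f x ∂ν))

end
noncomputable section

open ProbabilityTheory

/-- Real-valued Radon–Nikodym density `dμ/dP`. -/
def dmuP {α : Type*} [MeasurableSpace α] (μ P : Measure α) (a : α) : ℝ :=
  (μ.rnDeriv P a).toReal

/-- `I_{n,1,x}`. -/
def I1 {α : Type*} [MeasurableSpace α] (P μ : ℕ → ℕ → Measure α) (ε : ℕ → ℕ → ℝ)
    (k : ℕ → ℕ) (x : ℝ) (n : ℕ) : ℝ :=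
  ∑ i ∈ Finset.range (k n),
    ε n i * ((μ n i) {a | x < ε n i * dmuP (μ n i) (P n i) a}).toReal

/-- `I_{n,2,x}`. -/
def I2 {α : Type*} [MeasurableSpace α] (P μ : ℕ → ℕ → Measure α) (ε : ℕ → ℕ → ℝ)
    (k : ℕ → ℕ) (x : ℝ) (n : ℕ) : ℝ :=
  ∑ i ∈ Finset.range (k n),
    (ε n i) ^ 2 * ∫ a, ((dmuP (μ n i) (P n i) a) ^ 2 *
      (if ε n i * dmuP (μ n i) (P n i) a ≤ x then (1 : ℝ) else 0) - 1) ∂(P n i)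

/-- The law `N(m, v)` (Dirac at `m` if `v ≤ 0`) pushed forward to `[−∞,∞]`. -/
def gaussE (m v : ℝ) : Measure EReal :=
  (gaussianReal m v.toNNReal).map (fun x : ℝ => (x : EReal))

/-- The linear statistic `Z_n = Σ_{i<k_n} ε_{n,i}(dμ_{n,i}/dP_{n,i}(y_i) − 1)`. -/
def Zstat {α : Type*} [MeasurableSpace α] (P μ : ℕ → ℕ → Measure α) (ε : ℕ → ℕ → ℝ)
    (k : ℕ → ℕ) (n : ℕ) (y : Fin (k n) → α) : ℝ :=
  ∑ i : Fin (k n), ε n i * (dmuP (μ n i) (P n i) (y i) - 1)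

/-- `max_{i<k_n} dQ_{n,i}/dP_{n,i}(y_i)`. -/
def maxQ {α : Type*} [MeasurableSpace α] (P μ : ℕ → ℕ → Measure α) (ε : ℕ → ℕ → ℝ)
    (k : ℕ → ℕ) (n : ℕ) (y : Fin (k n) → α) : ℝ :=
  ⨆ i : Fin (k n),
    ((Qmix (P n i) (μ n i) (ε n i)).rnDeriv (P n i) (y i)).toReal

/-- `max_{i<k_n} ε_{n,i}·dμ_{n,i}/dP_{n,i}(y_i)`. -/
def maxMu {α : Type*} [MeasurableSpace α] (P μ : ℕ → ℕ → Measure α) (ε : ℕ → ℕ → ℝ)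
    (k : ℕ → ℕ) (n : ℕ) (y : Fin (k n) → α) : ℝ :=
  ⨆ i : Fin (k n), ε n i * dmuP (μ n i) (P n i) (y i)

/-!
Both limit laws are encoded by the Hellinger transform `H r = lim ∏ ∫ (1 + W - ε) ^ r dP`,
`0 < r < 1`, where `W = ε • dμ/dP`: it equals `∫ exp (r x) ∂ξ₁` and `∫ exp ((r - 1) x) ∂ξ₂` on `ℝ`.
Since the factors tend to one uniformly and the exponents `∫ g_r (W - ε) dP`, with
`g_r x = 1 + r * x - (1 + x) ^ r ≥ 0`, have a constant sign, `H r = exp (-L r)` holds if and only if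
the row sums of these exponents tend to `L r`.

The hub of the equivalences is the Lindeberg condition, that is (i) for every `τ`: it turns the row
sums of any test function with a second-order expansion `g x ~ c * x ^ 2` at the origin and linear
growth into `σ² * c`. With `g_r` this gives the Hellinger transform of a Gaussian pair, and with
`exp (i t x) - 1 - i t x` the characteristic function of the limit of `Z_n`. Conversely,
`x ↦ x ^ 4` of a suitable variable is a combination of the `g_r` (or, for `Z_n`, of
`exp (-l x) - 1 + l x`) with vanishing second-order coefficient, so Gaussian limits force the row
maxima of `W` to vanish; the behaviour of `g_r` as `r → 1` (or of the Laplace tests as `l → 0`) then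
excludes a loss of mass in the tails.
-/

/-! ### Test functions with a second-order germ -/

section SecondOrderTests

variable {E : Type*} [NormedAddCommGroup E] [NormedSpace ℝ E]

/-- A continuous function that grows at most linearly on `[-1, ∞)` and equals `x² • c + o(x²)`
at `0`. The expectations of such a function along a row of centred variables `X ≥ -1` only depend,
in the limit, on the truncated variances of the row. -/
structure IsSecondOrderTest (g : ℝ → E) (c : E) : Prop where
  continuous : Continuous g
  exists_norm_le : ∃ K : ℝ, ∀ x, -1 ≤ x → ‖g x‖ ≤ K * |x|
  isLittleO : (fun x ↦ g x - x ^ 2 • c) =o[𝓝 0] fun x : ℝ ↦ x ^ 2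

lemma isLittleO_sub_sq_smul_of_hasDerivAt {g g' : ℝ → E} {c : E} (hg0 : g 0 = 0)
    (hg : ∀ᶠ x in 𝓝 0, HasDerivAt g (g' x) x) (hg'0 : g' 0 = 0)
    (hg' : HasDerivAt g' ((2 : ℝ) • c) 0) :
    (fun x ↦ g x - x ^ 2 • c) =o[𝓝 0] fun x : ℝ ↦ x ^ 2 := by
  obtain ⟨δ, hδ, hball⟩ := Metric.eventually_nhds_iff_ball.1 hg
  have hderiv : ∀ x ∈ Metric.ball (0 : ℝ) δ, HasDerivWithinAt (fun y ↦ g y - y ^ 2 • c)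
      (g' x - x • (2 : ℝ) • c) (Metric.ball 0 δ) x := fun x hx ↦ by
    have hsq : HasDerivAt (fun y : ℝ ↦ y ^ 2 • c) (x • (2 : ℝ) • c) x := by
      simpa [smul_smul, mul_comm] using (hasDerivAt_pow 2 x).smul_const c
    exact ((hball x hx).sub hsq).hasDerivWithinAt
  have hsmall : (fun x ↦ g' x - x • (2 : ℝ) • c) =o[𝓝[Metric.ball 0 δ] 0]
      fun x : ℝ ↦ (x - 0) ^ 1 := by
    simpa [hg'0] using (hasDerivAt_iff_isLittleO.1 hg').mono nhdsWithin_le_nhds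
  have := (convex_ball (0 : ℝ) δ).isLittleO_pow_succ_real (Metric.mem_ball_self hδ) hderiv hsmall
  simpa [hg0, (Metric.isOpen_ball.nhdsWithin_eq (Metric.mem_ball_self hδ))] using this

namespace IsSecondOrderTest

variable {g h : ℝ → E} {c d : E}

lemma add (hg : IsSecondOrderTest g c) (hh : IsSecondOrderTest h d) :
    IsSecondOrderTest (fun x ↦ g x + h x) (c + d) where
  continuous := hg.continuous.add hh.continuous
  exists_norm_le := by
    obtain ⟨K, hK⟩ := hg.exists_norm_le
    obtain ⟨L, hL⟩ := hh.exists_norm_le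
    refine ⟨K + L, fun x hx ↦ (norm_add_le _ _).trans ?_⟩
    linarith [hK x hx, hL x hx]
  isLittleO := by
    refine (hg.isLittleO.add hh.isLittleO).congr_left fun x ↦ ?_
    rw [smul_add]; abel

lemma const_smul (hg : IsSecondOrderTest g c) (a : ℝ) :
    IsSecondOrderTest (fun x ↦ a • g x) (a • c) where
  continuous := hg.continuous.const_smul a
  exists_norm_le := by
    obtain ⟨K, hK⟩ := hg.exists_norm_le
    refine ⟨|a| * K, fun x hx ↦ ?_⟩
    rw [norm_smul, Real.norm_eq_abs, mul_assoc]
    exact mul_le_mul_of_nonneg_left (hK x hx) (abs_nonneg a)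
  isLittleO := by
    refine (hg.isLittleO.const_smul_left a).congr_left fun x ↦ ?_
    rw [Pi.smul_apply, smul_sub, smul_comm]

lemma norm (hg : IsSecondOrderTest g c) : IsSecondOrderTest (fun x ↦ ‖g x‖) ‖c‖ where
  continuous := hg.continuous.norm
  exists_norm_le := by simpa using hg.exists_norm_le
  isLittleO := by
    refine (Asymptotics.IsBigO.of_bound' (.of_forall fun x ↦ ?_)).trans_isLittleO hg.isLittleO
    have hsmul : ‖x ^ 2 • c‖ = x ^ 2 * ‖c‖ := by rw [norm_smul, Real.norm_of_nonneg (sq_nonneg x)]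
    rw [smul_eq_mul, ← hsmul]
    exact abs_norm_sub_norm_le (g x) (x ^ 2 • c)

lemma exists_nonneg_norm_le (hg : IsSecondOrderTest g c) :
    ∃ K : ℝ, 0 ≤ K ∧ ∀ x, -1 ≤ x → ‖g x‖ ≤ K * |x| := by
  obtain ⟨K, hK⟩ := hg.exists_norm_le
  exact ⟨K, by simpa using (norm_nonneg _).trans (hK 1 (by norm_num)), hK⟩

end IsSecondOrderTest

end SecondOrderTests

/-- The loss of the concave power `(1 + x) ^ r` against its tangent at `0`: for `0 < r < 1` its mean
is one minus a Hellinger transform of order `r`. -/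
def hellingerTest (r x : ℝ) : ℝ := 1 + r * x - (1 + x) ^ r

/-- The second-order remainder of `exp (-l x)` at `0`, which governs Laplace transforms of centred
variables. -/
def laplaceTest (l x : ℝ) : ℝ := Real.exp (-(l * x)) - 1 + l * x

/-- The second-order remainder of `exp (i t x)` at `0`, which governs characteristic functions of
centred variables. -/
def fourierTest (t x : ℝ) : ℂ := Complex.exp (t * x * Complex.I) - 1 - t * x * Complex.I

lemma hellingerTest_nonneg {r x : ℝ} (h0 : 0 ≤ r) (h1 : r ≤ 1) (hx : -1 ≤ x) :
    0 ≤ hellingerTest r x :=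
  sub_nonneg.2 (rpow_one_add_le_one_add_mul_self hx h0 h1)

lemma hellingerTest_le_abs {r x : ℝ} (h0 : 0 ≤ r) (h1 : r ≤ 1) (hx : -1 ≤ x) :
    hellingerTest r x ≤ |x| := by
  unfold hellingerTest
  rcases le_total 0 x with hx0 | hx0
  · have : 1 ≤ (1 + x) ^ r := Real.one_le_rpow (by linarith) h0
    rw [abs_of_nonneg hx0]
    nlinarith
  · have : 1 + x ≤ (1 + x) ^ r := Real.self_le_rpow_of_le_one (by linarith) (by linarith) h1
    rw [abs_of_nonpos hx0]
    nlinarith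

lemma isSecondOrderTest_hellingerTest {r : ℝ} (h0 : 0 ≤ r) (h1 : r ≤ 1) :
    IsSecondOrderTest (hellingerTest r) (r * (1 - r) / 2) where
  continuous := by
    unfold hellingerTest
    exact (by fun_prop : Continuous fun x : ℝ ↦ 1 + r * x).sub
      ((continuous_const.add continuous_id).rpow_const fun _ ↦ Or.inr h0)
  exists_norm_le := ⟨1, fun x hx ↦ by
    rw [Real.norm_of_nonneg (hellingerTest_nonneg h0 h1 hx), one_mul]
    exact hellingerTest_le_abs h0 h1 hx⟩
  isLittleO := by
    have hpow (p : ℝ) {x : ℝ} (hx : -1 < x) :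
        HasDerivAt (fun y ↦ (1 + y) ^ p) (p * (1 + x) ^ (p - 1)) x := by
      simpa using ((hasDerivAt_id x).const_add 1).rpow_const (p := p) (Or.inl (by simp; linarith))
    refine isLittleO_sub_sq_smul_of_hasDerivAt (g' := fun x ↦ r - r * (1 + x) ^ (r - 1))
      (by simp [hellingerTest]) ?_ (by simp) ?_
    · filter_upwards [Ioi_mem_nhds (show (-1 : ℝ) < 0 by norm_num)] with x hx
      exact ((((hasDerivAt_id x).const_mul r).const_add 1).sub (hpow r hx)).congr_deriv (by simp)
    · refine (((hpow (r - 1) (by norm_num)).const_mul r).const_sub r).congr_deriv ?_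
      rw [add_zero, Real.one_rpow, smul_eq_mul]
      ring

lemma exists_le_hellingerTest {r : ℝ} (h0 : 0 < r) (h1 : r < 1) :
    ∃ K : ℝ, ∀ x, K ≤ x → r / 2 * x ≤ hellingerTest r x := by
  have hlim : ∀ᶠ y : ℝ in atTop, y ^ (-(1 - r)) < r / 2 :=
    (tendsto_rpow_neg_atTop (by linarith)).eventually (gt_mem_nhds (by positivity))
  obtain ⟨K, hK⟩ := eventually_atTop.1 hlim
  refine ⟨max K 1, fun x hx ↦ ?_⟩
  have hx1 : 1 ≤ x := (le_max_right _ _).trans hx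
  have hpow : (1 + x) ^ r ≤ (1 + x) * (r / 2) :=
    calc (1 + x) ^ r = (1 + x) * (1 + x) ^ (-(1 - r)) := by
          rw [← Real.rpow_one_add' (by linarith) (by linarith)]
          congr 1
          ring
      _ ≤ (1 + x) * (r / 2) := by
          gcongr
          exact (hK _ (by linarith [le_max_left K 1])).le
  unfold hellingerTest
  nlinarith

lemma hellingerTest_half {x : ℝ} (hx : -1 ≤ x) :
    hellingerTest (1 / 2) x = (√(1 + x) - 1) ^ 2 / 2 := by
  have hsq : √(1 + x) ^ 2 = 1 + x := Real.sq_sqrt (by linarith)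
  rw [hellingerTest, ← Real.sqrt_eq_rpow]
  linear_combination -(1 / 2) * hsq

lemma sub_log_one_add_le_hellingerTest_half {x : ℝ} (hx : -(3 / 4) ≤ x) :
    x - Real.log (1 + x) ≤ 10 * hellingerTest (1 / 2) x := by
  rw [hellingerTest_half (by linarith)]
  set w := √(1 + x)
  have hsq : w ^ 2 = 1 + x := Real.sq_sqrt (by linarith)
  have hw : 1 / 2 ≤ w := Real.le_sqrt_of_sq_le (by linarith)
  have hw0 : 0 < w := by linarith
  have hinv : w⁻¹ ≤ 2 := by rw [inv_le_comm₀ hw0 (by norm_num)]; linarith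
  calc x - Real.log (1 + x) = w ^ 2 - 1 - 2 * Real.log w := by
        rw [← hsq, Real.log_pow]; push_cast; linarith
    _ ≤ w ^ 2 - 1 - 2 * (1 - w⁻¹) := by linarith [Real.one_sub_inv_le_log_of_pos hw0]
    _ = (w - 1) ^ 2 * (1 + 2 * w⁻¹) := by field_simp; ring
    _ ≤ (w - 1) ^ 2 * (1 + 2 * 2) := by gcongr
    _ = 10 * ((w - 1) ^ 2 / 2) := by ring

lemma hellingerTest_le_mul_hellingerTest_half {r x : ℝ} (h0 : 0 ≤ r) (hx : -(3 / 4) ≤ x) :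
    hellingerTest r x ≤ 10 * r * hellingerTest (1 / 2) x := by
  have hpow : 1 + r * Real.log (1 + x) ≤ (1 + x) ^ r := by
    rw [Real.rpow_def_of_pos (by linarith)]
    linarith [Real.add_one_le_exp (Real.log (1 + x) * r)]
  calc hellingerTest r x ≤ r * (x - Real.log (1 + x)) := by unfold hellingerTest; linarith
    _ ≤ r * (10 * hellingerTest (1 / 2) x) := by
        gcongr
        exact sub_log_one_add_le_hellingerTest_half hx
    _ = 10 * r * hellingerTest (1 / 2) x := by ring

lemma laplaceTest_nonneg (l x : ℝ) : 0 ≤ laplaceTest l x := by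
  unfold laplaceTest
  linarith [Real.add_one_le_exp (-(l * x))]

lemma hasDerivAt_laplaceTest (l x : ℝ) :
    HasDerivAt (laplaceTest l) (l - l * Real.exp (-(l * x))) x := by
  have hexp : HasDerivAt (fun y ↦ Real.exp (-(l * y))) (Real.exp (-(l * x)) * -(l * 1)) x :=
    ((hasDerivAt_id x).const_mul l).neg.exp
  refine ((hexp.sub_const 1).add ((hasDerivAt_id x).const_mul l)).congr_deriv ?_
  ring

lemma isSecondOrderTest_laplaceTest {l : ℝ} (hl : 0 ≤ l) :
    IsSecondOrderTest (laplaceTest l) (l ^ 2 / 2) where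
  continuous := by unfold laplaceTest; fun_prop
  exists_norm_le := by
    refine ⟨l * Real.exp l, fun x hx ↦ ?_⟩
    have hderiv : ∀ y ∈ Set.Ici (-1 : ℝ), ‖l - l * Real.exp (-(l * y))‖ ≤ l * Real.exp l := by
      intro y hy
      have hle : Real.exp (-(l * y)) ≤ Real.exp l :=
        Real.exp_le_exp.2 (by nlinarith [Set.mem_Ici.1 hy])
      have h1 : 1 ≤ Real.exp l := Real.one_le_exp hl
      rw [Real.norm_eq_abs, abs_le]
      constructor <;> nlinarith [Real.exp_pos (-(l * y))]
    simpa [laplaceTest] using (convex_Ici (-1 : ℝ)).norm_image_sub_le_of_norm_hasDerivWithin_le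
      (fun y _ ↦ (hasDerivAt_laplaceTest l y).hasDerivWithinAt) hderiv
      (Set.mem_Ici.2 (by norm_num : (-1 : ℝ) ≤ 0)) (Set.mem_Ici.2 hx)
  isLittleO := by
    refine isLittleO_sub_sq_smul_of_hasDerivAt (g' := fun x ↦ l - l * Real.exp (-(l * x)))
      (by simp [laplaceTest]) (.of_forall (hasDerivAt_laplaceTest l)) (by simp) ?_
    have hexp : HasDerivAt (fun y ↦ Real.exp (-(l * y))) (Real.exp (-(l * 0)) * -(l * 1)) 0 :=
      ((hasDerivAt_id (0 : ℝ)).const_mul l).neg.exp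
    refine ((hexp.const_mul l).const_sub l).congr_deriv ?_
    simp
    ring

lemma laplaceTest_half_le (l x : ℝ) : laplaceTest (l / 2) x ≤ laplaceTest l x / 2 := by
  have hsq : Real.exp (-(l * x)) = Real.exp (-(l / 2 * x)) ^ 2 := by
    rw [← Real.exp_nat_mul]; congr 1; push_cast; ring
  unfold laplaceTest
  rw [hsq]
  nlinarith [sq_nonneg (Real.exp (-(l / 2 * x)) - 1)]

lemma laplaceTest_two_mul_le {l x : ℝ} (hx : -1 ≤ l * x) :
    laplaceTest (2 * l) x ≤ 11 * laplaceTest l x := by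
  set w := Real.exp (-(l * x) / 2) with hw
  have hsq : Real.exp (-(l * x)) = w ^ 2 := by
    rw [hw, ← Real.exp_nat_mul]; congr 1; push_cast; ring
  have hfour : Real.exp (-(2 * l * x)) = w ^ 4 := by
    rw [hw, ← Real.exp_nat_mul]; congr 1; push_cast; ring
  have hw0 : 0 < w := Real.exp_pos _
  have hw2 : w ≤ 2 := by
    have hle : w ^ 2 ≤ Real.exp 1 := hsq ▸ Real.exp_le_exp.2 (by linarith)
    nlinarith [Real.exp_one_lt_d9]
  have hlx : -(l * x) / 2 ≤ w - 1 := by linarith [Real.add_one_le_exp (-(l * x) / 2)]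
  have hfactor : (w - 1) ^ 2 * (w + 1) ^ 2 ≤ (w - 1) ^ 2 * 9 := by
    gcongr
    nlinarith
  unfold laplaceTest
  rw [hsq, hfour]
  nlinarith

lemma exists_le_laplaceTest {l : ℝ} (hl : 0 < l) :
    ∃ K : ℝ, ∀ x, K ≤ x → l / 2 * x ≤ laplaceTest l x := by
  refine ⟨2 / l, fun x hx ↦ ?_⟩
  have : 2 ≤ l * x := by rwa [div_le_iff₀' hl] at hx
  unfold laplaceTest
  linarith [Real.exp_pos (-(l * x))]

lemma norm_fourierTest_le (t x : ℝ) : ‖fourierTest t x‖ ≤ 2 * |t| * |x| := by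
  have hexp : ‖Complex.exp (t * x * Complex.I) - 1‖ ≤ |t * x| := by
    simpa [mul_comm] using Real.norm_exp_I_mul_ofReal_sub_one_le (x := t * x)
  calc ‖fourierTest t x‖ ≤ ‖Complex.exp (t * x * Complex.I) - 1‖ + ‖t * x * Complex.I‖ :=
        norm_sub_le _ _
    _ ≤ |t * x| + |t * x| := by
        gcongr
        simp [abs_mul]
    _ = 2 * |t| * |x| := by rw [abs_mul]; ring

lemma isSecondOrderTest_fourierTest (t : ℝ) :
    IsSecondOrderTest (fourierTest t) (-(t ^ 2 / 2) : ℂ) where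
  continuous := by unfold fourierTest; fun_prop
  exists_norm_le := ⟨2 * |t|, fun x _ ↦ norm_fourierTest_le t x⟩
  isLittleO := by
    have hlin (x : ℝ) : HasDerivAt (fun y : ℝ ↦ (t * y * Complex.I : ℂ)) (t * Complex.I) x := by
      simpa using ((hasDerivAt_id x).ofReal_comp.const_mul (t : ℂ)).mul_const Complex.I
    refine isLittleO_sub_sq_smul_of_hasDerivAt
      (g' := fun x ↦ Complex.exp (t * x * Complex.I) * (t * Complex.I) - t * Complex.I)
      (by simp [fourierTest]) (.of_forall fun x ↦ ((hlin x).cexp.sub_const 1).sub (hlin x))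
      (by simp) ?_
    refine (((hlin 0).cexp.mul_const (t * Complex.I)).sub_const _).congr_deriv ?_
    simp only [Complex.ofReal_zero, mul_zero, zero_mul, Complex.exp_zero, one_mul,
      Complex.real_smul, Complex.ofReal_ofNat]
    linear_combination (t : ℂ) ^ 2 * Complex.I_sq

/-! ### Products over uniformly small rows -/

section SmallRows

variable {ι κ E F : Type*} [NormedAddCommGroup E] [NormedAddCommGroup F] {l : Filter ι}
  {s : ι → Finset κ}

/-- The rows `(z n i)_{i ∈ s n}` of an array tend to `0` along `l`, uniformly in `i`. -/
def UniformlySmall (l : Filter ι) (s : ι → Finset κ) (z : ι → κ → E) : Prop :=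
  ∀ δ : ℝ, 0 < δ → ∀ᶠ n in l, ∀ i ∈ s n, ‖z n i‖ ≤ δ

lemma UniformlySmall.eventually_forall {z : ι → κ → E} (hz : UniformlySmall l s z) {p : E → Prop}
    (hp : ∀ᶠ x in 𝓝 0, p x) : ∀ᶠ n in l, ∀ i ∈ s n, p (z n i) := by
  obtain ⟨δ, hδ, hball⟩ := Metric.eventually_nhds_iff_ball.1 hp
  filter_upwards [hz (δ / 2) (half_pos hδ)] with n hn i hi
  exact hball _ (mem_ball_zero_iff.2 ((hn i hi).trans_lt (half_lt_self hδ)))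

lemma UniformlySmall.isLittleO_sum {z : ι → κ → E} (hz : UniformlySmall l s z) {f : E → F}
    (hf : f =o[𝓝 0] fun x ↦ x) :
    (fun n ↦ ∑ i ∈ s n, f (z n i)) =o[l] fun n ↦ ∑ i ∈ s n, ‖z n i‖ := by
  refine Asymptotics.isLittleO_iff.2 fun η hη ↦ ?_
  filter_upwards [hz.eventually_forall (hf.bound hη)] with n hn
  rw [Real.norm_of_nonneg (Finset.sum_nonneg fun i _ ↦ norm_nonneg _), Finset.mul_sum]
  exact norm_sum_le_of_le _ hn

lemma tendsto_smul_of_isLittleO [NormedSpace ℝ E] {S : ι → E} {a : ι → ℝ} {c : E} {L : ℝ}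
    (h : (fun n ↦ S n - a n • c) =o[l] fun n ↦ 1 + |a n|) (ha : Tendsto a l (𝓝 L)) :
    Tendsto S l (𝓝 (L • c)) := by
  have hdiff : Tendsto (fun n ↦ S n - a n • c) l (𝓝 0) :=
    h.tendsto_zero_of_tendsto (ha.abs.const_add 1)
  simpa using hdiff.add (ha.smul_const c)

lemma tendsto_of_isLittleO_sub_mul {S a : ι → ℝ} {c L : ℝ} (hc : c ≠ 0)
    (h : (fun n ↦ S n - a n * c) =o[l] fun n ↦ 1 + |a n|) (hS : Tendsto S l (𝓝 (L * c))) :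
    Tendsto a l (𝓝 L) := by
  have hc0 : 0 < |c| := abs_pos.2 hc
  have ha : (fun n ↦ 1 + |a n|) =O[l] fun n ↦ 1 + |S n| := by
    refine Asymptotics.IsBigO.of_bound (2 + 2 / |c|) ?_
    filter_upwards [h.bound (half_pos hc0)] with n hn
    rw [Real.norm_eq_abs, Real.norm_of_nonneg (by positivity)] at hn
    rw [Real.norm_of_nonneg (by positivity), Real.norm_of_nonneg (by positivity)]
    have hle : |a n| * |c| ≤ |S n| + |c| / 2 * (1 + |a n|) := by
      rw [← abs_mul]
      linarith [abs_sub_abs_le_abs_sub (a n * c) (S n), abs_sub_comm (S n) (a n * c)]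
    have hdiv : |a n| ≤ 2 / |c| * |S n| + 1 := by
      refine le_of_mul_le_mul_right ?_ hc0
      field_simp
      linarith
    have : 0 ≤ 2 / |c| := by positivity
    nlinarith [abs_nonneg (S n)]
  have hdiff : Tendsto (fun n ↦ S n - a n * c) l (𝓝 0) :=
    (h.trans_isBigO ha).tendsto_zero_of_tendsto (hS.abs.const_add 1)
  simpa [mul_div_cancel_right₀ _ hc] using (hS.sub hdiff).div_const c

/-- One-signedness enters as `∑ |b| = |∑ b|`: it makes the sum control every error term. -/
lemma tendsto_prod_one_add_iff {b : ι → κ → ℝ} (hb : UniformlySmall l s b)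
    (hsum : ∀ n, ∑ i ∈ s n, |b n i| = |∑ i ∈ s n, b n i|) {L : ℝ} :
    Tendsto (fun n ↦ ∏ i ∈ s n, (1 + b n i)) l (𝓝 (Real.exp L)) ↔
      Tendsto (fun n ↦ ∑ i ∈ s n, b n i) l (𝓝 L) := by
  have hpos : ∀ᶠ n in l, ∀ i ∈ s n, 0 < 1 + b n i :=
    hb.eventually_forall (p := fun x ↦ 0 < 1 + x)
      ((eventually_gt_nhds neg_one_lt_zero).mono fun x hx ↦ by linarith)
  have hlog : (fun x ↦ Real.log (1 + x) - x) =o[𝓝 0] fun x : ℝ ↦ x := by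
    simpa [hasDerivAt_iff_isLittleO_nhds_zero] using Real.hasDerivAt_log one_ne_zero
  have hexp : ∀ᶠ n in l,
      ∏ i ∈ s n, (1 + b n i) = Real.exp (∑ i ∈ s n, Real.log (1 + b n i)) := by
    filter_upwards [hpos] with n hn
    rw [Real.exp_sum]
    exact Finset.prod_congr rfl fun i hi ↦ (Real.exp_log (hn i hi)).symm
  have hdiff : (fun n ↦ ∑ i ∈ s n, Real.log (1 + b n i) - (∑ i ∈ s n, b n i) * 1) =o[l]
      fun n ↦ 1 + |∑ i ∈ s n, b n i| := by
    refine ((hb.isLittleO_sum hlog).congr_left fun n ↦ ?_).trans_isBigO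
      (Asymptotics.IsBigO.of_bound' (.of_forall fun n ↦ ?_))
    · rw [mul_one, Finset.sum_sub_distrib]
    · simp only [Real.norm_eq_abs, hsum, abs_abs]
      exact (le_add_of_nonneg_left zero_le_one).trans (le_abs_self _)
  rw [tendsto_congr' hexp]
  constructor <;> intro h
  · exact tendsto_of_isLittleO_sub_mul one_ne_zero hdiff (by simpa using h.log (Real.exp_ne_zero L))
  · exact (Real.continuous_exp.tendsto L).comp (by simpa using tendsto_smul_of_isLittleO hdiff h)

lemma tendsto_prod_one_add_cexp {z : ι → κ → ℂ} (hz : UniformlySmall l s z)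
    (hsum : (fun n ↦ ∑ i ∈ s n, ‖z n i‖) =O[l] fun _ ↦ (1 : ℝ)) {L : ℂ}
    (h : Tendsto (fun n ↦ ∑ i ∈ s n, z n i) l (𝓝 L)) :
    Tendsto (fun n ↦ ∏ i ∈ s n, (1 + z n i)) l (𝓝 (Complex.exp L)) := by
  have hlog : (fun x ↦ Complex.log (1 + x) - x) =o[𝓝 0] fun x : ℂ ↦ x := by
    simpa [hasDerivAt_iff_isLittleO_nhds_zero] using
      Complex.hasDerivAt_log Complex.one_mem_slitPlane
  have hdiff : Tendsto (fun n ↦ ∑ i ∈ s n, (Complex.log (1 + z n i) - z n i)) l (𝓝 0) :=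
    (Asymptotics.isLittleO_one_iff ℝ).1 ((hz.isLittleO_sum hlog).trans_isBigO hsum)
  have hne : ∀ᶠ n in l, ∀ i ∈ s n, 1 + z n i ≠ 0 :=
    hz.eventually_forall ((continuous_const.add continuous_id).continuousAt.eventually_ne
      (by simp))
  have hlim : Tendsto (fun n ↦ ∑ i ∈ s n, Complex.log (1 + z n i)) l (𝓝 L) := by
    simpa [← Finset.sum_add_distrib] using hdiff.add h
  refine ((Complex.continuous_exp.tendsto L).comp hlim).congr' ?_
  filter_upwards [hne] with n hn
  rw [Function.comp_apply, Complex.exp_sum]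
  exact Finset.prod_congr rfl fun i hi ↦ Complex.exp_log (hn i hi)

end SmallRows

/-! ### Null arrays of subdensities -/

section Subdensity

variable {α : Type*} [MeasurableSpace α]

/-- `W` is a nonnegative integrable function of mean at most `1`, such as a density `ε • dμ/dP`. -/
structure IsSubdensity (P : Measure α) (W : α → ℝ) : Prop where
  measurable : Measurable W
  nonneg : ∀ a, 0 ≤ W a
  integrable : Integrable W P
  integral_le_one : P[W] ≤ 1

lemma abs_truncated_sq_sub_le {w e x τ : ℝ} (hx : 0 < x) (hxw : x < w) (hxτ : x ≤ τ) (he0 : 0 ≤ e)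
    (he1 : e ≤ 1) :
    |(if w ≤ τ then w ^ 2 else 0) - 2 * e * w + e ^ 2| ≤ (3 + x⁻¹ + τ) * w := by
  have hinv : 1 ≤ x⁻¹ * w := by
    rw [← inv_mul_cancel₀ hx.ne']
    gcongr
  have htrunc : 0 ≤ (if w ≤ τ then w ^ 2 else 0) ∧ (if w ≤ τ then w ^ 2 else 0) ≤ τ * w := by
    split_ifs <;> constructor <;> nlinarith
  have hew : 0 ≤ e * w := mul_nonneg he0 (hx.trans hxw).le
  have hew1 : e * w ≤ w := mul_le_of_le_one_left (hx.trans hxw).le he1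
  rw [abs_le]
  constructor <;> nlinarith

namespace IsSubdensity

variable {E : Type*} [NormedAddCommGroup E] [NormedSpace ℝ E] {P : Measure α} {W : α → ℝ}

lemma integral_nonneg (hW : IsSubdensity P W) : 0 ≤ P[W] :=
  MeasureTheory.integral_nonneg hW.nonneg

lemma neg_one_le_sub (hW : IsSubdensity P W) (a : α) : -1 ≤ W a - P[W] := by
  linarith [hW.nonneg a, hW.integral_le_one]

lemma measurableSet_le (hW : IsSubdensity P W) (x : ℝ) : MeasurableSet {a | W a ≤ x} :=
  _root_.measurableSet_le hW.measurable measurable_const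

lemma measurableSet_lt (hW : IsSubdensity P W) (x : ℝ) : MeasurableSet {a | x < W a} :=
  _root_.measurableSet_lt measurable_const hW.measurable

lemma setIntegral_lt_nonneg (hW : IsSubdensity P W) (x : ℝ) : 0 ≤ ∫ a in {a | x < W a}, W a ∂P :=
  MeasureTheory.integral_nonneg hW.nonneg

variable [IsProbabilityMeasure P]

lemma integrable_comp (hW : IsSubdensity P W) {g : ℝ → E} {c : E} (hg : IsSecondOrderTest g c) :
    Integrable (fun a ↦ g (W a - P[W])) P := by
  obtain ⟨K, hK⟩ := hg.exists_norm_le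
  refine Integrable.mono' (((hW.integrable.sub (integrable_const P[W])).abs).const_mul K)
    (hg.continuous.comp_aestronglyMeasurable (by
      exact (hW.measurable.sub_const _).aestronglyMeasurable)) (.of_forall fun a ↦ ?_)
  exact hK _ (hW.neg_one_le_sub a)

lemma norm_integral_comp_le (hW : IsSubdensity P W) {g : ℝ → E} {K : ℝ} (hK0 : 0 ≤ K)
    (hK : ∀ x, -1 ≤ x → ‖g x‖ ≤ K * |x|) : ‖∫ a, g (W a - P[W]) ∂P‖ ≤ 2 * K * P[W] := by
  have hint : Integrable (fun a ↦ K * (W a + P[W])) P :=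
    (hW.integrable.add (integrable_const _)).const_mul K
  calc ‖∫ a, g (W a - P[W]) ∂P‖ ≤ ∫ a, K * (W a + P[W]) ∂P := by
        refine norm_integral_le_of_norm_le hint (.of_forall fun a ↦ ?_)
        refine (hK _ (hW.neg_one_le_sub a)).trans ?_
        gcongr
        exact (abs_sub _ _).trans_eq (by rw [abs_of_nonneg (hW.nonneg a),
          abs_of_nonneg hW.integral_nonneg])
    _ = 2 * K * P[W] := by
        rw [integral_const_mul, integral_add hW.integrable (integrable_const _)]
        simp only [integral_const, probReal_univ, one_smul]
        ring

lemma integrableOn_le_pow_two (hW : IsSubdensity P W) (x : ℝ) :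
    IntegrableOn (fun a ↦ W a ^ 2) {a | W a ≤ x} P := by
  refine Measure.integrableOn_of_bounded (M := x ^ 2) (measure_ne_top _ _)
    (hW.measurable.pow_const 2).aestronglyMeasurable ?_
  refine (ae_restrict_iff' (hW.measurableSet_le x)).2 (.of_forall fun a ha ↦ ?_)
  rw [Real.norm_of_nonneg (sq_nonneg _)]
  exact pow_le_pow_left₀ (hW.nonneg a) ha 2

lemma integrableOn_le_sub_pow_two (hW : IsSubdensity P W) (x e : ℝ) :
    IntegrableOn (fun a ↦ (W a - e) ^ 2) {a | W a ≤ x} P := by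
  have : (fun a ↦ (W a - e) ^ 2) = fun a ↦ W a ^ 2 - 2 * e * W a + e ^ 2 := by
    funext a; ring
  rw [this]
  exact ((hW.integrableOn_le_pow_two x).sub (hW.integrable.const_mul _).integrableOn).add
    (integrable_const _).integrableOn

/-- On `{W ≤ x}` the test is close to its quadratic germ, on `{x < W}` it is dominated by `W`. -/
lemma norm_integral_comp_sub_smul_le [CompleteSpace E] (hW : IsSubdensity P W) {g : ℝ → E} {c : E}
    (hg : IsSecondOrderTest g c) {K η x : ℝ} (hK0 : 0 ≤ K)
    (hK : ∀ y, -1 ≤ y → ‖g y‖ ≤ K * |y|) (hx : P[W] ≤ x)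
    (hη : ∀ y, |y| ≤ x → ‖g y - y ^ 2 • c‖ ≤ η * y ^ 2) :
    ‖∫ a, g (W a - P[W]) ∂P - (∫ a in {a | W a ≤ x}, (W a - P[W]) ^ 2 ∂P) • c‖ ≤
      η * ∫ a in {a | W a ≤ x}, (W a - P[W]) ^ 2 ∂P + K * ∫ a in {a | x < W a}, W a ∂P := by
  have hcompl : {a | W a ≤ x}ᶜ = {a | x < W a} := by ext; simp
  have hint := hW.integrable_comp hg
  have hsq := hW.integrableOn_le_sub_pow_two x P[W]
  have hcenter : ‖∫ a in {a | W a ≤ x}, (g (W a - P[W]) - (W a - P[W]) ^ 2 • c) ∂P‖ ≤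
      η * ∫ a in {a | W a ≤ x}, (W a - P[W]) ^ 2 ∂P := by
    rw [← integral_const_mul]
    refine norm_integral_le_of_norm_le (hsq.const_mul η)
      ((ae_restrict_iff' (hW.measurableSet_le x)).2 (.of_forall fun a ha ↦ hη _ ?_))
    have := hW.nonneg a
    have := hW.integral_nonneg
    rw [Set.mem_ofPred_eq] at ha
    rw [abs_le]
    constructor <;> linarith
  have htail : ‖∫ a in {a | x < W a}, g (W a - P[W]) ∂P‖ ≤ K * ∫ a in {a | x < W a}, W a ∂P := by
    rw [← integral_const_mul]
    refine norm_integral_le_of_norm_le (hW.integrable.integrableOn.const_mul K)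
      ((ae_restrict_iff' (hW.measurableSet_lt x)).2 (.of_forall fun a ha ↦ ?_))
    refine (hK _ (hW.neg_one_le_sub a)).trans ?_
    have := hW.integral_nonneg
    rw [Set.mem_ofPred_eq] at ha
    rw [abs_of_nonneg (by linarith)]
    gcongr
    linarith
  have hsplit : ∫ a, g (W a - P[W]) ∂P - (∫ a in {a | W a ≤ x}, (W a - P[W]) ^ 2 ∂P) • c =
      ∫ a in {a | W a ≤ x}, (g (W a - P[W]) - (W a - P[W]) ^ 2 • c) ∂P +
        ∫ a in {a | x < W a}, g (W a - P[W]) ∂P := by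
    rw [← integral_add_compl (hW.measurableSet_le x) hint, hcompl,
      integral_sub hint.integrableOn (hsq.smul_const c), integral_smul_const]
    abel
  rw [hsplit]
  exact (norm_add_le _ _).trans (add_le_add hcenter htail)

lemma abs_setIntegral_sub_sq_sub_le (hW : IsSubdensity P W) {x τ : ℝ} (hx : 0 < x) (hxτ : x ≤ τ) :
    |∫ a in {a | W a ≤ x}, (W a - P[W]) ^ 2 ∂P -
        (∫ a in {a | W a ≤ τ}, W a ^ 2 ∂P - P[W] ^ 2)| ≤
      (3 + x⁻¹ + τ) * ∫ a in {a | x < W a}, W a ∂P := by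
  set e := P[W] with he
  let u : α → ℝ := {a | W a ≤ x}.indicator fun a ↦ (W a - e) ^ 2
  let v : α → ℝ := {a | W a ≤ τ}.indicator fun a ↦ W a ^ 2
  have hu : Integrable u P := (integrable_indicator_iff (hW.measurableSet_le x)).2
    (hW.integrableOn_le_sub_pow_two x e)
  have hv : Integrable v P := (integrable_indicator_iff (hW.measurableSet_le τ)).2
    (hW.integrableOn_le_pow_two τ)
  have hlin : Integrable (fun a ↦ 2 * e * W a) P := hW.integrable.const_mul (2 * e)
  have hvlin : Integrable (fun a ↦ v a - 2 * e * W a) P := hv.sub hlin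
  have hvquad : Integrable (fun a ↦ v a - 2 * e * W a + e ^ 2) P := hvlin.add (integrable_const _)
  have hintegral : ∫ a, (u a - (v a - 2 * e * W a + e ^ 2)) ∂P =
      ∫ a in {a | W a ≤ x}, (W a - e) ^ 2 ∂P - (∫ a in {a | W a ≤ τ}, W a ^ 2 ∂P - e ^ 2) := by
    rw [integral_sub hu hvquad, integral_add hvlin (integrable_const _), integral_sub hv hlin,
      integral_indicator (hW.measurableSet_le x), integral_indicator (hW.measurableSet_le τ),
      integral_const_mul, ← he]
    simp only [integral_const, probReal_univ, one_smul]
    ring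
  have hzero : ∀ a, a ∉ {a | x < W a} → u a - (v a - 2 * e * W a + e ^ 2) = 0 := fun a ha ↦ by
    have hax : W a ≤ x := not_lt.1 ha
    simp only [u, v, Set.indicator, Set.mem_ofPred_eq, hax, hax.trans hxτ, if_true]
    ring
  rw [← hintegral, ← setIntegral_eq_integral_of_forall_compl_eq_zero hzero,
    ← integral_const_mul (3 + x⁻¹ + τ), ← Real.norm_eq_abs]
  refine norm_integral_le_of_norm_le (hW.integrable.integrableOn.const_mul _)
    ((ae_restrict_iff' (hW.measurableSet_lt x)).2 (.of_forall fun a ha ↦ ?_))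
  rw [Set.mem_ofPred_eq] at ha
  have hua : u a = 0 := Set.indicator_of_notMem (s := {a | W a ≤ x}) (by simpa using ha) _
  rw [hua, zero_sub, norm_neg, Real.norm_eq_abs]
  simp only [v, Set.indicator, Set.mem_ofPred_eq]
  exact abs_truncated_sq_sub_le hx ha hxτ hW.integral_nonneg hW.integral_le_one

lemma mul_measureReal_le_setIntegral (hW : IsSubdensity P W) {x : ℝ} (hx : 0 < x) :
    x * P.real {a | x ≤ W a} ≤ ∫ a in {a | x / 2 < W a}, W a ∂P := by
  have hmeas : MeasurableSet {a | x ≤ W a} := _root_.measurableSet_le measurable_const hW.measurable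
  calc x * P.real {a | x ≤ W a} ≤ ∫ a in {a | x ≤ W a}, W a ∂P := by
        rw [mul_comm, ← smul_eq_mul]
        exact setIntegral_ge_of_const_le hmeas (measure_ne_top _ _) (fun a ha ↦ ha)
          hW.integrable.integrableOn
    _ ≤ ∫ a in {a | x / 2 < W a}, W a ∂P :=
        setIntegral_mono_set hW.integrable.integrableOn (.of_forall hW.nonneg)
          (.of_forall fun a (ha : x ≤ W a) ↦ (half_lt_self hx).trans_le ha)

lemma mul_measureReal_le_integral_comp (hW : IsSubdensity P W) {g : ℝ → ℝ} {c : ℝ}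
    (hg : IsSecondOrderTest g c) (hg0 : ∀ y, -1 ≤ y → 0 ≤ g y) {b δ : ℝ} (hb : 0 < b)
    (hgb : ∀ y, δ / 2 ≤ y → b ≤ g y) (hδ : P[W] ≤ δ / 2) :
    b * P.real {a | δ ≤ W a} ≤ ∫ a, g (W a - P[W]) ∂P := by
  refine le_trans ?_ (mul_meas_ge_le_integral_of_nonneg
    (.of_forall fun a ↦ hg0 _ (hW.neg_one_le_sub a)) (hW.integrable_comp hg) b)
  exact mul_le_mul_of_nonneg_left
    (measureReal_mono (Set.ofPred_subset_ofPred.2 fun a ha ↦ hgb _ (by linarith))) hb.le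

lemma setIntegral_lt_le (hW : IsSubdensity P W) {g : ℝ → ℝ} {c : ℝ}
    (hg : IsSecondOrderTest g c) (hg0 : ∀ y, -1 ≤ y → 0 ≤ g y) {K x : ℝ}
    (hgK : ∀ y, K ≤ y → y ≤ g y) (hx : 2 * P[W] ≤ x) :
    ∫ a in {a | x < W a}, W a ∂P ≤
      2 * ∫ a, g (W a - P[W]) ∂P + (|K| + 1) * P.real {a | x ≤ W a} := by
  have hmeas : MeasurableSet {a | x ≤ W a} := _root_.measurableSet_le measurable_const hW.measurable
  have hind : Integrable ({a | x ≤ W a}.indicator fun _ ↦ |K| + 1) P :=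
    (integrable_const _).indicator hmeas
  have htest := (hW.integrable_comp hg).const_mul 2
  rw [← integral_const_mul, mul_comm (|K| + 1), ← smul_eq_mul, ← integral_indicator_const _ hmeas,
    ← integral_add htest hind, ← integral_indicator (hW.measurableSet_lt x)]
  refine integral_mono (hW.integrable.indicator (hW.measurableSet_lt x)) (htest.add hind)
    fun a ↦ ?_
  have htest0 := hg0 _ (hW.neg_one_le_sub a)
  by_cases ha : x < W a
  · have hle : W a ≤ 2 * g (W a - P[W]) + (|K| + 1) := by
      have := hW.integral_le_one
      rcases le_total K (W a - P[W]) with hK | hK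
      · linarith [hgK _ hK, abs_nonneg K]
      · linarith [le_abs_self K]
    simpa [Set.indicator, ha, ha.le] using hle
  · have hind0 : 0 ≤ {a | x ≤ W a}.indicator (fun _ ↦ |K| + 1) a :=
      Set.indicator_nonneg (fun _ _ ↦ by positivity) a
    rw [Set.indicator_of_notMem (s := {a | x < W a}) (by simpa using ha)]
    linarith

end IsSubdensity

end Subdensity

section NullArrays

variable {α E : Type*} [MeasurableSpace α] [NormedAddCommGroup E] [NormedSpace ℝ E]
  {P : ℕ → ℕ → Measure α} {k : ℕ → ℕ} {W : ℕ → ℕ → α → ℝ}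

/-- An array of subdensities whose row-wise largest mean tends to `0`; the `n`-th row is indexed by
`i < k n`. -/
structure IsNullArray (P : ℕ → ℕ → Measure α) (k : ℕ → ℕ) (W : ℕ → ℕ → α → ℝ) : Prop where
  isSubdensity : ∀ n i, IsSubdensity (P n i) (W n i)
  uniformlySmall : UniformlySmall atTop (fun n ↦ Finset.range (k n)) fun n i ↦ (P n i)[W n i]

/-- The row sums of the tail means `∫_{x < W} W dP`; this is `I_{n,1,x}` for `W = ε • dμ/dP`. -/
def tailMeanSum (P : ℕ → ℕ → Measure α) (k : ℕ → ℕ) (W : ℕ → ℕ → α → ℝ) (x : ℝ) (n : ℕ) : ℝ :=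
  ∑ i ∈ Finset.range (k n), ∫ a in {a | x < W n i a}, W n i a ∂P n i

/-- The row sums of the truncated variances `∫_{W ≤ τ} W² dP - (∫ W dP)²`; this is `I_{n,2,τ}` for
`W = ε • dμ/dP`. -/
def truncVarSum (P : ℕ → ℕ → Measure α) (k : ℕ → ℕ) (W : ℕ → ℕ → α → ℝ) (τ : ℝ) (n : ℕ) : ℝ :=
  ∑ i ∈ Finset.range (k n), (∫ a in {a | W n i a ≤ τ}, W n i a ^ 2 ∂P n i - (P n i)[W n i] ^ 2)

/-- The row sums of the probabilities `P(δ ≤ W)`. -/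
def tailProbSum (P : ℕ → ℕ → Measure α) (k : ℕ → ℕ) (W : ℕ → ℕ → α → ℝ) (δ : ℝ) (n : ℕ) : ℝ :=
  ∑ i ∈ Finset.range (k n), (P n i).real {a | δ ≤ W n i a}

/-- The row sums of the expectations of a test of the centred variables `W - ∫ W dP`. -/
def testSum (P : ℕ → ℕ → Measure α) (k : ℕ → ℕ) (W : ℕ → ℕ → α → ℝ) (g : ℝ → E) (n : ℕ) : E :=
  ∑ i ∈ Finset.range (k n), ∫ a, g (W n i a - (P n i)[W n i]) ∂P n i

/-- The tail means vanish and the truncated variances converge to `s`: the Lindeberg-type condition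
for a Gaussian limit with variance `s`. -/
def IsLindeberg (P : ℕ → ℕ → Measure α) (k : ℕ → ℕ) (W : ℕ → ℕ → α → ℝ) (s : ℝ) : Prop :=
  (∀ x, 0 < x → Tendsto (tailMeanSum P k W x) atTop (𝓝 0)) ∧
    ∀ τ, 0 < τ → Tendsto (truncVarSum P k W τ) atTop (𝓝 s)

namespace IsNullArray

lemma tailMeanSum_nonneg (hW : IsNullArray P k W) (x : ℝ) (n : ℕ) : 0 ≤ tailMeanSum P k W x n :=
  Finset.sum_nonneg fun i _ ↦ (hW.isSubdensity n i).setIntegral_lt_nonneg x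

lemma eventually_integral_le (hW : IsNullArray P k W) {δ : ℝ} (hδ : 0 < δ) :
    ∀ᶠ n in atTop, ∀ i ∈ Finset.range (k n), (P n i)[W n i] ≤ δ :=
  (hW.uniformlySmall δ hδ).mono fun _ hn i hi ↦ (le_abs_self _).trans (hn i hi)

variable [∀ n i, IsProbabilityMeasure (P n i)]

lemma norm_testSum_sub_smul_le [CompleteSpace E] (hW : IsNullArray P k W) {g : ℝ → E} {c : E}
    (hg : IsSecondOrderTest g c) {K η x τ : ℝ} (hK0 : 0 ≤ K)
    (hK : ∀ y, -1 ≤ y → ‖g y‖ ≤ K * |y|) (hη0 : 0 ≤ η)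
    (hη : ∀ y, |y| ≤ x → ‖g y - y ^ 2 • c‖ ≤ η * y ^ 2) (hx : 0 < x) (hxτ : x ≤ τ) {n : ℕ}
    (hn : ∀ i ∈ Finset.range (k n), (P n i)[W n i] ≤ x) :
    ‖testSum P k W g n - truncVarSum P k W τ n • c‖ ≤ η * |truncVarSum P k W τ n| +
      ((η + ‖c‖) * (3 + x⁻¹ + τ) + K) * tailMeanSum P k W x n := by
  set B : ℝ := ∑ i ∈ Finset.range (k n),
    ∫ a in {a | W n i a ≤ x}, (W n i a - (P n i)[W n i]) ^ 2 ∂P n i with hB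
  have hgerm : ‖testSum P k W g n - B • c‖ ≤ η * B + K * tailMeanSum P k W x n := by
    rw [testSum, hB, Finset.sum_smul, ← Finset.sum_sub_distrib, tailMeanSum, Finset.mul_sum,
      Finset.mul_sum, ← Finset.sum_add_distrib]
    exact norm_sum_le_of_le _ fun i hi ↦
      (hW.isSubdensity n i).norm_integral_comp_sub_smul_le hg hK0 hK (hn i hi) hη
  have htrunc : |B - truncVarSum P k W τ n| ≤ (3 + x⁻¹ + τ) * tailMeanSum P k W x n := by
    rw [hB, truncVarSum, ← Finset.sum_sub_distrib, tailMeanSum, Finset.mul_sum]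
    exact (Finset.abs_sum_le_sum_abs _ _).trans (Finset.sum_le_sum fun i _ ↦
      (hW.isSubdensity n i).abs_setIntegral_sub_sq_sub_le hx hxτ)
  have hBle : B ≤ |truncVarSum P k W τ n| + (3 + x⁻¹ + τ) * tailMeanSum P k W x n := by
    linarith [le_abs_self (B - truncVarSum P k W τ n), le_abs_self (truncVarSum P k W τ n)]
  calc ‖testSum P k W g n - truncVarSum P k W τ n • c‖
      ≤ ‖testSum P k W g n - B • c‖ + ‖(B - truncVarSum P k W τ n) • c‖ := by
        rw [sub_smul]
        exact norm_sub_le_norm_sub_add_norm_sub _ _ _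
    _ ≤ (η * B + K * tailMeanSum P k W x n) +
          (3 + x⁻¹ + τ) * tailMeanSum P k W x n * ‖c‖ := by
        rw [norm_smul, Real.norm_eq_abs]
        gcongr
    _ ≤ _ := by nlinarith [mul_le_mul_of_nonneg_left hBle hη0]

/-- Once the tails vanish, the truncated variances determine the test sums of all tests. -/
lemma isLittleO_testSum_sub_smul [CompleteSpace E] (hW : IsNullArray P k W) {g : ℝ → E} {c : E}
    (hg : IsSecondOrderTest g c)
    (htail : ∀ x, 0 < x → Tendsto (tailMeanSum P k W x) atTop (𝓝 0)) {τ : ℝ} (hτ : 0 < τ) :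
    (fun n ↦ testSum P k W g n - truncVarSum P k W τ n • c) =o[atTop]
      fun n ↦ 1 + |truncVarSum P k W τ n| := by
  obtain ⟨K, hK0, hK⟩ := hg.exists_nonneg_norm_le
  refine Asymptotics.isLittleO_iff.2 fun η hη ↦ ?_
  obtain ⟨δ, hδ, hball⟩ := Metric.eventually_nhds_iff_ball.1 (hg.isLittleO.bound hη)
  set x := min (δ / 2) τ
  have hx : 0 < x := lt_min (half_pos hδ) hτ
  have hgerm : ∀ y, |y| ≤ x → ‖g y - y ^ 2 • c‖ ≤ η * y ^ 2 := fun y hy ↦ by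
    simpa using hball y (mem_ball_zero_iff.2
      ((hy.trans (min_le_left _ _)).trans_lt (half_lt_self hδ)))
  have herror : Tendsto (fun n ↦ ((η + ‖c‖) * (3 + x⁻¹ + τ) + K) * tailMeanSum P k W x n)
      atTop (𝓝 0) := by simpa using (htail x hx).const_mul ((η + ‖c‖) * (3 + x⁻¹ + τ) + K)
  filter_upwards [hW.eventually_integral_le hx, herror.eventually_le_const hη] with n hn hsmall
  rw [Real.norm_of_nonneg (by positivity)]
  linarith [hW.norm_testSum_sub_smul_le hg hK0 hK hη.le hgerm hx (min_le_right _ _) hn]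

lemma tendsto_testSum [CompleteSpace E] (hW : IsNullArray P k W) {s : ℝ}
    (hs : IsLindeberg P k W s) {g : ℝ → E} {c : E} (hg : IsSecondOrderTest g c) :
    Tendsto (testSum P k W g) atTop (𝓝 (s • c)) :=
  tendsto_smul_of_isLittleO (hW.isLittleO_testSum_sub_smul hg hs.1 one_pos) (hs.2 1 one_pos)

lemma isLindeberg_of_tendsto_testSum (hW : IsNullArray P k W)
    (htail : ∀ x, 0 < x → Tendsto (tailMeanSum P k W x) atTop (𝓝 0)) {g : ℝ → ℝ} {c s : ℝ}
    (hg : IsSecondOrderTest g c) (hc : c ≠ 0)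
    (h : Tendsto (testSum P k W g) atTop (𝓝 (s * c))) : IsLindeberg P k W s :=
  ⟨htail, fun _ hτ ↦
    tendsto_of_isLittleO_sub_mul hc (hW.isLittleO_testSum_sub_smul hg htail hτ) h⟩

lemma isLindeberg_of_tendsto_truncVarSum (hW : IsNullArray P k W)
    (htail : ∀ x, 0 < x → Tendsto (tailMeanSum P k W x) atTop (𝓝 0)) {τ s : ℝ} (hτ : 0 < τ)
    (h : Tendsto (truncVarSum P k W τ) atTop (𝓝 s)) : IsLindeberg P k W s :=
  have htest := isSecondOrderTest_laplaceTest zero_le_one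
  hW.isLindeberg_of_tendsto_testSum htail htest (by norm_num)
    (tendsto_smul_of_isLittleO (hW.isLittleO_testSum_sub_smul htest htail hτ) h)

lemma tendsto_tailProbSum_of_tailMeanSum (hW : IsNullArray P k W)
    (htail : ∀ x, 0 < x → Tendsto (tailMeanSum P k W x) atTop (𝓝 0)) {δ : ℝ} (hδ : 0 < δ) :
    Tendsto (tailProbSum P k W δ) atTop (𝓝 0) := by
  have hlim : Tendsto (fun n ↦ δ⁻¹ * tailMeanSum P k W (δ / 2) n) atTop (𝓝 0) := by
    simpa using (htail _ (half_pos hδ)).const_mul δ⁻¹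
  refine squeeze_zero (fun n ↦ Finset.sum_nonneg fun i _ ↦ measureReal_nonneg) (fun n ↦ ?_) hlim
  rw [← div_eq_inv_mul, le_div_iff₀' hδ, tailProbSum, Finset.mul_sum]
  exact Finset.sum_le_sum fun i _ ↦ (hW.isSubdensity n i).mul_measureReal_le_setIntegral hδ

lemma tendsto_tailProbSum_of_testSum (hW : IsNullArray P k W) {g : ℝ → ℝ} {c : ℝ}
    (hg : IsSecondOrderTest g c) (hg0 : ∀ y, -1 ≤ y → 0 ≤ g y)
    (hlow : ∀ x, 0 < x → ∃ b, 0 < b ∧ ∀ y, x ≤ y → b ≤ g y)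
    (h : Tendsto (testSum P k W g) atTop (𝓝 0)) {δ : ℝ} (hδ : 0 < δ) :
    Tendsto (tailProbSum P k W δ) atTop (𝓝 0) := by
  obtain ⟨b, hb, hgb⟩ := hlow (δ / 2) (half_pos hδ)
  have hlim : Tendsto (fun n ↦ b⁻¹ * testSum P k W g n) atTop (𝓝 0) := by
    simpa using h.const_mul b⁻¹
  refine squeeze_zero' (.of_forall fun n ↦ Finset.sum_nonneg fun i _ ↦ measureReal_nonneg) ?_ hlim
  filter_upwards [hW.eventually_integral_le (half_pos hδ)] with n hn
  rw [← div_eq_inv_mul, le_div_iff₀' hb, tailProbSum, testSum, Finset.mul_sum]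
  exact Finset.sum_le_sum fun i hi ↦
    (hW.isSubdensity n i).mul_measureReal_le_integral_comp hg hg0 hb hgb (hn i hi)

/-- The tests dominating `y` near `∞` play the role of a uniform integrability criterion. -/
lemma tendsto_tailMeanSum_of_tailProbSum (hW : IsNullArray P k W)
    (hprob : ∀ δ, 0 < δ → Tendsto (tailProbSum P k W δ) atTop (𝓝 0))
    (htest : ∀ η, 0 < η → ∃ (g : ℝ → ℝ) (c K : ℝ), IsSecondOrderTest g c ∧
      (∀ y, -1 ≤ y → 0 ≤ g y) ∧ (∀ y, K ≤ y → y ≤ g y) ∧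
      ∀ᶠ n in atTop, testSum P k W g n ≤ η) {x : ℝ} (hx : 0 < x) :
    Tendsto (tailMeanSum P k W x) atTop (𝓝 0) := by
  refine tendsto_order.2 ⟨fun b hb ↦
    .of_forall fun n ↦ hb.trans_le (hW.tailMeanSum_nonneg x n), fun η hη ↦ ?_⟩
  obtain ⟨g, c, K, hg, hg0, hgK, hsum⟩ := htest (η / 4) (by positivity)
  have hlim : Tendsto (fun n ↦ (|K| + 1) * tailProbSum P k W x n) atTop (𝓝 0) := by
    simpa using (hprob x hx).const_mul (|K| + 1)
  filter_upwards [hW.eventually_integral_le (half_pos hx), hsum,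
    hlim.eventually_lt_const (half_pos hη)] with n hn hsum hprob
  have hle : tailMeanSum P k W x n ≤
      2 * testSum P k W g n + (|K| + 1) * tailProbSum P k W x n := by
    rw [tailMeanSum, testSum, tailProbSum, Finset.mul_sum, Finset.mul_sum,
      ← Finset.sum_add_distrib]
    exact Finset.sum_le_sum fun i hi ↦
      (hW.isSubdensity n i).setIntegral_lt_le hg hg0 hgK (by linarith [hn i hi])
  linarith

end IsNullArray

end NullArrays

section FourthPowerTests

lemma hellingerTest_fourth_power {x : ℝ} (hx : -1 ≤ x) :
    (4 : ℝ) * hellingerTest (3 / 4) x + 4 * hellingerTest (1 / 4) x +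
      (-6) * hellingerTest (1 / 2) x = ((1 + x) ^ (1 / 4 : ℝ) - 1) ^ 4 := by
  have h0 : 0 ≤ 1 + x := by linarith
  have hpow (j : ℕ) (r : ℝ) (hr : r = 1 / 4 * j) : (1 + x) ^ r = ((1 + x) ^ (1 / 4 : ℝ)) ^ j := by
    rw [hr, Real.rpow_mul h0, Real.rpow_natCast]
  have hfour := hpow 4 1 (by norm_num)
  rw [Real.rpow_one] at hfour
  simp only [hellingerTest]
  rw [hpow 3 (3 / 4) (by norm_num), hpow 2 (1 / 2) (by norm_num)]
  linear_combination hfour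

lemma laplaceTest_fourth_power (x : ℝ) :
    (-4 : ℝ) * laplaceTest 1 x + 6 * laplaceTest 2 x + (-4) * laplaceTest 3 x +
      laplaceTest 4 x = (1 - Real.exp (-x)) ^ 4 := by
  have hpow (j : ℕ) (l : ℝ) (hl : l = j) : Real.exp (-(l * x)) = Real.exp (-x) ^ j := by
    rw [← Real.exp_nat_mul, hl, mul_neg]
  simp only [laplaceTest]
  rw [hpow 1 1 (by norm_num), hpow 2 2 (by norm_num), hpow 3 3 (by norm_num),
    hpow 4 4 (by norm_num)]
  ring

end FourthPowerTests

section TestSums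

variable {α E : Type*} [MeasurableSpace α] [NormedAddCommGroup E] [NormedSpace ℝ E]
  {P : ℕ → ℕ → Measure α} {k : ℕ → ℕ} {W : ℕ → ℕ → α → ℝ}

lemma testSum_const_smul (g : ℝ → E) (a : ℝ) (n : ℕ) :
    testSum P k W (fun x ↦ a • g x) n = a • testSum P k W g n := by
  simp only [testSum, integral_smul, Finset.smul_sum]

namespace IsNullArray

lemma testSum_nonneg (hW : IsNullArray P k W) {g : ℝ → ℝ} (hg0 : ∀ y, -1 ≤ y → 0 ≤ g y) (n : ℕ) :
    0 ≤ testSum P k W g n :=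
  Finset.sum_nonneg fun i _ ↦
    integral_nonneg fun a ↦ hg0 _ ((hW.isSubdensity n i).neg_one_le_sub a)

variable [∀ n i, IsProbabilityMeasure (P n i)]

lemma testSum_add (hW : IsNullArray P k W) {g h : ℝ → E} {c d : E} (hg : IsSecondOrderTest g c)
    (hh : IsSecondOrderTest h d) (n : ℕ) :
    testSum P k W (fun x ↦ g x + h x) n = testSum P k W g n + testSum P k W h n := by
  simp only [testSum, ← Finset.sum_add_distrib]
  exact Finset.sum_congr rfl fun i _ ↦ integral_add ((hW.isSubdensity n i).integrable_comp hg)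
    ((hW.isSubdensity n i).integrable_comp hh)

lemma uniformlySmall_integral_comp (hW : IsNullArray P k W) {g : ℝ → E} {c : E}
    (hg : IsSecondOrderTest g c) :
    UniformlySmall atTop (fun n ↦ Finset.range (k n))
      fun n i ↦ ∫ a, g (W n i a - (P n i)[W n i]) ∂P n i := by
  obtain ⟨K, hK0, hK⟩ := hg.exists_nonneg_norm_le
  intro δ hδ
  filter_upwards [hW.eventually_integral_le (δ := δ / (2 * K + 1)) (by positivity)] with n hn i hi
  calc ‖∫ a, g (W n i a - (P n i)[W n i]) ∂P n i‖
      ≤ 2 * K * (P n i)[W n i] := (hW.isSubdensity n i).norm_integral_comp_le hK0 hK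
    _ ≤ 2 * K * (δ / (2 * K + 1)) := by gcongr; exact hn i hi
    _ ≤ δ := by
        rw [← mul_div_assoc, div_le_iff₀ (by positivity)]
        nlinarith

/-- The tests `2 / r • hellingerTest r` dominate the identity near `∞`, at vanishing cost as
`r → 1`. -/
lemma tendsto_tailMeanSum_of_hellingerTest (hW : IsNullArray P k W)
    (hprob : ∀ δ, 0 < δ → Tendsto (tailProbSum P k W δ) atTop (𝓝 0)) {L : ℝ → ℝ}
    (hL : ∀ r ∈ Set.Ioo (0 : ℝ) 1, Tendsto (testSum P k W (hellingerTest r)) atTop (𝓝 (L r)))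
    (hL1 : Tendsto L (𝓝[<] 1) (𝓝 0)) {x : ℝ} (hx : 0 < x) :
    Tendsto (tailMeanSum P k W x) atTop (𝓝 0) := by
  refine hW.tendsto_tailMeanSum_of_tailProbSum hprob (fun η hη ↦ ?_) hx
  have hcost : Tendsto (fun r : ℝ ↦ 2 / r * L r) (𝓝[<] 1) (𝓝 0) := by
    have hinv : Tendsto (fun r : ℝ ↦ 2 / r) (𝓝[<] 1) (𝓝 (2 / 1)) :=
      (tendsto_const_nhds.div tendsto_id one_ne_zero).mono_left nhdsWithin_le_nhds
    simpa using hinv.mul hL1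
  obtain ⟨r, hrη, hr⟩ := ((hcost.eventually_lt_const hη).and
    (Ioo_mem_nhdsLT (zero_lt_one (α := ℝ)))).exists
  obtain ⟨K, hK⟩ := exists_le_hellingerTest hr.1 hr.2
  refine ⟨fun y ↦ (2 / r) • hellingerTest r y, _, K,
    (isSecondOrderTest_hellingerTest hr.1.le hr.2.le).const_smul _,
    fun y hy ↦ ?_, fun y hy ↦ ?_, ?_⟩
  · have := hellingerTest_nonneg hr.1.le hr.2.le hy
    have := hr.1
    simp only [smul_eq_mul]
    positivity
  · have hr0 := hr.1
    refine (le_of_eq ?_).trans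
      (smul_le_smul_of_nonneg_left (hK y hy) (show 0 ≤ 2 / r by positivity))
    rw [smul_eq_mul]
    field_simp
  · simp only [testSum_const_smul]
    exact ((hL r hr).const_mul (2 / r)).eventually_le_const hrη

lemma tendsto_tailProbSum_of_testSum_hellingerTest (hW : IsNullArray P k W) {s : ℝ}
    (h : ∀ r ∈ Set.Ioo (0 : ℝ) 1,
      Tendsto (testSum P k W (hellingerTest r)) atTop (𝓝 (s * (r * (1 - r) / 2))))
    {δ : ℝ} (hδ : 0 < δ) : Tendsto (tailProbSum P k W δ) atTop (𝓝 0) := by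
  have htest (a : ℝ) {r : ℝ} (hr : r ∈ Set.Icc (0 : ℝ) 1) :=
    (isSecondOrderTest_hellingerTest hr.1 hr.2).const_smul a
  have h1 := htest 4 (r := 3 / 4) (by norm_num)
  have h2 := htest 4 (r := 1 / 4) (by norm_num)
  have h3 := htest (-6) (r := 1 / 2) (by norm_num)
  refine hW.tendsto_tailProbSum_of_testSum ((h1.add h2).add h3)
    (fun y hy ↦ ?_) (fun x hx ↦ ⟨((1 + x) ^ (1 / 4 : ℝ) - 1) ^ 4, ?_, fun y hy ↦ ?_⟩) ?_ hδ
  · simp only [smul_eq_mul, hellingerTest_fourth_power hy]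
    positivity
  · have := Real.one_lt_rpow (x := 1 + x) (z := 1 / 4) (by linarith) (by norm_num)
    have : 0 < (1 + x) ^ (1 / 4 : ℝ) - 1 := by linarith
    positivity
  · have := Real.one_le_rpow (x := 1 + x) (z := 1 / 4) (by linarith) (by norm_num)
    simp only [smul_eq_mul, hellingerTest_fourth_power (show -1 ≤ y by linarith)]
    gcongr
  · have hlim := (((h (3 / 4) (by norm_num)).const_mul 4).add
      ((h (1 / 4) (by norm_num)).const_mul 4)).add ((h (1 / 2) (by norm_num)).const_mul (-6))
    refine (hlim.congr fun n ↦ ?_).trans_eq (congrArg 𝓝 (by ring))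
    rw [hW.testSum_add (h1.add h2) h3, hW.testSum_add h1 h2, testSum_const_smul,
      testSum_const_smul, testSum_const_smul]
    rfl

lemma isLindeberg_of_tendsto_testSum_hellingerTest (hW : IsNullArray P k W) {s : ℝ}
    (h : ∀ r ∈ Set.Ioo (0 : ℝ) 1,
      Tendsto (testSum P k W (hellingerTest r)) atTop (𝓝 (s * (r * (1 - r) / 2)))) :
    IsLindeberg P k W s := by
  have hcont : Continuous fun r : ℝ ↦ s * (r * (1 - r) / 2) := by fun_prop
  have hL1 : Tendsto (fun r : ℝ ↦ s * (r * (1 - r) / 2)) (𝓝[<] 1) (𝓝 0) :=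
    ((hcont.tendsto 1).mono_left nhdsWithin_le_nhds).trans_eq (by simp)
  exact hW.isLindeberg_of_tendsto_testSum
    (fun x hx ↦ hW.tendsto_tailMeanSum_of_hellingerTest
      (fun δ hδ ↦ hW.tendsto_tailProbSum_of_testSum_hellingerTest h hδ) h hL1 hx)
    (isSecondOrderTest_hellingerTest (by norm_num) (by norm_num)) (by norm_num)
    (h (1 / 2) (by norm_num))

lemma tendsto_tailProbSum_of_testSum_laplaceTest (hW : IsNullArray P k W) {s : ℝ}
    (h : ∀ l, 0 < l → Tendsto (testSum P k W (laplaceTest l)) atTop (𝓝 (s * (l ^ 2 / 2))))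
    {δ : ℝ} (hδ : 0 < δ) : Tendsto (tailProbSum P k W δ) atTop (𝓝 0) := by
  have htest (a : ℝ) {l : ℝ} (hl : 0 ≤ l) := (isSecondOrderTest_laplaceTest hl).const_smul a
  have h1 := htest (-4) (l := 1) (by norm_num)
  have h2 := htest 6 (l := 2) (by norm_num)
  have h3 := htest (-4) (l := 3) (by norm_num)
  have h4 := isSecondOrderTest_laplaceTest (l := 4) (by norm_num)
  refine hW.tendsto_tailProbSum_of_testSum (((h1.add h2).add h3).add h4)
    (fun y _ ↦ ?_) (fun x hx ↦ ⟨(1 - Real.exp (-x)) ^ 4, ?_, fun y hy ↦ ?_⟩) ?_ hδ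
  · simp only [smul_eq_mul, laplaceTest_fourth_power]
    positivity
  · have : 0 < 1 - Real.exp (-x) := by simpa using hx
    positivity
  · have : 0 ≤ 1 - Real.exp (-x) := by simpa using hx.le
    simp only [smul_eq_mul, laplaceTest_fourth_power]
    gcongr
  · have hlim := ((((h 1 (by norm_num)).const_mul (-4)).add ((h 2 (by norm_num)).const_mul 6)).add
      ((h 3 (by norm_num)).const_mul (-4))).add (h 4 (by norm_num))
    refine (hlim.congr fun n ↦ ?_).trans_eq (congrArg 𝓝 (by ring))
    rw [hW.testSum_add ((h1.add h2).add h3) h4, hW.testSum_add (h1.add h2) h3,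
      hW.testSum_add h1 h2, testSum_const_smul, testSum_const_smul, testSum_const_smul]
    rfl

/-- The tests `2 / l • laplaceTest l` dominate the identity near `∞`, at vanishing cost as
`l → 0`. -/
lemma isLindeberg_of_tendsto_testSum_laplaceTest (hW : IsNullArray P k W) {s : ℝ} (hs : 0 ≤ s)
    (h : ∀ l, 0 < l → Tendsto (testSum P k W (laplaceTest l)) atTop (𝓝 (s * (l ^ 2 / 2)))) :
    IsLindeberg P k W s := by
  have htail : ∀ x, 0 < x → Tendsto (tailMeanSum P k W x) atTop (𝓝 0) := fun x hx ↦ by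
    refine hW.tendsto_tailMeanSum_of_tailProbSum
      (fun δ hδ ↦ hW.tendsto_tailProbSum_of_testSum_laplaceTest h hδ) (fun η hη ↦ ?_) hx
    set l : ℝ := η / (s + 1)
    have hl : 0 < l := by positivity
    obtain ⟨K, hK⟩ := exists_le_laplaceTest hl
    refine ⟨fun y ↦ (2 / l) • laplaceTest l y, _, K,
      (isSecondOrderTest_laplaceTest hl.le).const_smul _,
      fun y _ ↦ smul_nonneg (by positivity) (laplaceTest_nonneg l y), fun y hy ↦ ?_, ?_⟩
    · refine (le_of_eq ?_).trans
        (smul_le_smul_of_nonneg_left (hK y hy) (show 0 ≤ 2 / l by positivity))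
      rw [smul_eq_mul]
      field_simp
    · simp only [testSum_const_smul]
      refine ((h l hl).const_mul (2 / l)).eventually_le_const ?_
      have hcost : 2 / l * (s * (l ^ 2 / 2)) = η * (s / (s + 1)) := by
        simp only [l]
        field_simp
      rw [hcost]
      exact mul_lt_of_lt_one_right hη ((div_lt_one (by positivity)).2 (by linarith))
  exact hW.isLindeberg_of_tendsto_testSum htail (isSecondOrderTest_laplaceTest zero_le_one)
    (by norm_num) (h 1 one_pos)

/-- For `r → 0` the Hellinger sums are governed by the one with `r = 1 / 2`. -/
lemma eventually_testSum_hellingerTest_le (hW : IsNullArray P k W) :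
    ∀ᶠ n in atTop, ∀ r ∈ Set.Icc (0 : ℝ) 1,
      testSum P k W (hellingerTest r) n ≤ 10 * r * testSum P k W (hellingerTest (1 / 2)) n := by
  filter_upwards [hW.eventually_integral_le (δ := 3 / 4) (by norm_num)] with n hn r hr
  rw [testSum, testSum, Finset.mul_sum]
  refine Finset.sum_le_sum fun i hi ↦ ?_
  have hWi := hW.isSubdensity n i
  rw [← integral_const_mul]
  refine integral_mono (hWi.integrable_comp (isSecondOrderTest_hellingerTest hr.1 hr.2))
    ((hWi.integrable_comp
      (isSecondOrderTest_hellingerTest (by norm_num) (by norm_num))).const_mul _)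
    fun a ↦ hellingerTest_le_mul_hellingerTest_half hr.1 ?_
  linarith [hn i hi, hWi.nonneg a]

end IsNullArray

end TestSums

section WeakConvergence

variable {β : Type*} [MeasurableSpace β] [TopologicalSpace β] [OpensMeasurableSpace β]
  {ρ : ℕ → Measure β} {ν : Measure β} [∀ n, IsProbabilityMeasure (ρ n)] [IsProbabilityMeasure ν]

lemma weakLim_iff_tendsto :
    WeakLim ρ ν ↔ Tendsto (β := ProbabilityMeasure β) (fun n ↦ ⟨ρ n, inferInstance⟩) atTop
      (𝓝 ⟨ν, inferInstance⟩) :=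
  (ProbabilityMeasure.tendsto_iff_forall_integral_tendsto (μs := fun n ↦ ⟨ρ n, inferInstance⟩)
    (μ := ⟨ν, inferInstance⟩)).symm

end WeakConvergence

lemma exp_neg_mul_eq_add_laplaceTest (l x : ℝ) :
    Real.exp (-(l * x)) = 1 + x • (-l) + laplaceTest l x := by
  simp only [laplaceTest, smul_eq_mul]
  ring

namespace IsSubdensity

variable {α E : Type*} [MeasurableSpace α] [NormedAddCommGroup E] [NormedSpace ℝ E] {P : Measure α}
  [IsProbabilityMeasure P] {W : α → ℝ}

lemma integrable_sub_integral (hW : IsSubdensity P W) : Integrable (fun a ↦ W a - P[W]) P :=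
  hW.integrable.sub (integrable_const _)

lemma integrable_add_smul_add_comp (hW : IsSubdensity P W) {g : ℝ → E} {c : E}
    (hg : IsSecondOrderTest g c) (u v : E) :
    Integrable (fun a ↦ u + (W a - P[W]) • v + g (W a - P[W])) P :=
  ((integrable_const u).add (hW.integrable_sub_integral.smul_const v)).add (hW.integrable_comp hg)

lemma integral_add_smul_add_comp [CompleteSpace E] (hW : IsSubdensity P W) {g : ℝ → E} {c : E}
    (hg : IsSecondOrderTest g c) (u v : E) :
    ∫ a, (u + (W a - P[W]) • v + g (W a - P[W])) ∂P = u + ∫ a, g (W a - P[W]) ∂P := by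
  have hv : Integrable (fun a ↦ (W a - P[W]) • v) P := hW.integrable_sub_integral.smul_const v
  have huv : Integrable (fun a ↦ u + (W a - P[W]) • v) P := (integrable_const u).add hv
  rw [integral_add huv (hW.integrable_comp hg), integral_add (integrable_const u) hv,
    integral_smul_const, integral_sub hW.integrable (integrable_const _)]
  simp

lemma integral_rpow_one_add_sub (hW : IsSubdensity P W) {r : ℝ} (h0 : 0 ≤ r) (h1 : r ≤ 1) :
    ∫ a, (1 + (W a - P[W])) ^ r ∂P = 1 + -∫ a, hellingerTest r (W a - P[W]) ∂P := by
  have hg := (isSecondOrderTest_hellingerTest h0 h1).const_smul (-1)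
  rw [← integral_neg]
  convert hW.integral_add_smul_add_comp hg 1 r using 3 with a
  · simp only [hellingerTest, smul_eq_mul]
    ring
  · simp

lemma integrable_exp_neg_mul_sub (hW : IsSubdensity P W) {l : ℝ} (hl : 0 ≤ l) :
    Integrable (fun a ↦ Real.exp (-(l * (W a - P[W])))) P := by
  simp only [exp_neg_mul_eq_add_laplaceTest]
  exact hW.integrable_add_smul_add_comp (isSecondOrderTest_laplaceTest hl) 1 (-l)

lemma integral_exp_neg_mul_sub (hW : IsSubdensity P W) {l : ℝ} (hl : 0 ≤ l) :
    ∫ a, Real.exp (-(l * (W a - P[W]))) ∂P = 1 + ∫ a, laplaceTest l (W a - P[W]) ∂P := by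
  simp only [exp_neg_mul_eq_add_laplaceTest]
  exact hW.integral_add_smul_add_comp (isSecondOrderTest_laplaceTest hl) 1 (-l)

lemma integral_cexp_mul_sub (hW : IsSubdensity P W) (t : ℝ) :
    ∫ a, Complex.exp (t * (W a - P[W] : ℝ) * Complex.I) ∂P =
      1 + ∫ a, fourierTest t (W a - P[W]) ∂P := by
  rw [← hW.integral_add_smul_add_comp (isSecondOrderTest_fourierTest t) 1 (t * Complex.I)]
  congr 1 with a
  simp only [fourierTest, Complex.real_smul]
  ring

end IsSubdensity

section Products

variable {α : Type*} [MeasurableSpace α] {P : ℕ → ℕ → Measure α} {k : ℕ → ℕ} {W : ℕ → ℕ → α → ℝ}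

/-- The product over the `n`-th row of the Hellinger transforms `∫ (1 + W - ∫ W dP) ^ r dP` of
the null measure and the measure with density `1 + W - ∫ W dP`. -/
def hellingerProd (P : ℕ → ℕ → Measure α) (k : ℕ → ℕ) (W : ℕ → ℕ → α → ℝ) (r : ℝ) (n : ℕ) : ℝ :=
  ∏ i ∈ Finset.range (k n), ∫ a, (1 + (W n i a - (P n i)[W n i])) ^ r ∂P n i

/-- The row sums `∑ (W - ∫ W dP)`, as functions on the product space; this is `Z_n` for
`W = ε • dμ/dP`. -/
def centredSum (P : ℕ → ℕ → Measure α) (k : ℕ → ℕ) (W : ℕ → ℕ → α → ℝ) (n : ℕ)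
    (y : Fin (k n) → α) : ℝ :=
  ∑ i : Fin (k n), (W n i (y i) - (P n i)[W n i])

lemma exp_neg_mul_centredSum (l : ℝ) (n : ℕ) (y : Fin (k n) → α) :
    Real.exp (-(l * centredSum P k W n y)) =
      ∏ i : Fin (k n), Real.exp (-(l * (W n i (y i) - (P n i)[W n i]))) := by
  rw [← Real.exp_sum, centredSum, Finset.mul_sum, Finset.sum_neg_distrib]

lemma cexp_mul_centredSum (t : ℝ) (n : ℕ) (y : Fin (k n) → α) :
    Complex.exp (t * centredSum P k W n y * Complex.I) =
      ∏ i : Fin (k n), Complex.exp (t * (W n i (y i) - (P n i)[W n i] : ℝ) * Complex.I) := by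
  rw [← Complex.exp_sum, centredSum, Complex.ofReal_sum, Finset.mul_sum, Finset.sum_mul]

lemma IsNullArray.measurable_centredSum (hW : IsNullArray P k W) (n : ℕ) :
    Measurable (centredSum P k W n) :=
  Finset.measurable_sum _ fun i _ ↦
    ((hW.isSubdensity n i).measurable.comp (measurable_pi_apply i)).sub_const _

variable [∀ n i, IsProbabilityMeasure (P n i)]

instance isProbabilityMeasure_pprod (n : ℕ) : IsProbabilityMeasure (Pprod P k n) := by
  unfold Pprod
  infer_instance

lemma integral_pprod_prod {𝕜 : Type*} [RCLike 𝕜] (n : ℕ) (f : ℕ → α → 𝕜) :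
    ∫ y, ∏ i : Fin (k n), f i (y i) ∂Pprod P k n =
      ∏ i ∈ Finset.range (k n), ∫ a, f i a ∂P n i := by
  rw [Pprod, Finset.prod_range]
  exact integral_fintype_prod_eq_prod fun i : Fin (k n) ↦ f i

namespace IsNullArray

lemma tendsto_hellingerProd_iff (hW : IsNullArray P k W) {r L : ℝ} (h0 : 0 ≤ r) (h1 : r ≤ 1) :
    Tendsto (hellingerProd P k W r) atTop (𝓝 (Real.exp (-L))) ↔
      Tendsto (testSum P k W (hellingerTest r)) atTop (𝓝 L) := by
  have hprod (n : ℕ) : hellingerProd P k W r n = ∏ i ∈ Finset.range (k n),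
      (1 + -∫ a, hellingerTest r (W n i a - (P n i)[W n i]) ∂P n i) :=
    Finset.prod_congr rfl fun i _ ↦ (hW.isSubdensity n i).integral_rpow_one_add_sub h0 h1
  have hnonneg (n i : ℕ) : 0 ≤ ∫ a, hellingerTest r (W n i a - (P n i)[W n i]) ∂P n i :=
    integral_nonneg fun a ↦ hellingerTest_nonneg h0 h1 ((hW.isSubdensity n i).neg_one_le_sub a)
  have hsmall : UniformlySmall atTop (fun n ↦ Finset.range (k n))
      fun n i ↦ -∫ a, hellingerTest r (W n i a - (P n i)[W n i]) ∂P n i := fun δ hδ ↦ by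
    simpa only [norm_neg] using
      hW.uniformlySmall_integral_comp (isSecondOrderTest_hellingerTest h0 h1) δ hδ
  rw [funext hprod, tendsto_prod_one_add_iff hsmall fun n ↦ ?_]
  · simp only [Finset.sum_neg_distrib]
    exact tendsto_neg_iff
  · simp only [abs_neg, Finset.sum_neg_distrib, abs_of_nonneg (hnonneg n _)]
    exact (abs_of_nonneg (Finset.sum_nonneg fun i _ ↦ hnonneg n i)).symm

lemma isProbabilityMeasure_map_centredSum (hW : IsNullArray P k W) (n : ℕ) :
    IsProbabilityMeasure ((Pprod P k n).map (centredSum P k W n)) :=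
  Measure.isProbabilityMeasure_map (hW.measurable_centredSum n).aemeasurable

lemma charFun_map_centredSum (hW : IsNullArray P k W) (t : ℝ) (n : ℕ) :
    charFun ((Pprod P k n).map (centredSum P k W n)) t = ∏ i ∈ Finset.range (k n),
      (1 + ∫ a, fourierTest t (W n i a - (P n i)[W n i]) ∂P n i) := by
  rw [charFun_apply_real, integral_map (hW.measurable_centredSum n).aemeasurable (by fun_prop)]
  simp only [cexp_mul_centredSum]
  refine (integral_pprod_prod n fun i a ↦
    Complex.exp (t * (W n i a - (P n i)[W n i] : ℝ) * Complex.I)).trans ?_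
  exact Finset.prod_congr rfl fun i _ ↦ (hW.isSubdensity n i).integral_cexp_mul_sub t

lemma integrable_exp_neg_mul_centredSum (hW : IsNullArray P k W) {l : ℝ} (hl : 0 ≤ l) (n : ℕ) :
    Integrable (fun y ↦ Real.exp (-(l * centredSum P k W n y))) (Pprod P k n) := by
  have hint (i : Fin (k n)) := (hW.isSubdensity n i).integrable_exp_neg_mul_sub hl
  simp only [exp_neg_mul_centredSum, Pprod]
  exact Integrable.fintype_prod hint

lemma integral_exp_neg_mul_centredSum (hW : IsNullArray P k W) {l : ℝ} (hl : 0 ≤ l) (n : ℕ) :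
    ∫ y, Real.exp (-(l * centredSum P k W n y)) ∂Pprod P k n = ∏ i ∈ Finset.range (k n),
      (1 + ∫ a, laplaceTest l (W n i a - (P n i)[W n i]) ∂P n i) := by
  simp only [exp_neg_mul_centredSum]
  rw [integral_pprod_prod n fun i a ↦ Real.exp (-(l * (W n i a - (P n i)[W n i])))]
  exact Finset.prod_congr rfl fun i _ ↦ (hW.isSubdensity n i).integral_exp_neg_mul_sub hl

lemma weakLim_centredSum (hW : IsNullArray P k W) {s : ℝ} (hs0 : 0 ≤ s)
    (hs : IsLindeberg P k W s) :
    WeakLim (fun n ↦ (Pprod P k n).map (centredSum P k W n)) (gaussianReal 0 s.toNNReal) := by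
  have := hW.isProbabilityMeasure_map_centredSum
  refine weakLim_iff_tendsto.2 (ProbabilityMeasure.tendsto_iff_tendsto_charFun.2 fun t ↦ ?_)
  have htest := isSecondOrderTest_fourierTest t
  have hbound : (fun n ↦ ∑ i ∈ Finset.range (k n),
      ‖∫ a, fourierTest t (W n i a - (P n i)[W n i]) ∂P n i‖) =O[atTop] fun _ ↦ (1 : ℝ) := by
    refine Asymptotics.IsBigO.trans (.of_bound' (.of_forall fun n ↦ ?_))
      ((hW.tendsto_testSum hs htest.norm).isBigO_one ℝ)
    rw [Real.norm_of_nonneg (Finset.sum_nonneg fun i _ ↦ norm_nonneg _)]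
    exact (Finset.sum_le_sum fun i _ ↦ norm_integral_le_integral_norm _).trans (le_abs_self _)
  have hlim := tendsto_prod_one_add_cexp (hW.uniformlySmall_integral_comp htest) hbound
    (hW.tendsto_testSum hs htest)
  have hgauss : charFun (gaussianReal 0 s.toNNReal) t =
      Complex.exp (s • (-((t : ℂ) ^ 2 / 2))) := by
    rw [charFun_gaussianReal, Real.coe_toNNReal s hs0, Complex.real_smul, Complex.ofReal_zero]
    congr 1
    ring
  simpa only [hW.charFun_map_centredSum, ProbabilityMeasure.coe_mk, hgauss] using hlim

end IsNullArray

end Products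

/-! ### The converse of the central limit theorem -/

lemma one_add_sum_le_prod_one_add {κ : Type*} (s : Finset κ) {f : κ → ℝ} (hf : ∀ i, 0 ≤ f i) :
    1 + ∑ i ∈ s, f i ≤ ∏ i ∈ s, (1 + f i) := by
  induction s using Finset.cons_induction with
  | empty => simp
  | cons a s ha ih =>
    rw [Finset.sum_cons, Finset.prod_cons]
    nlinarith [hf a, Finset.sum_nonneg fun i (_ : i ∈ s) ↦ hf i]

/-- If halving the argument at least halves `f`, then dyadic descent from a point where `f` exceeds
`1` meets the level `1`. -/
lemma exists_one_lt_le_one_of_half_le {f : ℝ → ℝ} {b : ℝ}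
    (hf : ∀ l, 0 < l → f (l / 2) ≤ f l / 2) (hb : 0 < b) (hfb : 1 < f b) :
    ∃ l, 0 < l ∧ l ≤ b ∧ 1 < f l ∧ f (l / 2) ≤ 1 := by
  have hpow (m : ℕ) : f (b / 2 ^ m) ≤ f b / 2 ^ m := by
    induction m with
    | zero => simp
    | succ m ih =>
      rw [pow_succ, ← div_div, ← div_div]
      exact (hf _ (by positivity)).trans (by linarith)
  have hex : ∃ m : ℕ, f (b / 2 ^ m) ≤ 1 := by
    obtain ⟨m, hm⟩ := pow_unbounded_of_one_lt (f b) one_lt_two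
    exact ⟨m, (hpow m).trans ((div_le_one (by positivity)).2 hm.le)⟩
  obtain ⟨m, hm, hmin⟩ : ∃ m, f (b / 2 ^ m) ≤ 1 ∧ ∀ j < m, ¬ f (b / 2 ^ j) ≤ 1 :=
    ⟨Nat.find hex, Nat.find_spec hex, fun _ ↦ Nat.find_min hex⟩
  obtain _ | m := m
  · rw [pow_zero, div_one] at hm
    linarith
  · refine ⟨b / 2 ^ m, by positivity, div_le_self hb.le (one_le_pow₀ one_le_two),
      not_le.1 (hmin m m.lt_succ_self), ?_⟩
    rwa [div_div, ← pow_succ]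

section PaleyZygmund

variable {Ω : Type*} [MeasurableSpace Ω] {ρ : Measure Ω} {Y : Ω → ℝ}

lemma sq_setIntegral_le_integral_sq_mul_measureReal [IsFiniteMeasure ρ] (hY : MemLp Y 2 ρ)
    {S : Set Ω} (hS : MeasurableSet S) :
    (∫ a in S, Y a ∂ρ) ^ 2 ≤ (∫ a, Y a ^ 2 ∂ρ) * ρ.real S := by
  have hYint : Integrable Y ρ := hY.integrable one_le_two
  have hquad (c : ℝ) :
      0 ≤ ρ.real S * (c * c) + -2 * (∫ a in S, Y a ∂ρ) * c + ∫ a, Y a ^ 2 ∂ρ := by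
    have hexpand (a : Ω) : (Y a - S.indicator (fun _ ↦ c) a) ^ 2 =
        Y a ^ 2 - S.indicator (fun a ↦ 2 * c * Y a - c * c) a := by
      by_cases ha : a ∈ S
      · rw [Set.indicator_of_mem ha, Set.indicator_of_mem ha]; ring
      · rw [Set.indicator_of_notMem ha, Set.indicator_of_notMem ha]; ring
    have hlin : Integrable (fun a ↦ 2 * c * Y a - c * c) ρ :=
      (hYint.const_mul _).sub (integrable_const _)
    have h0 : 0 ≤ ∫ a, (Y a - S.indicator (fun _ ↦ c) a) ^ 2 ∂ρ :=
      integral_nonneg fun a ↦ sq_nonneg _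
    simp only [hexpand] at h0
    rw [integral_sub hY.integrable_sq (hlin.indicator hS), integral_indicator hS,
      integral_sub (hYint.const_mul _).integrableOn (integrable_const _).integrableOn,
      integral_const_mul, setIntegral_const, smul_eq_mul] at h0
    linarith
  have := discrim_le_zero hquad
  rw [discrim] at this
  linarith

lemma sq_integral_sub_le_integral_sq_mul_measureReal [IsProbabilityMeasure ρ] (hm : Measurable Y)
    (hY : MemLp Y 2 ρ) {θ : ℝ} (h0 : 0 ≤ θ) (hθ : θ ≤ ρ[Y]) :
    (ρ[Y] - θ) ^ 2 ≤ (∫ a, Y a ^ 2 ∂ρ) * ρ.real {a | θ ≤ Y a} := by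
  have hS : MeasurableSet {a | θ ≤ Y a} := measurableSet_le measurable_const hm
  have hYint : Integrable Y ρ := hY.integrable one_le_two
  have hle : ρ[Y] ≤ θ + ∫ a in {a | θ ≤ Y a}, Y a ∂ρ := by
    calc ρ[Y] ≤ ∫ a, (θ + {a | θ ≤ Y a}.indicator Y a) ∂ρ := by
          refine integral_mono hYint ((integrable_const θ).add (hYint.indicator hS)) fun a ↦ ?_
          by_cases ha : θ ≤ Y a
          · simpa [Set.indicator_of_mem (s := {a | θ ≤ Y a}) (by simpa using ha)] using h0
          · simpa [Set.indicator_of_notMem (s := {a | θ ≤ Y a}) (by simpa using ha)] using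
              (not_le.1 ha).le
      _ = θ + ∫ a in {a | θ ≤ Y a}, Y a ∂ρ := by
          rw [integral_add (integrable_const θ) (hYint.indicator hS), integral_indicator hS]
          simp
  exact (pow_le_pow_left₀ (sub_nonneg.2 hθ) (by linarith) 2).trans
    (sq_setIntegral_le_integral_sq_mul_measureReal hY hS)

end PaleyZygmund

section WeakConvergence

variable {β : Type*} [MeasurableSpace β]

lemma abs_integral_sub_integral_min_le {ρ : Measure β} [IsFiniteMeasure ρ] {f : β → ℝ}
    (hf : MemLp f 2 ρ) (hf0 : ∀ x, 0 ≤ f x) {C M : ℝ} (hM : 0 < M) (hC : ∫ x, f x ^ 2 ∂ρ ≤ C) :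
    |∫ x, f x ∂ρ - ∫ x, min (f x) M ∂ρ| ≤ C / M := by
  have hfint : Integrable f ρ := hf.integrable one_le_two
  have hmin : Integrable (fun x ↦ min (f x) M) ρ := hfint.inf (integrable_const M)
  rw [← integral_sub hfint hmin, ← Real.norm_eq_abs]
  calc ‖∫ x, (f x - min (f x) M) ∂ρ‖ ≤ ∫ x, M⁻¹ * f x ^ 2 ∂ρ := by
        refine norm_integral_le_of_norm_le (hf.integrable_sq.const_mul _) (.of_forall fun x ↦ ?_)
        rw [Real.norm_of_nonneg (sub_nonneg.2 (min_le_left _ _)), ← div_eq_inv_mul, le_div_iff₀ hM]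
        rcases le_total (f x) M with h | h
        · rw [min_eq_left h, sub_self, zero_mul]
          positivity
        · rw [min_eq_right h]
          nlinarith [hf0 x]
    _ ≤ C / M := by
        rw [integral_const_mul, ← div_eq_inv_mul]
        gcongr

lemma WeakLim.tendsto_integral_of_sq_le [TopologicalSpace β] {ρ : ℕ → Measure β}
    {ν : Measure β} [∀ n, IsFiniteMeasure (ρ n)] [IsFiniteMeasure ν] (h : WeakLim ρ ν) {f : β → ℝ}
    (hf : Continuous f) (hf0 : ∀ x, 0 ≤ f x) (hρ : ∀ n, MemLp f 2 (ρ n)) (hν : MemLp f 2 ν) {C : ℝ}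
    (hC : ∀ᶠ n in atTop, ∫ x, f x ^ 2 ∂ρ n ≤ C) :
    Tendsto (fun n ↦ ∫ x, f x ∂ρ n) atTop (𝓝 (∫ x, f x ∂ν)) := by
  set K := max C (∫ x, f x ^ 2 ∂ν)
  rw [Metric.tendsto_nhds]
  intro δ hδ
  obtain ⟨M, hMK, hM⟩ : ∃ M, K / M < δ / 3 ∧ 0 < M :=
    (((tendsto_const_nhds.div_atTop tendsto_id).eventually_lt_const (by positivity)).and
      (eventually_gt_atTop 0)).exists
  let g : BoundedContinuousFunction β ℝ := BoundedContinuousFunction.ofNormedAddCommGroup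
    (fun x ↦ min (f x) M) (hf.min continuous_const) M fun x ↦ by
      rw [Real.norm_of_nonneg (le_min (hf0 x) hM.le)]
      exact min_le_right _ _
  filter_upwards [Metric.tendsto_nhds.1 (h g) (δ / 3) (by positivity), hC] with n hn hCn
  have hρn := abs_integral_sub_integral_min_le (C := K) (hρ n) hf0 hM
    (hCn.trans (le_max_left _ _))
  have hνM := abs_integral_sub_integral_min_le hν hf0 hM (le_max_right C _)
  change |∫ x, min (f x) M ∂ρ n - ∫ x, min (f x) M ∂ν| < δ / 3 at hn
  rw [Real.dist_eq, abs_lt]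
  rw [abs_lt] at hn
  rw [abs_le] at hρn hνM
  constructor <;> linarith

lemma WeakLim.exists_pos_measureReal_Iic_neg_lt {ρ : ℕ → Measure ℝ} {ν : Measure ℝ}
    [∀ n, IsProbabilityMeasure (ρ n)] [IsProbabilityMeasure ν] (h : WeakLim ρ ν) {p : ℝ}
    (hp : 0 < p) : ∃ B, 0 < B ∧ ∀ᶠ n in atTop, (ρ n).real (Set.Iic (-B)) < p := by
  obtain ⟨B, hB, hB0⟩ : ∃ B, cdf ν (-B) < p ∧ 0 < B :=
    ((((tendsto_cdf_atBot ν).comp tendsto_neg_atTop_atBot).eventually_lt_const hp).and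
      (eventually_gt_atTop 0)).exists
  refine ⟨B, hB0, ?_⟩
  have hlimsup := ProbabilityMeasure.limsup_measure_closed_le_of_tendsto (weakLim_iff_tendsto.1 h)
    (isClosed_Iic (a := -B))
  rw [cdf_eq_real] at hB
  filter_upwards [eventually_lt_of_limsup_lt (hlimsup.trans_lt
    ((ENNReal.lt_ofReal_iff_toReal_lt (measure_ne_top ν _)).2 hB))] with n hn
  exact (ENNReal.lt_ofReal_iff_toReal_lt (measure_ne_top (ρ n) _)).1 hn

end WeakConvergence

section LaplaceTransform

variable {α : Type*} [MeasurableSpace α] {P : ℕ → ℕ → Measure α} {k : ℕ → ℕ} {W : ℕ → ℕ → α → ℝ}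
  [∀ n i, IsProbabilityMeasure (P n i)]

namespace IsNullArray

lemma one_add_testSum_laplaceTest_le (hW : IsNullArray P k W) {l : ℝ} (hl : 0 ≤ l) (n : ℕ) :
    1 + testSum P k W (laplaceTest l) n ≤
      ∫ y, Real.exp (-(l * centredSum P k W n y)) ∂Pprod P k n := by
  rw [hW.integral_exp_neg_mul_centredSum hl]
  exact one_add_sum_le_prod_one_add _ fun i ↦ integral_nonneg fun a ↦ laplaceTest_nonneg l _

lemma integral_exp_neg_mul_centredSum_le (hW : IsNullArray P k W) {l : ℝ} (hl : 0 ≤ l) (n : ℕ) :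
    ∫ y, Real.exp (-(l * centredSum P k W n y)) ∂Pprod P k n ≤
      Real.exp (testSum P k W (laplaceTest l) n) := by
  rw [hW.integral_exp_neg_mul_centredSum hl]
  exact Real.prod_one_add_le_exp_sum _ fun i ↦ integral_nonneg fun a ↦ laplaceTest_nonneg l _

lemma memLp_exp_neg_mul_centredSum (hW : IsNullArray P k W) {l : ℝ} (hl : 0 ≤ l) (n : ℕ) :
    MemLp (fun y ↦ Real.exp (-(l * centredSum P k W n y))) 2 (Pprod P k n) := by
  have hmeas := hW.measurable_centredSum n
  refine (memLp_two_iff_integrable_sq (by fun_prop)).2 ?_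
  convert hW.integrable_exp_neg_mul_centredSum (l := 2 * l) (by positivity) n using 2 with y
  rw [← Real.exp_nat_mul]
  push_cast
  ring_nf

lemma integral_exp_neg_mul_centredSum_sq_le (hW : IsNullArray P k W) {l : ℝ} (hl : 0 ≤ l) (n : ℕ) :
    ∫ y, Real.exp (-(l * centredSum P k W n y)) ^ 2 ∂Pprod P k n ≤
      Real.exp (testSum P k W (laplaceTest (2 * l)) n) := by
  convert hW.integral_exp_neg_mul_centredSum_le (l := 2 * l) (by positivity) n using 3 with y
  rw [← Real.exp_nat_mul]
  push_cast
  ring_nf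

lemma testSum_laplaceTest_half_le (hW : IsNullArray P k W) {l : ℝ} (hl : 0 ≤ l) (n : ℕ) :
    testSum P k W (laplaceTest (l / 2)) n ≤ testSum P k W (laplaceTest l) n / 2 := by
  rw [testSum, testSum, Finset.sum_div]
  refine Finset.sum_le_sum fun i _ ↦ ?_
  rw [← integral_div]
  exact integral_mono
    ((hW.isSubdensity n i).integrable_comp (isSecondOrderTest_laplaceTest (by positivity)))
    (((hW.isSubdensity n i).integrable_comp (isSecondOrderTest_laplaceTest hl)).div_const 2)
    fun a ↦ laplaceTest_half_le l _

lemma testSum_laplaceTest_two_mul_le (hW : IsNullArray P k W) {l : ℝ} (hl : 0 ≤ l) {n : ℕ}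
    (hn : ∀ i ∈ Finset.range (k n), l * (P n i)[W n i] ≤ 1) :
    testSum P k W (laplaceTest (2 * l)) n ≤ 11 * testSum P k W (laplaceTest l) n := by
  rw [testSum, testSum, Finset.mul_sum]
  refine Finset.sum_le_sum fun i hi ↦ ?_
  rw [← integral_const_mul]
  refine integral_mono
    ((hW.isSubdensity n i).integrable_comp (isSecondOrderTest_laplaceTest (by positivity)))
    (((hW.isSubdensity n i).integrable_comp (isSecondOrderTest_laplaceTest hl)).const_mul 11)
    fun a ↦ laplaceTest_two_mul_le ?_
  nlinarith [hn i hi, mul_nonneg hl ((hW.isSubdensity n i).nonneg a)]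

/-- A Laplace sum of moderate size keeps the centred sum away from a neighbourhood of `0`. -/
lemma exp_div_le_measureReal_centredSum_le (hW : IsNullArray P k W) {l : ℝ} (hl : 0 < l) {n : ℕ}
    (h1 : 1 < testSum P k W (laplaceTest l) n)
    (h2 : testSum P k W (laplaceTest (2 * l)) n ≤ 121) :
    Real.exp (-121) / 4 ≤
      (Pprod P k n).real {y | centredSum P k W n y ≤ -(Real.log (3 / 2) / l)} := by
  set Y := fun y ↦ Real.exp (-(l * centredSum P k W n y))
  have hmeas := hW.measurable_centredSum n
  have hmean : 2 < (Pprod P k n)[Y] := by linarith [hW.one_add_testSum_laplaceTest_le hl.le n]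
  have hsq : ∫ y, Y y ^ 2 ∂Pprod P k n ≤ Real.exp 121 :=
    (hW.integral_exp_neg_mul_centredSum_sq_le hl.le n).trans (Real.exp_le_exp.2 h2)
  have hset : {y | 3 / 2 ≤ Y y} = {y | centredSum P k W n y ≤ -(Real.log (3 / 2) / l)} := by
    ext y
    simp only [Set.mem_ofPred_eq, Y]
    rw [← Real.log_le_iff_le_exp (by norm_num), le_neg, ← neg_div, le_div_iff₀' hl]
  have hPZ := sq_integral_sub_le_integral_sq_mul_measureReal (θ := 3 / 2) (by fun_prop)
    (hW.memLp_exp_neg_mul_centredSum hl.le n) (by norm_num) (by linarith)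
  rw [hset] at hPZ
  have hquarter : 1 / 4 ≤ Real.exp 121 *
      (Pprod P k n).real {y | centredSum P k W n y ≤ -(Real.log (3 / 2) / l)} := by
    refine le_trans ?_ (hPZ.trans (mul_le_mul_of_nonneg_right hsq measureReal_nonneg))
    nlinarith
  rw [Real.exp_neg, div_eq_mul_inv, inv_mul_le_iff₀ (Real.exp_pos _)]
  linarith

lemma eventually_testSum_laplaceTest_le_one (hW : IsNullArray P k W) {ν : Measure ℝ}
    [IsProbabilityMeasure ν] (h : WeakLim (fun n ↦ (Pprod P k n).map (centredSum P k W n)) ν) :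
    ∃ b, 0 < b ∧ ∀ l, 0 < l → l ≤ b → ∀ᶠ n in atTop, testSum P k W (laplaceTest l) n ≤ 1 := by
  have := hW.isProbabilityMeasure_map_centredSum
  obtain ⟨B, hB, htight⟩ := h.exists_pos_measureReal_Iic_neg_lt (p := Real.exp (-121) / 4)
    (by positivity)
  refine ⟨Real.log (3 / 2) / B, div_pos (Real.log_pos (by norm_num)) hB, fun b hb hbB ↦ ?_⟩
  filter_upwards [htight, hW.eventually_integral_le (δ := b⁻¹) (by positivity)] with n hn hmean
  by_contra! hcon
  obtain ⟨l, hl, hlb, h1, hhalf⟩ := exists_one_lt_le_one_of_half_le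
    (f := fun l ↦ testSum P k W (laplaceTest l) n)
    (fun l hl ↦ hW.testSum_laplaceTest_half_le hl.le n) hb hcon
  have hmean' {c : ℝ} (hcb : c ≤ b) :
      ∀ i ∈ Finset.range (k n), c * (P n i)[W n i] ≤ 1 := fun i hi ↦ by
    rw [← mul_inv_cancel₀ hb.ne']
    exact mul_le_mul hcb (hmean i hi) (hW.isSubdensity n i).integral_nonneg hb.le
  have hdouble := hW.testSum_laplaceTest_two_mul_le (half_pos hl).le
    (hmean' (by linarith))
  have hdouble' := hW.testSum_laplaceTest_two_mul_le hl.le (hmean' hlb)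
  rw [mul_div_cancel₀ l two_ne_zero] at hdouble
  have hBl : B ≤ Real.log (3 / 2) / l := by
    rw [le_div_iff₀ hl, mul_comm, ← le_div_iff₀ hB]
    exact hlb.trans hbB
  refine hn.not_ge ((hW.exp_div_le_measureReal_centredSum_le hl h1 (by linarith)).trans ?_)
  rw [map_measureReal_apply (hW.measurable_centredSum n) measurableSet_Iic]
  exact measureReal_mono fun y (hy : _ ≤ _) ↦ hy.trans (neg_le_neg hBl)

lemma exists_eventually_testSum_laplaceTest_le (hW : IsNullArray P k W) {ν : Measure ℝ}
    [IsProbabilityMeasure ν] (h : WeakLim (fun n ↦ (Pprod P k n).map (centredSum P k W n)) ν)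
    {l : ℝ} (hl : 0 < l) : ∃ C, ∀ᶠ n in atTop, testSum P k W (laplaceTest l) n ≤ C := by
  obtain ⟨b, hb, hone⟩ := hW.eventually_testSum_laplaceTest_le_one h
  obtain ⟨m, hm⟩ := pow_unbounded_of_one_lt (l / b) one_lt_two
  have hsmall : l / 2 ^ m ≤ b := by
    rw [div_le_iff₀ (by positivity), mul_comm, ← div_le_iff₀ hb]
    exact hm.le
  refine ⟨11 ^ m, ?_⟩
  filter_upwards [hone _ (by positivity) hsmall,
    hW.eventually_integral_le (δ := l⁻¹) (by positivity)] with n hn hmean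
  have hdyadic (j : ℕ) : j ≤ m → testSum P k W (laplaceTest (l / 2 ^ (m - j))) n ≤ 11 ^ j := by
    induction j with
    | zero => simpa using hn
    | succ j ih =>
      intro hj
      have hdouble : l / 2 ^ (m - (j + 1)) = 2 * (l / 2 ^ (m - j)) := by
        rw [show m - j = m - (j + 1) + 1 by omega, pow_succ]
        field_simp
      rw [hdouble, pow_succ']
      refine (hW.testSum_laplaceTest_two_mul_le (by positivity) fun i hi ↦ ?_).trans
        (mul_le_mul_of_nonneg_left (ih (by omega)) (by norm_num))
      rw [← mul_inv_cancel₀ hl.ne']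
      exact mul_le_mul (div_le_self hl.le (one_le_pow₀ one_le_two)) (hmean i hi)
        (hW.isSubdensity n i).integral_nonneg hl.le
  simpa using hdyadic m le_rfl

lemma tendsto_integral_exp_neg_mul_centredSum (hW : IsNullArray P k W) {ν : Measure ℝ}
    [IsProbabilityMeasure ν] (h : WeakLim (fun n ↦ (Pprod P k n).map (centredSum P k W n)) ν)
    {l : ℝ} (hl : 0 < l) (hν : MemLp (fun x ↦ Real.exp (-(l * x))) 2 ν) :
    Tendsto (fun n ↦ ∫ y, Real.exp (-(l * centredSum P k W n y)) ∂Pprod P k n) atTop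
      (𝓝 (∫ x, Real.exp (-(l * x)) ∂ν)) := by
  have := hW.isProbabilityMeasure_map_centredSum
  have hmeas (n : ℕ) := (hW.measurable_centredSum n).aemeasurable (μ := Pprod P k n)
  obtain ⟨C, hC⟩ := hW.exists_eventually_testSum_laplaceTest_le h (l := 2 * l) (by positivity)
  have hlim := h.tendsto_integral_of_sq_le (f := fun x ↦ Real.exp (-(l * x))) (C := Real.exp C)
    (by fun_prop) (fun x ↦ (Real.exp_pos _).le)
    (fun n ↦ (memLp_map_measure_iff (by fun_prop) (hmeas n)).2
      (hW.memLp_exp_neg_mul_centredSum hl.le n)) hν ?_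
  · simpa only [fun n ↦ integral_map (hmeas n)
      (f := fun x ↦ Real.exp (-(l * x))) (by fun_prop)] using hlim
  · filter_upwards [hC] with n hn
    rw [integral_map (hmeas n) (by fun_prop)]
    exact (hW.integral_exp_neg_mul_centredSum_sq_le hl.le n).trans (Real.exp_le_exp.2 hn)

lemma isLindeberg_of_weakLim_centredSum (hW : IsNullArray P k W) {s : ℝ} (hs0 : 0 ≤ s)
    (h : WeakLim (fun n ↦ (Pprod P k n).map (centredSum P k W n)) (gaussianReal 0 s.toNNReal)) :
    IsLindeberg P k W s := by
  refine hW.isLindeberg_of_tendsto_testSum_laplaceTest hs0 fun l hl ↦ ?_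
  have hnonneg (n i : ℕ) : 0 ≤ ∫ a, laplaceTest l (W n i a - (P n i)[W n i]) ∂P n i :=
    integral_nonneg fun a ↦ laplaceTest_nonneg l _
  have hmgf : ∫ x, Real.exp (-(l * x)) ∂gaussianReal 0 s.toNNReal = Real.exp (s * (l ^ 2 / 2)) := by
    have := congrFun (mgf_id_gaussianReal (μ := 0) (v := s.toNNReal)) (-l)
    simp only [mgf, id, neg_mul, zero_mul, zero_add, neg_sq, Real.coe_toNNReal s hs0]
      at this
    rw [this, mul_div_assoc]
  have hmem : MemLp (fun x ↦ Real.exp (-(l * x))) 2 (gaussianReal 0 s.toNNReal) := by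
    refine (memLp_two_iff_integrable_sq (by fun_prop)).2 ?_
    convert integrable_exp_mul_gaussianReal (μ := 0) (v := s.toNNReal) (-(2 * l)) using 2 with x
    rw [← Real.exp_nat_mul]
    push_cast
    ring_nf
  have hlim := hW.tendsto_integral_exp_neg_mul_centredSum h hl hmem
  simp only [hW.integral_exp_neg_mul_centredSum hl.le, hmgf] at hlim
  refine (tendsto_prod_one_add_iff
    (hW.uniformlySmall_integral_comp (isSecondOrderTest_laplaceTest hl.le)) fun n ↦ ?_).1 hlim
  simp only [abs_of_nonneg (hnonneg n _)]
  exact (abs_of_nonneg (Finset.sum_nonneg fun i _ ↦ hnonneg n i)).symm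

end IsNullArray

end LaplaceTransform

/-! ### Laws on the extended line -/

section LaplaceTransform

lemma charFun_withDensity_exp_mul (m : Measure ℝ) (c t : ℝ) :
    charFun (m.withDensity fun x ↦ ENNReal.ofReal (Real.exp (c * x))) t =
      complexMGF id m (c + t * Complex.I) := by
  rw [charFun_apply_real, complexMGF, integral_withDensity_eq_integral_toReal_smul (by fun_prop)
    (Eventually.of_forall fun x ↦ ENNReal.ofReal_lt_top)]
  congr 1 with x
  rw [ENNReal.toReal_ofReal (Real.exp_pos _).le, Complex.real_smul, Complex.ofReal_exp,
    ← Complex.exp_add]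
  congr 1
  simp only [id]
  push_cast
  ring

variable {m m' : Measure ℝ} {a b : ℝ}

lemma eqOn_complexMGF_of_eqOn_mgf_Ioo (hm : Set.Ioo a b ⊆ integrableExpSet id m)
    (hm' : Set.Ioo a b ⊆ integrableExpSet id m')
    (h : Set.EqOn (mgf id m) (mgf id m') (Set.Ioo a b)) :
    Set.EqOn (complexMGF id m) (complexMGF id m') {z | z.re ∈ Set.Ioo a b} := by
  have analyticOnNhd {q : Measure ℝ} (hq : Set.Ioo a b ⊆ integrableExpSet id q) :
      AnalyticOnNhd ℂ (complexMGF id q) {z | z.re ∈ Set.Ioo a b} :=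
    analyticOnNhd_complexMGF.mono fun z (hz : z.re ∈ Set.Ioo a b) ↦
      interior_maximal hq isOpen_Ioo hz
  intro z hz
  obtain ⟨c, hc⟩ : (Set.Ioo a b).Nonempty := ⟨z.re, hz⟩
  refine AnalyticOnNhd.eqOn_of_preconnected_of_frequently_eq (𝕜 := ℂ) (z₀ := (c : ℂ))
    (analyticOnNhd hm) (analyticOnNhd hm')
    ((convex_Ioo a b).linear_preimage Complex.reLm).isPreconnected (by simpa using hc) ?_ hz
  have hreal : Tendsto ((↑) : ℝ → ℂ) (𝓝[≠] c) (𝓝[≠] (c : ℂ)) :=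
    Complex.continuous_ofReal.continuousWithinAt.tendsto_nhdsWithin fun x hx ↦ by simpa using hx
  refine hreal.frequently (Eventually.frequently ?_)
  filter_upwards [nhdsWithin_le_nhds (isOpen_Ioo.mem_nhds hc)] with x hx
  rw [complexMGF_ofReal, complexMGF_ofReal, h hx]

lemma eq_of_eqOn_mgf_Ioo [IsFiniteMeasure m] [IsFiniteMeasure m'] (hab : a < b)
    (hm : Set.Ioo a b ⊆ integrableExpSet id m) (hm' : Set.Ioo a b ⊆ integrableExpSet id m')
    (h : Set.EqOn (mgf id m) (mgf id m') (Set.Ioo a b)) : m = m' := by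
  obtain ⟨c, hc⟩ := Set.nonempty_Ioo.2 hab
  let w (x : ℝ) : ENNReal := ENNReal.ofReal (Real.exp (c * x))
  have hw : Measurable w := by fun_prop
  have inv_same (q : Measure ℝ) : (q.withDensity w).withDensity w⁻¹ = q :=
    withDensity_inv_same hw (Eventually.of_forall fun x ↦ by simp [w, Real.exp_pos])
      (Eventually.of_forall fun x ↦ ENNReal.ofReal_ne_top)
  have hfin {q : Measure ℝ} (hq : Set.Ioo a b ⊆ integrableExpSet id q) :
      IsFiniteMeasure (q.withDensity w) := isFiniteMeasure_withDensity_ofReal (hq hc).2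
  have := hfin hm
  have := hfin hm'
  have htilt : m.withDensity w = m'.withDensity w := by
    refine Measure.ext_of_charFun (funext fun t ↦ ?_)
    simp only [w, charFun_withDensity_exp_mul]
    exact eqOn_complexMGF_of_eqOn_mgf_Ioo hm hm' h (by simpa using hc)
  rw [← inv_same m, htilt, inv_same m']

end LaplaceTransform

section PosteriorProbability

/-- The posterior probability of the null hypothesis, as a function of the log-likelihood ratio
`x`, when null and alternative have equal prior weights. -/
def posteriorNull (x : EReal) : ℝ := ((1 + EReal.exp x)⁻¹).toReal

lemma posteriorNull_log_ofReal {y : ℝ} (hy : 0 ≤ y) :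
    posteriorNull (ENNReal.log (ENNReal.ofReal y)) = (1 + y)⁻¹ := by
  rw [posteriorNull, ENNReal.exp_log, ← ENNReal.ofReal_one, ← ENNReal.ofReal_add zero_le_one hy,
    ENNReal.toReal_inv, ENNReal.toReal_ofReal (by positivity)]

@[simp] lemma posteriorNull_top : posteriorNull ⊤ = 0 := by simp [posteriorNull]

@[simp] lemma posteriorNull_bot : posteriorNull ⊥ = 1 := by simp [posteriorNull]

lemma posteriorNull_coe (x : ℝ) : posteriorNull x = (1 + Real.exp x)⁻¹ := by
  rw [← posteriorNull_log_ofReal (Real.exp_pos x).le, ENNReal.log_ofReal_of_pos (Real.exp_pos x),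
    Real.log_exp]

lemma continuous_posteriorNull : Continuous posteriorNull :=
  ENNReal.continuousOn_toReal.comp_continuous
    (continuous_const.add ENNReal.continuous_exp).inv fun x ↦ by simp

lemma posteriorNull_nonneg (x : EReal) : 0 ≤ posteriorNull x := ENNReal.toReal_nonneg

lemma posteriorNull_le_one (x : EReal) : posteriorNull x ≤ 1 :=
  ENNReal.toReal_le_of_le_ofReal zero_le_one (by simp)

/-- The integrand `q ^ r * p ^ (1 - r)` of the Hellinger transform of null and alternative with
respect to their sum, where `p` and `q` are the posterior probabilities of the two hypotheses. -/
def hellingerWeight (r : ℝ) (x : EReal) : ℝ :=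
  (1 - posteriorNull x) ^ r * posteriorNull x ^ (1 - r)

variable {r : ℝ}

lemma hellingerWeight_log_ofReal {y : ℝ} (hy : 0 ≤ y) :
    hellingerWeight r (ENNReal.log (ENNReal.ofReal y)) = y ^ r * (1 + y)⁻¹ := by
  have hpos : 0 < (1 + y)⁻¹ := by positivity
  have hsub : 1 - (1 + y)⁻¹ = y * (1 + y)⁻¹ := by field_simp; ring
  rw [hellingerWeight, posteriorNull_log_ofReal hy, hsub, Real.mul_rpow hy hpos.le, mul_assoc,
    ← Real.rpow_add hpos, add_sub_cancel, Real.rpow_one]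

lemma hellingerWeight_coe (x : ℝ) :
    hellingerWeight r x = Real.exp (r * x) * (1 + Real.exp x)⁻¹ := by
  rw [mul_comm r, Real.exp_mul, ← hellingerWeight_log_ofReal (Real.exp_pos x).le,
    ENNReal.log_ofReal_of_pos (Real.exp_pos x), Real.log_exp]

lemma hellingerWeight_add_exp_mul (x : ℝ) :
    hellingerWeight r x + Real.exp x * hellingerWeight r x = Real.exp (r * x) := by
  have := Real.exp_pos x
  rw [hellingerWeight_coe]
  field_simp

lemma hellingerWeight_eq_zero (hr : r ∈ Set.Ioo 0 1) {x : EReal} (hx : x = ⊥ ∨ x = ⊤) :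
    hellingerWeight r x = 0 := by
  obtain rfl | rfl := hx
  · simp [hellingerWeight, hr.1.ne']
  · simp [hellingerWeight, Real.zero_rpow (sub_pos.2 hr.2).ne']

lemma continuous_hellingerWeight (hr : r ∈ Set.Ioo 0 1) : Continuous (hellingerWeight r) :=
  ((continuous_const.sub continuous_posteriorNull).rpow_const fun _ ↦ Or.inr hr.1.le).mul
    (continuous_posteriorNull.rpow_const fun _ ↦ Or.inr (sub_pos.2 hr.2).le)

lemma integrable_hellingerWeight (hr : r ∈ Set.Ioo 0 1) (ν : Measure EReal) [IsFiniteMeasure ν] :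
    Integrable (hellingerWeight r) ν :=
  (BoundedContinuousFunction.mkOfCompact ⟨_, continuous_hellingerWeight hr⟩).integrable ν

end PosteriorProbability

section RestrictReal

lemma comap_withDensity {α β : Type*} [MeasurableSpace α] [MeasurableSpace β] {f : α → β}
    (hf : MeasurableEmbedding f) (ν : Measure β) (g : β → ENNReal) :
    (ν.withDensity g).comap f = (ν.comap f).withDensity (g ∘ f) := by
  ext s hs
  rw [hf.comap_apply, withDensity_apply _ (hf.measurableSet_image.2 hs), withDensity_apply _ hs,
    hf.restrict_comap]
  simp only [Function.comp_apply]
  rw [← hf.lintegral_map, hf.map_comap, Measure.restrict_restrict hf.measurableSet_range,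
    Set.inter_eq_self_of_subset_right (Set.image_subset_range f s)]

/-- The restriction to the real line of a measure on the extended real line. -/
def restrictReal (ν : Measure EReal) : Measure ℝ := ν.comap (↑)

variable {ν : Measure EReal}

instance isFiniteMeasure_restrictReal [IsFiniteMeasure ν] : IsFiniteMeasure (restrictReal ν) :=
  inferInstanceAs (IsFiniteMeasure (ν.comap _))

lemma map_coe_restrictReal (ν : Measure EReal) :
    (restrictReal ν).map (↑) = ν.restrict (Set.range Real.toEReal) :=
  EReal.measurableEmbedding_coe.map_comap ν

lemma compl_range_coe_real : (Set.range Real.toEReal)ᶜ = {x | x = ⊥ ∨ x = ⊤} := by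
  rw [EReal.range_coe, compl_compl]
  rfl

lemma map_coe_restrictReal_eq_self (hν : ν {x | x = ⊥ ∨ x = ⊤} = 0) :
    (restrictReal ν).map (↑) = ν := by
  rw [map_coe_restrictReal, Measure.restrict_eq_self_of_ae_mem]
  rwa [← compl_range_coe_real] at hν

lemma isProbabilityMeasure_restrictReal [IsProbabilityMeasure ν]
    (hν : ν {x | x = ⊥ ∨ x = ⊤} = 0) : IsProbabilityMeasure (restrictReal ν) := by
  rw [← Measure.isProbabilityMeasure_map_iff measurable_coe_real_ereal.aemeasurable,
    map_coe_restrictReal_eq_self hν]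
  infer_instance

lemma gaussE_setOf_eq_bot_or_eq_top (a s : ℝ) : gaussE a s {x | x = ⊥ ∨ x = ⊤} = 0 := by
  rw [gaussE, ← compl_range_coe_real, Measure.map_apply measurable_coe_real_ereal
    EReal.measurableEmbedding_coe.measurableSet_range.compl]
  simp

lemma eq_gaussE_iff [IsProbabilityMeasure ν] {a s : ℝ} :
    ν = gaussE a s ↔ restrictReal ν = gaussianReal a s.toNNReal := by
  refine ⟨fun h ↦ ?_, fun h ↦ ?_⟩
  · rw [h, restrictReal, gaussE, EReal.measurableEmbedding_coe.comap_map]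
  · rw [gaussE, ← h, map_coe_restrictReal_eq_self]
    rw [← compl_range_coe_real,
      prob_compl_eq_zero_iff EReal.measurableEmbedding_coe.measurableSet_range,
      ← Measure.restrict_apply_univ, ← map_coe_restrictReal, h,
      Measure.map_apply measurable_coe_real_ereal .univ]
    simp

lemma gaussE_zero_right (a : ℝ) : gaussE a 0 = Measure.dirac (a : EReal) := by
  rw [gaussE, Real.toNNReal_zero, gaussianReal_zero_var,
    Measure.map_dirac' measurable_coe_real_ereal]

lemma integral_hellingerWeight {r : ℝ} (hr : r ∈ Set.Ioo 0 1) (ν : Measure EReal) :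
    ∫ x, hellingerWeight r x ∂ν = ∫ x : ℝ, hellingerWeight r x ∂(restrictReal ν) := by
  rw [← EReal.measurableEmbedding_coe.integral_map, map_coe_restrictReal,
    setIntegral_eq_integral_of_forall_compl_eq_zero]
  intro x hx
  exact hellingerWeight_eq_zero hr (by rwa [← Set.mem_compl_iff, compl_range_coe_real] at hx)

lemma integrable_hellingerWeight_coe {r : ℝ} (hr : r ∈ Set.Ioo 0 1) (ν : Measure EReal)
    [IsFiniteMeasure ν] : Integrable (fun x : ℝ ↦ hellingerWeight r x) (restrictReal ν) := by
  have hint := (integrable_hellingerWeight hr ν).restrict (s := Set.range Real.toEReal)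
  rw [← map_coe_restrictReal] at hint
  exact hint.comp_measurable measurable_coe_real_ereal

end RestrictReal

/-- `ν₁` and `ν₂` are the laws of a log-likelihood ratio under null and alternative: the densities
`posteriorNull` and `1 - posteriorNull` of `ν₁` and `ν₂` with respect to `ν₁ + ν₂` are equivalently
characterised by this single identity, which is stable under weak limits. -/
def IsLikelihoodPair (ν₁ ν₂ : Measure EReal) : Prop :=
  ν₁.withDensity (fun x ↦ ENNReal.ofReal (1 - posteriorNull x)) =
    ν₂.withDensity fun x ↦ ENNReal.ofReal (posteriorNull x)

/-- The Hellinger transform of null and alternative in terms of the laws `ν₁` and `ν₂` of the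
log-likelihood ratio, i.e. the integral of the Hellinger weight against `ν₁ + ν₂`. -/
def hellingerTransform (ν₁ ν₂ : Measure EReal) (r : ℝ) : ℝ :=
  ∫ x, hellingerWeight r x ∂ν₁ + ∫ x, hellingerWeight r x ∂ν₂

section LikelihoodPair

open scoped BoundedContinuousFunction

variable {ν₁ ν₂ : Measure EReal}

lemma WeakLim.tendsto_hellingerTransform {ρ₁ ρ₂ : ℕ → Measure EReal}
    (h₁ : WeakLim ρ₁ ν₁) (h₂ : WeakLim ρ₂ ν₂) {r : ℝ} (hr : r ∈ Set.Ioo 0 1) :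
    Tendsto (fun n ↦ hellingerTransform (ρ₁ n) (ρ₂ n) r) atTop
      (𝓝 (hellingerTransform ν₁ ν₂ r)) := by
  let w : EReal →ᵇ ℝ := .mkOfCompact ⟨hellingerWeight r, continuous_hellingerWeight hr⟩
  exact (h₁ w).add (h₂ w)

namespace IsLikelihoodPair

lemma restrictReal_eq_withDensity (h : IsLikelihoodPair ν₁ ν₂) :
    restrictReal ν₂ =
      (restrictReal ν₁).withDensity fun x ↦ ENNReal.ofReal (Real.exp x) := by
  let w (x : ℝ) : ENNReal := ENNReal.ofReal (1 + Real.exp x)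
  have hw : Measurable w := by fun_prop
  have hp : Measurable fun x : ℝ ↦ posteriorNull x := by
    simp only [posteriorNull_coe]
    fun_prop
  have key := congr_arg (fun ν ↦ (restrictReal ν).withDensity w) h
  simp only [restrictReal, comap_withDensity EReal.measurableEmbedding_coe,
    Function.comp_def] at key
  rw [← withDensity_mul _ (hp.const_sub 1).ennreal_ofReal hw,
    ← withDensity_mul _ hp.ennreal_ofReal hw] at key
  have hnull : (fun x : ℝ ↦ ENNReal.ofReal (posteriorNull x)) * w = 1 := by
    ext x
    have := Real.exp_pos x
    simp only [Pi.mul_apply, w, posteriorNull_coe, Pi.one_apply]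
    rw [← ENNReal.ofReal_mul (by positivity), inv_mul_cancel₀ (by positivity), ENNReal.ofReal_one]
  have halt : (fun x : ℝ ↦ ENNReal.ofReal (1 - posteriorNull x)) * w =
      fun x ↦ ENNReal.ofReal (Real.exp x) := by
    ext x
    have := Real.exp_pos x
    have hsub : 1 - (1 + Real.exp x)⁻¹ = Real.exp x * (1 + Real.exp x)⁻¹ := by field_simp; ring
    simp only [Pi.mul_apply, w, posteriorNull_coe, hsub]
    rw [← ENNReal.ofReal_mul (by positivity), inv_mul_cancel_right₀ (by positivity)]
  rw [hnull, halt, withDensity_one] at key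
  exact key.symm

lemma integrable_right_iff (h : IsLikelihoodPair ν₁ ν₂) {f : ℝ → ℝ} :
    Integrable f (restrictReal ν₂) ↔ Integrable (fun x ↦ Real.exp x * f x) (restrictReal ν₁) := by
  rw [h.restrictReal_eq_withDensity, integrable_withDensity_iff_integrable_smul' (by fun_prop)
    (Eventually.of_forall fun x ↦ ENNReal.ofReal_lt_top)]
  simp only [ENNReal.toReal_ofReal (Real.exp_pos _).le, smul_eq_mul]

lemma integral_right (h : IsLikelihoodPair ν₁ ν₂) (f : ℝ → ℝ) :
    ∫ x, f x ∂(restrictReal ν₂) = ∫ x, Real.exp x * f x ∂(restrictReal ν₁) := by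
  rw [h.restrictReal_eq_withDensity, integral_withDensity_eq_integral_toReal_smul (by fun_prop)
    (Eventually.of_forall fun x ↦ ENNReal.ofReal_lt_top)]
  simp only [ENNReal.toReal_ofReal (Real.exp_pos _).le, smul_eq_mul]

end IsLikelihoodPair

variable [IsFiniteMeasure ν₁] [IsFiniteMeasure ν₂]

lemma isLikelihoodPair_iff_forall_integral_eq :
    IsLikelihoodPair ν₁ ν₂ ↔ ∀ f : EReal →ᵇ ℝ,
      ∫ x, (1 - posteriorNull x) * f x ∂ν₁ = ∫ x, posteriorNull x * f x ∂ν₂ := by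
  have integral_withDensity {g : EReal → ℝ} (hg : Continuous g) (g0 : ∀ x, 0 ≤ g x)
      (ν : Measure EReal) (f : EReal →ᵇ ℝ) :
      ∫ x, f x ∂ν.withDensity (fun x ↦ ENNReal.ofReal (g x)) = ∫ x, g x * f x ∂ν := by
    rw [integral_withDensity_eq_integral_toReal_smul hg.measurable.ennreal_ofReal
      (Eventually.of_forall fun x ↦ ENNReal.ofReal_lt_top)]
    simp only [ENNReal.toReal_ofReal (g0 _), smul_eq_mul]
  have isFiniteMeasure_withDensity {g : EReal → ℝ} (hg : Continuous g) (ν : Measure EReal)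
      [IsFiniteMeasure ν] : IsFiniteMeasure (ν.withDensity fun x ↦ ENNReal.ofReal (g x)) :=
    isFiniteMeasure_withDensity_ofReal
      ((BoundedContinuousFunction.mkOfCompact ⟨g, hg⟩).integrable ν).2
  have hp := continuous_posteriorNull
  have hq : Continuous fun x ↦ 1 - posteriorNull x := continuous_const.sub hp
  have hq0 (x : EReal) : 0 ≤ 1 - posteriorNull x := sub_nonneg.2 (posteriorNull_le_one x)
  simp only [← integral_withDensity hq hq0, ← integral_withDensity hp posteriorNull_nonneg]
  have := isFiniteMeasure_withDensity hp ν₂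
  have := isFiniteMeasure_withDensity hq ν₁
  exact ⟨fun h f ↦ by rw [h], ext_of_forall_integral_eq_of_IsFiniteMeasure⟩

lemma isLikelihoodPair_map_log {Ω : Type*} [MeasurableSpace Ω] {P : Measure Ω} [IsFiniteMeasure P]
    {L : Ω → ℝ} (hL : Measurable L) (hL0 : ∀ ω, 0 ≤ L ω)
    [IsFiniteMeasure (P.withDensity fun ω ↦ ENNReal.ofReal (L ω))] :
    IsLikelihoodPair (P.map fun ω ↦ ENNReal.log (ENNReal.ofReal (L ω)))
      ((P.withDensity fun ω ↦ ENNReal.ofReal (L ω)).map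
        fun ω ↦ ENNReal.log (ENNReal.ofReal (L ω))) := by
  have hT : Measurable fun ω ↦ ENNReal.log (ENNReal.ofReal (L ω)) :=
    ENNReal.measurable_log.comp hL.ennreal_ofReal
  have hp := continuous_posteriorNull
  refine isLikelihoodPair_iff_forall_integral_eq.2 fun f ↦ ?_
  rw [integral_map hT.aemeasurable, integral_map hT.aemeasurable,
    integral_withDensity_eq_integral_toReal_smul hL.ennreal_ofReal
      (Eventually.of_forall fun x ↦ ENNReal.ofReal_lt_top)]
  · congr 1 with ω
    have := hL0 ω
    rw [posteriorNull_log_ofReal this, ENNReal.toReal_ofReal this, smul_eq_mul]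
    field_simp
    ring
  · exact (hp.mul f.continuous).aestronglyMeasurable
  · exact ((continuous_const.sub hp).mul f.continuous).aestronglyMeasurable

lemma hellingerTransform_map_log {Ω : Type*} [MeasurableSpace Ω] {P : Measure Ω}
    [IsFiniteMeasure P] {L : Ω → ℝ} (hL : Measurable L) (hL0 : ∀ ω, 0 ≤ L ω)
    [IsFiniteMeasure (P.withDensity fun ω ↦ ENNReal.ofReal (L ω))] {r : ℝ}
    (hr : r ∈ Set.Ioo 0 1) :
    hellingerTransform (P.map fun ω ↦ ENNReal.log (ENNReal.ofReal (L ω)))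
      ((P.withDensity fun ω ↦ ENNReal.ofReal (L ω)).map
        fun ω ↦ ENNReal.log (ENNReal.ofReal (L ω))) r = ∫ ω, L ω ^ r ∂P := by
  have hT : Measurable fun ω ↦ ENNReal.log (ENNReal.ofReal (L ω)) :=
    ENNReal.measurable_log.comp hL.ennreal_ofReal
  have hw := continuous_hellingerWeight hr
  have hint (Q : Measure Ω) [IsFiniteMeasure Q] :
      Integrable (fun ω ↦ hellingerWeight r (ENNReal.log (ENNReal.ofReal (L ω)))) Q :=
    (integrable_hellingerWeight hr (Q.map _)).comp_measurable hT
  have hlt : ∀ᵐ ω ∂P, ENNReal.ofReal (L ω) < ⊤ :=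
    Eventually.of_forall fun ω ↦ ENNReal.ofReal_lt_top
  have hintQ := (integrable_withDensity_iff_integrable_smul' hL.ennreal_ofReal hlt).1 (hint _)
  rw [hellingerTransform, integral_map hT.aemeasurable hw.aestronglyMeasurable,
    integral_map hT.aemeasurable hw.aestronglyMeasurable,
    integral_withDensity_eq_integral_toReal_smul hL.ennreal_ofReal hlt,
    ← integral_add (hint P) hintQ]
  congr 1 with ω
  have := hL0 ω
  rw [hellingerWeight_log_ofReal this, ENNReal.toReal_ofReal this, smul_eq_mul]
  field_simp

lemma WeakLim.isLikelihoodPair {ρ₁ ρ₂ : ℕ → Measure EReal} [∀ n, IsFiniteMeasure (ρ₁ n)]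
    [∀ n, IsFiniteMeasure (ρ₂ n)] (h₁ : WeakLim ρ₁ ν₁) (h₂ : WeakLim ρ₂ ν₂)
    (hρ : ∀ n, IsLikelihoodPair (ρ₁ n) (ρ₂ n)) : IsLikelihoodPair ν₁ ν₂ := by
  refine isLikelihoodPair_iff_forall_integral_eq.2 fun f ↦ ?_
  have hp := continuous_posteriorNull
  have lim₁ := h₁ (.mkOfCompact ⟨fun x ↦ (1 - posteriorNull x) * f x,
    (continuous_const.sub hp).mul f.continuous⟩)
  have lim₂ := h₂ (.mkOfCompact ⟨fun x ↦ posteriorNull x * f x, hp.mul f.continuous⟩)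
  refine tendsto_nhds_unique lim₁ (lim₂.congr fun n ↦ ?_)
  exact (isLikelihoodPair_iff_forall_integral_eq.1 (hρ n) f).symm

namespace IsLikelihoodPair

variable {r : ℝ}

lemma integrable_exp_mul_left (h : IsLikelihoodPair ν₁ ν₂) (hr : r ∈ Set.Ioo 0 1) :
    Integrable (fun x ↦ Real.exp (r * x)) (restrictReal ν₁) := by
  simp only [← hellingerWeight_add_exp_mul]
  exact (integrable_hellingerWeight_coe hr ν₁).add
    (h.integrable_right_iff.1 (integrable_hellingerWeight_coe hr ν₂))

lemma mgf_left (h : IsLikelihoodPair ν₁ ν₂) (hr : r ∈ Set.Ioo 0 1) :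
    mgf id (restrictReal ν₁) r = hellingerTransform ν₁ ν₂ r := by
  rw [hellingerTransform, integral_hellingerWeight hr, integral_hellingerWeight hr,
    h.integral_right, ← integral_add (integrable_hellingerWeight_coe hr ν₁)
      (h.integrable_right_iff.1 (integrable_hellingerWeight_coe hr ν₂))]
  simp only [hellingerWeight_add_exp_mul]
  rfl

lemma integrable_exp_mul_right (h : IsLikelihoodPair ν₁ ν₂) (hr : r ∈ Set.Ioo 0 1) :
    Integrable (fun x ↦ Real.exp ((r - 1) * x)) (restrictReal ν₂) := by
  rw [h.integrable_right_iff]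
  convert h.integrable_exp_mul_left hr using 2 with x
  rw [← Real.exp_add]
  ring_nf

lemma mgf_right (h : IsLikelihoodPair ν₁ ν₂) (hr : r ∈ Set.Ioo 0 1) :
    mgf id (restrictReal ν₂) (r - 1) = hellingerTransform ν₁ ν₂ r := by
  rw [mgf, h.integral_right, ← h.mgf_left hr, mgf]
  congr 1 with x
  rw [← Real.exp_add]
  simp only [id]
  ring_nf

end IsLikelihoodPair

end LikelihoodPair

namespace IsLikelihoodPair

variable {ν₁ ν₂ : Measure EReal} [IsProbabilityMeasure ν₁] [IsProbabilityMeasure ν₂]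
  {r a s : ℝ}

lemma left_eq_gaussE_iff (h : IsLikelihoodPair ν₁ ν₂) (hs : 0 ≤ s) :
    ν₁ = gaussE a s ↔
      ∀ r ∈ Set.Ioo 0 1, hellingerTransform ν₁ ν₂ r = Real.exp (a * r + s * r ^ 2 / 2) := by
  have hmgf (r : ℝ) : mgf id (gaussianReal a s.toNNReal) r = Real.exp (a * r + s * r ^ 2 / 2) := by
    rw [mgf_id_gaussianReal, Real.coe_toNNReal s hs]
  rw [eq_gaussE_iff]
  refine ⟨fun hν r hr ↦ ?_, fun hH ↦ eq_of_eqOn_mgf_Ioo one_pos (fun r hr ↦ ?_) (fun r _ ↦ ?_)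
    fun r hr ↦ ?_⟩
  · rw [← h.mgf_left hr, hν, hmgf]
  · exact h.integrable_exp_mul_left hr
  · exact integrable_exp_mul_gaussianReal r
  · rw [h.mgf_left hr, hH r hr, hmgf]

lemma right_eq_gaussE_iff (h : IsLikelihoodPair ν₁ ν₂) (hs : 0 ≤ s) :
    ν₂ = gaussE a s ↔ ∀ r ∈ Set.Ioo 0 1,
      hellingerTransform ν₁ ν₂ r = Real.exp (a * (r - 1) + s * (r - 1) ^ 2 / 2) := by
  have hmgf (r : ℝ) : mgf id (gaussianReal a s.toNNReal) r = Real.exp (a * r + s * r ^ 2 / 2) := by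
    rw [mgf_id_gaussianReal, Real.coe_toNNReal s hs]
  have hadd {r : ℝ} (hr : r ∈ Set.Ioo (-1 : ℝ) 0) : r + 1 ∈ Set.Ioo (0 : ℝ) 1 :=
    ⟨by linarith [hr.1], by linarith [hr.2]⟩
  rw [eq_gaussE_iff]
  refine ⟨fun hν r hr ↦ ?_, fun hH ↦ eq_of_eqOn_mgf_Ioo (neg_lt_zero.2 one_pos) (fun r hr ↦ ?_)
    (fun r _ ↦ ?_) fun r hr ↦ ?_⟩
  · rw [← h.mgf_right hr, hν, hmgf]
  · have := h.integrable_exp_mul_right (hadd hr)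
    rwa [add_sub_cancel_right] at this
  · exact integrable_exp_mul_gaussianReal r
  · have := h.mgf_right (hadd hr)
    rw [hH _ (hadd hr), add_sub_cancel_right] at this
    rw [this, hmgf]

lemma hellingerTransform_pos (h : IsLikelihoodPair ν₁ ν₂) (hν₂ : ν₂ {x | x = ⊥ ∨ x = ⊤} = 0)
    (hr : r ∈ Set.Ioo 0 1) : 0 < hellingerTransform ν₁ ν₂ r := by
  have := isProbabilityMeasure_restrictReal hν₂
  rw [← h.mgf_right hr, mgf_pos_iff]
  exact h.integrable_exp_mul_right hr

lemma tendsto_hellingerTransform_one (h : IsLikelihoodPair ν₁ ν₂)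
    (hν₂ : ν₂ {x | x = ⊥ ∨ x = ⊤} = 0) :
    Tendsto (hellingerTransform ν₁ ν₂) (𝓝[<] 1) (𝓝 1) := by
  have := isProbabilityMeasure_restrictReal hν₂
  have hmgf : mgf id (restrictReal ν₂) 0 = 1 := by simp
  have hhalf : (2⁻¹ : ℝ) ∈ Set.Ioo (0 : ℝ) 1 := ⟨by norm_num, by norm_num⟩
  have hmem : ∀ᶠ r : ℝ in 𝓝[<] 1, r ∈ Set.Ioo 2⁻¹ 1 := Ioo_mem_nhdsLT hhalf.2
  suffices Tendsto (fun r ↦ mgf id (restrictReal ν₂) (r - 1)) (𝓝[<] 1)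
      (𝓝 (mgf id (restrictReal ν₂) 0)) by
    rw [hmgf] at this
    exact this.congr' (hmem.mono fun r hr ↦ h.mgf_right ⟨hhalf.1.trans hr.1, hr.2⟩)
  refine tendsto_integral_filter_of_dominated_convergence
    (fun x ↦ Real.exp ((2⁻¹ - 1) * x) + 1) (Eventually.of_forall fun r ↦ by fun_prop)
    (hmem.mono fun r hr ↦ Eventually.of_forall fun x ↦ ?_)
    ((h.integrable_exp_mul_right hhalf).add (integrable_const 1))
    (Eventually.of_forall fun x ↦ ?_)
  · rw [Real.norm_of_nonneg (Real.exp_pos _).le, id]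
    obtain hx | hx := le_total x 0
    · have : Real.exp ((r - 1) * x) ≤ Real.exp ((2⁻¹ - 1) * x) :=
        Real.exp_le_exp.2 (mul_le_mul_of_nonpos_right (by linarith [hr.1]) hx)
      linarith
    · have : Real.exp ((r - 1) * x) ≤ 1 :=
        Real.exp_le_one_iff.2 (mul_nonpos_of_nonpos_of_nonneg (by linarith [hr.2]) hx)
      linarith [Real.exp_pos ((2⁻¹ - 1) * x)]
  · have hcont : Continuous fun r : ℝ ↦ Real.exp ((r - 1) * id x) := by fun_prop
    simpa using hcont.continuousWithinAt (x := 1) (s := Set.Iio 1) |>.tendsto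

end IsLikelihoodPair

/-! ### The detection model -/

section Mixture

variable {α : Type*} [MeasurableSpace α] {P μ : Measure α} {e : ℝ}

lemma measurable_dmuP : Measurable (dmuP μ P) :=
  (Measure.measurable_rnDeriv μ P).ennreal_toReal

lemma setIntegral_const_mul_dmuP [SigmaFinite μ] [SigmaFinite P] (h : μ ≪ P) {t : Set α}
    (ht : MeasurableSet t) : ∫ a in t, e * dmuP μ P a ∂P = e * μ.real t := by
  rw [integral_const_mul]
  congr 1
  exact Measure.setIntegral_toReal_rnDeriv' h ht

variable [IsProbabilityMeasure P] [IsProbabilityMeasure μ]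

lemma integral_const_mul_dmuP (h : μ ≪ P) : ∫ a, e * dmuP μ P a ∂P = e := by
  simpa using setIntegral_const_mul_dmuP (e := e) h MeasurableSet.univ

lemma isSubdensity_const_mul_dmuP (h : μ ≪ P) (he : e ∈ Set.Icc 0 1) :
    IsSubdensity P fun a ↦ e * dmuP μ P a where
  measurable := measurable_dmuP.const_mul e
  nonneg _ := mul_nonneg he.1 ENNReal.toReal_nonneg
  integrable := Measure.integrable_toReal_rnDeriv.const_mul e
  integral_le_one := (integral_const_mul_dmuP h).trans_le he.2

lemma isProbabilityMeasure_qmix (he : e ∈ Set.Icc 0 1) : IsProbabilityMeasure (Qmix P μ e) := by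
  refine ⟨?_⟩
  simp only [Qmix, Measure.add_apply, Measure.smul_apply, measure_univ, smul_eq_mul, mul_one]
  rw [← ENNReal.ofReal_add (by linarith [he.2]) he.1, sub_add_cancel, ENNReal.ofReal_one]

lemma qmix_eq_withDensity (h : μ ≪ P) (he : e ∈ Set.Icc 0 1) :
    Qmix P μ e = P.withDensity fun a ↦ ENNReal.ofReal (1 + (e * dmuP μ P a - e)) := by
  have hdensity : (fun a ↦ ENNReal.ofReal (1 + (e * dmuP μ P a - e))) =ᵐ[P]
      (fun _ ↦ ENNReal.ofReal (1 - e)) + ENNReal.ofReal e • μ.rnDeriv P := by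
    filter_upwards [Measure.rnDeriv_lt_top μ P] with a ha
    have hnonneg : 0 ≤ dmuP μ P a := ENNReal.toReal_nonneg
    simp only [Pi.add_apply, Pi.smul_apply, smul_eq_mul]
    rw [show 1 + (e * dmuP μ P a - e) = (1 - e) + e * dmuP μ P a by ring,
      ENNReal.ofReal_add (by linarith [he.2]) (mul_nonneg he.1 hnonneg),
      ENNReal.ofReal_mul he.1, dmuP, ENNReal.ofReal_toReal ha.ne]
  rw [withDensity_congr_ae hdensity, withDensity_add_left measurable_const, withDensity_const,
    withDensity_smul _ (Measure.measurable_rnDeriv _ _), Measure.withDensity_rnDeriv_eq _ _ h, Qmix]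

lemma rnDeriv_qmix (h : μ ≪ P) (he : e ∈ Set.Icc 0 1) :
    (Qmix P μ e).rnDeriv P =ᵐ[P] fun a ↦ ENNReal.ofReal (1 + (e * dmuP μ P a - e)) := by
  rw [qmix_eq_withDensity h he]
  exact Measure.rnDeriv_withDensity _
    (((measurable_dmuP.const_mul e).sub_const e).const_add 1).ennreal_ofReal

lemma elr_qmix (h : μ ≪ P) (he : e ∈ Set.Icc 0 1) :
    elr (Qmix P μ e) P =ᵐ[P] fun a ↦ ENNReal.ofReal (1 + (e * dmuP μ P a - e)) := by
  have := isProbabilityMeasure_qmix (P := P) (μ := μ) he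
  filter_upwards [Measure.rnDeriv_eq_div_rnDeriv_add (Qmix P μ e) P, rnDeriv_qmix h he] with a h₁ h₂
  rw [elr, add_comm, ← h₁, h₂]

end Mixture

lemma log_prod {κ : Type*} (s : Finset κ) (f : κ → ENNReal) :
    ENNReal.log (∏ i ∈ s, f i) = ∑ i ∈ s, ENNReal.log (f i) := by
  classical
  induction s using Finset.induction_on with
  | empty => simp
  | insert a s ha ih => rw [Finset.prod_insert ha, Finset.sum_insert ha, ENNReal.log_mul_add, ih]

lemma pi_withDensity {κ : Type*} [Fintype κ] {α : κ → Type*} [∀ i, MeasurableSpace (α i)]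
    (P : ∀ i, Measure (α i)) [∀ i, IsProbabilityMeasure (P i)] {f : ∀ i, α i → ENNReal}
    (hf : ∀ i, Measurable (f i)) [∀ i, SigmaFinite ((P i).withDensity (f i))] :
    Measure.pi (fun i ↦ (P i).withDensity (f i)) =
      (Measure.pi P).withDensity fun y ↦ ∏ i, f i (y i) := by
  refine Measure.pi_eq fun s hs ↦ ?_
  have hmeas (i : κ) : Measurable ((s i).indicator (f i)) := (hf i).indicator (hs i)
  have hindicator (y : ∀ i, α i) : (Set.univ.pi s).indicator (fun y ↦ ∏ i, f i (y i)) y =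
      ∏ i, (s i).indicator (f i) (y i) := by
    by_cases hy : y ∈ Set.univ.pi s
    · rw [Set.indicator_of_mem hy]
      exact Finset.prod_congr rfl fun i _ ↦ (Set.indicator_of_mem (hy i trivial) _).symm
    · rw [Set.indicator_of_notMem hy]
      obtain ⟨i, hi⟩ : ∃ i, y i ∉ s i := by simpa using hy
      exact (Finset.prod_eq_zero (Finset.mem_univ i) (Set.indicator_of_notMem hi _)).symm
  have hindep := iIndepFun_pi (μ := P) fun i ↦ (hmeas i).aemeasurable
  rw [withDensity_apply _ (MeasurableSet.univ_pi hs),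
    ← lintegral_indicator (MeasurableSet.univ_pi hs)]
  simp only [hindicator]
  rw [lintegral_prod_eq_prod_lintegral_of_indepFun _ _ hindep
    fun i ↦ (hmeas i).comp (measurable_pi_apply i)]
  refine Finset.prod_congr rfl fun i _ ↦ ?_
  rw [withDensity_apply _ (hs i), ← lintegral_indicator (hs i)]
  exact (measurePreserving_eval P i).lintegral_comp (hmeas i)

section DetectionModel

variable {α : Type*} [MeasurableSpace α] {P μ : ℕ → ℕ → Measure α} {ε : ℕ → ℕ → ℝ} {k : ℕ → ℕ}

/-- The product over the `n`-th row of the densities `1 + W - ∫ W dP`; for `W = ε • dμ/dP` this is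
the likelihood ratio of `Q_(n)` with respect to `P_(n)`. -/
def likelihoodRatio (P : ℕ → ℕ → Measure α) (k : ℕ → ℕ) (W : ℕ → ℕ → α → ℝ) (n : ℕ)
    (y : Fin (k n) → α) : ℝ :=
  ∏ i : Fin (k n), (1 + (W n i (y i) - (P n i)[W n i]))

/-- The contribution `ε • dμ/dP` of the signals to the densities of the alternative. -/
def signalDensity (P μ : ℕ → ℕ → Measure α) (ε : ℕ → ℕ → ℝ) (n i : ℕ) (a : α) : ℝ :=
  ε n i * dmuP (μ n i) (P n i) a

/-- The standing assumptions of the detection problem: signals are dominated by noise and are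
uniformly sparse. -/
structure IsDetectionModel (P μ : ℕ → ℕ → Measure α) (ε : ℕ → ℕ → ℝ) (k : ℕ → ℕ) : Prop where
  absolutelyContinuous : ∀ n i, μ n i ≪ P n i
  mem_Icc : ∀ n i, ε n i ∈ Set.Icc (0 : ℝ) 1
  tendsto_iSup : Tendsto (fun n ↦ ⨆ i : Fin (k n), ε n i) atTop (𝓝 0)

namespace IsNullArray

variable {W : ℕ → ℕ → α → ℝ}

lemma likelihoodRatio_nonneg (hW : IsNullArray P k W) (n : ℕ) (y : Fin (k n) → α) :
    0 ≤ likelihoodRatio P k W n y :=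
  Finset.prod_nonneg fun i _ ↦ by linarith [(hW.isSubdensity n i).neg_one_le_sub (y i)]

lemma measurable_likelihoodRatio (hW : IsNullArray P k W) (n : ℕ) :
    Measurable (likelihoodRatio P k W n) :=
  Finset.measurable_prod _ fun i _ ↦
    (((hW.isSubdensity n i).measurable.comp (measurable_pi_apply i)).sub_const _).const_add 1

lemma integral_likelihoodRatio_rpow [∀ n i, IsProbabilityMeasure (P n i)]
    (hW : IsNullArray P k W) (r : ℝ) (n : ℕ) :
    ∫ y, likelihoodRatio P k W n y ^ r ∂Pprod P k n = hellingerProd P k W r n := by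
  refine Eq.trans ?_ (integral_pprod_prod n fun i a ↦ (1 + (W n i a - (P n i)[W n i])) ^ r)
  congr 1 with y
  exact (Real.finsetProd_rpow _ _
    (fun i _ ↦ by linarith [(hW.isSubdensity n i).neg_one_le_sub (y i)]) r).symm

end IsNullArray

variable [∀ n i, IsProbabilityMeasure (P n i)]

lemma ae_pprod_forall (n : ℕ) {p : ℕ → α → Prop} (h : ∀ i, ∀ᵐ a ∂P n i, p i a) :
    ∀ᵐ y ∂Pprod P k n, ∀ i : Fin (k n), p i (y i) :=
  ae_all_iff.2 fun i ↦
    (Measure.quasiMeasurePreserving_eval (fun i : Fin (k n) ↦ P n i) i).ae (h i)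

variable [∀ n i, IsProbabilityMeasure (μ n i)]

namespace IsDetectionModel

lemma integral_signalDensity (hM : IsDetectionModel P μ ε k) (n i : ℕ) :
    (P n i)[signalDensity P μ ε n i] = ε n i :=
  integral_const_mul_dmuP (hM.absolutelyContinuous n i)

lemma isNullArray (hM : IsDetectionModel P μ ε k) : IsNullArray P k (signalDensity P μ ε) where
  isSubdensity n i := isSubdensity_const_mul_dmuP (hM.absolutelyContinuous n i) (hM.mem_Icc n i)
  uniformlySmall δ hδ := by
    filter_upwards [hM.tendsto_iSup.eventually_le_const hδ] with n hn i hi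
    rw [hM.integral_signalDensity, Real.norm_of_nonneg (hM.mem_Icc n i).1]
    exact (le_ciSup (f := fun i : Fin (k n) ↦ ε n i) (Set.finite_range _).bddAbove
      ⟨i, Finset.mem_range.1 hi⟩).trans hn

lemma I1_eq_tailMeanSum (hM : IsDetectionModel P μ ε k) (x : ℝ) (n : ℕ) :
    I1 P μ ε k x n = tailMeanSum P k (signalDensity P μ ε) x n :=
  Finset.sum_congr rfl fun i _ ↦ (setIntegral_const_mul_dmuP (hM.absolutelyContinuous n i)
    ((hM.isNullArray.isSubdensity n i).measurableSet_lt x)).symm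

lemma I2_eq_truncVarSum (hM : IsDetectionModel P μ ε k) (x : ℝ) (n : ℕ) :
    I2 P μ ε k x n = truncVarSum P k (signalDensity P μ ε) x n := by
  refine Finset.sum_congr rfl fun i _ ↦ ?_
  have hW := hM.isNullArray.isSubdensity n i
  rw [hM.integral_signalDensity, ← integral_indicator (hW.measurableSet_le x)]
  have hint : Integrable ({a | signalDensity P μ ε n i a ≤ x}.indicator
      fun a ↦ signalDensity P μ ε n i a ^ 2) (P n i) :=
    (integrable_indicator_iff (hW.measurableSet_le x)).2 (hW.integrableOn_le_pow_two x)
  have hconst : ε n i ^ 2 = ∫ _, ε n i ^ 2 ∂P n i := by simp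
  rw [← integral_const_mul, hconst, ← integral_sub hint (integrable_const _), ← hconst]
  congr 1 with a
  by_cases ha : signalDensity P μ ε n i a ≤ x
  · rw [Set.indicator_of_mem (s := {a | signalDensity P μ ε n i a ≤ x}) (by simpa using ha),
      if_pos (by simpa only [signalDensity] using ha), signalDensity]
    ring
  · rw [Set.indicator_of_notMem (s := {a | signalDensity P μ ε n i a ≤ x}) (by simpa using ha),
      if_neg (by simpa only [signalDensity] using ha)]
    ring

lemma zstat_eq_centredSum (hM : IsDetectionModel P μ ε k) :
    Zstat P μ ε k = centredSum P k (signalDensity P μ ε) := by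
  ext n y
  simp only [Zstat, centredSum, hM.integral_signalDensity]
  simp only [signalDensity, mul_sub_one]

lemma qprod_eq_withDensity (hM : IsDetectionModel P μ ε k) (n : ℕ) :
    Qprod P μ ε k n = (Pprod P k n).withDensity
      fun y ↦ ENNReal.ofReal (likelihoodRatio P k (signalDensity P μ ε) n y) := by
  have hqmix (i : Fin (k n)) :=
    qmix_eq_withDensity (hM.absolutelyContinuous n i) (hM.mem_Icc n i)
  have (i : Fin (k n)) : IsProbabilityMeasure ((P n i).withDensity fun a ↦
      ENNReal.ofReal (1 + (ε n i * dmuP (μ n i) (P n i) a - ε n i))) :=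
    hqmix i ▸ isProbabilityMeasure_qmix (hM.mem_Icc n i)
  simp only [Qprod, Pprod, hqmix]
  rw [pi_withDensity _ fun i ↦
    (((measurable_dmuP.const_mul _).sub_const _).const_add _).ennreal_ofReal]
  congr 1 with y
  rw [likelihoodRatio, ENNReal.ofReal_prod_of_nonneg fun i _ ↦ by
    linarith [(hM.isNullArray.isSubdensity n i).neg_one_le_sub (y i)]]
  simp only [hM.integral_signalDensity]
  rfl

lemma tstat_ae_eq (hM : IsDetectionModel P μ ε k) (n : ℕ) :
    Tstat P μ ε k n =ᵐ[Pprod P k n] fun y ↦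
      ENNReal.log (ENNReal.ofReal (likelihoodRatio P k (signalDensity P μ ε) n y)) := by
  filter_upwards [ae_pprod_forall n fun i ↦
    elr_qmix (hM.absolutelyContinuous n i) (hM.mem_Icc n i)] with y hy
  rw [likelihoodRatio, ENNReal.ofReal_prod_of_nonneg fun i _ ↦ by
    linarith [(hM.isNullArray.isSubdensity n i).neg_one_le_sub (y i)], log_prod]
  simp only [Tstat, hy, hM.integral_signalDensity]
  rfl

lemma lawP_eq_map (hM : IsDetectionModel P μ ε k) (n : ℕ) :
    lawP P μ ε k n = (Pprod P k n).map fun y ↦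
      ENNReal.log (ENNReal.ofReal (likelihoodRatio P k (signalDensity P μ ε) n y)) :=
  Measure.map_congr (hM.tstat_ae_eq n)

lemma lawQ_eq_map (hM : IsDetectionModel P μ ε k) (n : ℕ) :
    lawQ P μ ε k n = ((Pprod P k n).withDensity fun y ↦
      ENNReal.ofReal (likelihoodRatio P k (signalDensity P μ ε) n y)).map fun y ↦
        ENNReal.log (ENNReal.ofReal (likelihoodRatio P k (signalDensity P μ ε) n y)) := by
  rw [lawQ, hM.qprod_eq_withDensity]
  exact Measure.map_congr ((withDensity_absolutelyContinuous _ _).ae_le (hM.tstat_ae_eq n))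

lemma isProbabilityMeasure_withDensity_likelihoodRatio (hM : IsDetectionModel P μ ε k) (n : ℕ) :
    IsProbabilityMeasure ((Pprod P k n).withDensity fun y ↦
      ENNReal.ofReal (likelihoodRatio P k (signalDensity P μ ε) n y)) := by
  have (i : Fin (k n)) := isProbabilityMeasure_qmix (P := P n i) (μ := μ n i) (hM.mem_Icc n i)
  rw [← hM.qprod_eq_withDensity, Qprod]
  infer_instance

lemma isLikelihoodPair_laws (hM : IsDetectionModel P μ ε k) (n : ℕ) :
    IsLikelihoodPair (lawP P μ ε k n) (lawQ P μ ε k n) := by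
  have := hM.isProbabilityMeasure_withDensity_likelihoodRatio n
  rw [hM.lawP_eq_map, hM.lawQ_eq_map]
  exact isLikelihoodPair_map_log (hM.isNullArray.measurable_likelihoodRatio n)
    (hM.isNullArray.likelihoodRatio_nonneg n)

lemma hellingerTransform_laws (hM : IsDetectionModel P μ ε k) {r : ℝ} (hr : r ∈ Set.Ioo 0 1)
    (n : ℕ) : hellingerTransform (lawP P μ ε k n) (lawQ P μ ε k n) r =
      hellingerProd P k (signalDensity P μ ε) r n := by
  have := hM.isProbabilityMeasure_withDensity_likelihoodRatio n
  rw [hM.lawP_eq_map, hM.lawQ_eq_map, hellingerTransform_map_log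
    (hM.isNullArray.measurable_likelihoodRatio n) (hM.isNullArray.likelihoodRatio_nonneg n) hr,
    hM.isNullArray.integral_likelihoodRatio_rpow]

variable {ν₁ ν₂ : Measure EReal}

lemma isLikelihoodPair [IsFiniteMeasure ν₁] [IsFiniteMeasure ν₂] (hM : IsDetectionModel P μ ε k)
    (h₁ : WeakLim (lawP P μ ε k) ν₁) (h₂ : WeakLim (lawQ P μ ε k) ν₂) : IsLikelihoodPair ν₁ ν₂ := by
  have hP (n : ℕ) : IsFiniteMeasure (lawP P μ ε k n) := by
    unfold lawP
    infer_instance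
  have hQ (n : ℕ) : IsFiniteMeasure (lawQ P μ ε k n) := by
    have := hM.isProbabilityMeasure_withDensity_likelihoodRatio n
    rw [hM.lawQ_eq_map]
    infer_instance
  exact WeakLim.isLikelihoodPair h₁ h₂ hM.isLikelihoodPair_laws

lemma tendsto_hellingerProd (hM : IsDetectionModel P μ ε k) (h₁ : WeakLim (lawP P μ ε k) ν₁)
    (h₂ : WeakLim (lawQ P μ ε k) ν₂) {r : ℝ} (hr : r ∈ Set.Ioo 0 1) :
    Tendsto (hellingerProd P k (signalDensity P μ ε) r) atTop
      (𝓝 (hellingerTransform ν₁ ν₂ r)) := by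
  simpa only [hM.hellingerTransform_laws hr] using WeakLim.tendsto_hellingerTransform h₁ h₂ hr

end IsDetectionModel

end DetectionModel

/-! ### Row maxima -/

lemma tendsto_measure_ge_of_ae_le_add {Ω : ℕ → Type*} [∀ n, MeasurableSpace (Ω n)]
    {ρ : ∀ n, Measure (Ω n)} {f g : ∀ n, Ω n → ℝ}
    (hfg : ∀ η, 0 < η → ∀ᶠ n in atTop, ∀ᵐ y ∂ρ n, f n y ≤ g n y + η)
    (hg : ∀ δ, 0 < δ → Tendsto (fun n ↦ ρ n {y | δ ≤ g n y}) atTop (𝓝 0)) (δ : ℝ) (hδ : 0 < δ) :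
    Tendsto (fun n ↦ ρ n {y | δ ≤ f n y}) atTop (𝓝 0) := by
  refine tendsto_of_tendsto_of_tendsto_of_le_of_le' tendsto_const_nhds (hg _ (half_pos hδ))
    (.of_forall fun _ ↦ zero_le) ?_
  filter_upwards [hfg _ (half_pos hδ)] with n hn
  refine measure_mono_ae ?_
  filter_upwards [hn] with y hy (hδf : δ ≤ f n y)
  exact show δ / 2 ≤ g n y by linarith

section Maxima

variable {α : Type*} [MeasurableSpace α] {P : ℕ → ℕ → Measure α} {k : ℕ → ℕ} {W : ℕ → ℕ → α → ℝ}

lemma exists_le_iff_le_ciSup {κ : Type*} [Finite κ] {f : κ → ℝ} {δ : ℝ} (hδ : 0 < δ) :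
    (∃ i, δ ≤ f i) ↔ δ ≤ ⨆ i, f i := by
  refine ⟨fun ⟨i, hi⟩ ↦ hi.trans (le_ciSup (Set.finite_range f).bddAbove i), fun h ↦ ?_⟩
  have : Nonempty κ := by
    by_contra hempty
    rw [not_nonempty_iff] at hempty
    rw [Real.iSup_of_isEmpty] at h
    exact h.not_gt hδ
  obtain ⟨i, hi⟩ := exists_eq_ciSup_of_finite (f := f)
  exact ⟨i, h.trans_eq hi.symm⟩

namespace IsNullArray

lemma measurableSet_ge (hW : IsNullArray P k W) (δ : ℝ) (n i : ℕ) :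
    MeasurableSet {a | δ ≤ W n i a} :=
  measurableSet_le measurable_const (hW.isSubdensity n i).measurable

lemma uniformlySmall_measureReal_ge (hW : IsNullArray P k W) {δ : ℝ} (hδ : 0 < δ) :
    UniformlySmall atTop (fun n ↦ Finset.range (k n))
      fun n i ↦ -(P n i).real {a | δ ≤ W n i a} := by
  intro η hη
  filter_upwards [hW.eventually_integral_le (δ := δ * η) (by positivity)] with n hn i hi
  rw [norm_neg, Real.norm_of_nonneg measureReal_nonneg]
  have hWi := hW.isSubdensity n i
  exact le_of_mul_le_mul_left ((mul_meas_ge_le_integral_of_nonneg (.of_forall hWi.nonneg)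
    hWi.integrable δ).trans (hn i hi)) hδ

variable [∀ n i, IsProbabilityMeasure (P n i)]

lemma one_sub_measureReal_le_iSup (hW : IsNullArray P k W) {δ : ℝ} (hδ : 0 < δ) (n : ℕ) :
    1 - (Pprod P k n).real {y | δ ≤ ⨆ i : Fin (k n), W n i (y i)} =
      ∏ i ∈ Finset.range (k n), (1 + -(P n i).real {a | δ ≤ W n i a}) := by
  have hcompl : {y | δ ≤ ⨆ i : Fin (k n), W n i (y i)} =
      (Set.univ.pi fun i : Fin (k n) ↦ {a | δ ≤ W n i a}ᶜ)ᶜ := by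
    ext y
    simp [← exists_le_iff_le_ciSup hδ]
  rw [hcompl, probReal_compl_eq_one_sub
    (.univ_pi fun i : Fin (k n) ↦ (hW.measurableSet_ge δ n i).compl), sub_sub_cancel,
    measureReal_def, Pprod, Measure.pi_pi, ENNReal.toReal_prod, Finset.prod_range]
  refine Finset.prod_congr rfl fun i _ ↦ ?_
  rw [← measureReal_def, probReal_compl_eq_one_sub (hW.measurableSet_ge δ n i), sub_eq_add_neg]

lemma tendsto_measure_le_iSup_iff (hW : IsNullArray P k W) {δ : ℝ} (hδ : 0 < δ) :
    Tendsto (fun n ↦ Pprod P k n {y | δ ≤ ⨆ i : Fin (k n), W n i (y i)}) atTop (𝓝 0) ↔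
      Tendsto (tailProbSum P k W δ) atTop (𝓝 0) := by
  have hprod : Tendsto (fun n ↦ ∏ i ∈ Finset.range (k n), (1 + -(P n i).real {a | δ ≤ W n i a}))
      atTop (𝓝 (Real.exp (-0))) ↔ Tendsto (fun n ↦ -tailProbSum P k W δ n) atTop (𝓝 (-0)) := by
    simp only [tailProbSum, ← Finset.sum_neg_distrib]
    refine tendsto_prod_one_add_iff (hW.uniformlySmall_measureReal_ge hδ) fun n ↦ ?_
    simp only [abs_neg, Finset.sum_neg_distrib, abs_of_nonneg measureReal_nonneg,
      abs_of_nonneg (Finset.sum_nonneg fun _ _ ↦ measureReal_nonneg)]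
  rw [tendsto_neg_iff, neg_zero, Real.exp_zero] at hprod
  simp only [← hW.one_sub_measureReal_le_iSup hδ] at hprod
  rw [← hprod, ← ENNReal.tendsto_toReal_iff (fun n ↦ measure_ne_top _ _) ENNReal.zero_ne_top,
    ENNReal.toReal_zero]
  simpa only [sub_zero, measureReal_def] using (tendsto_const_sub_iff (1 : ℝ) (c := 0)).symm

end IsNullArray

namespace IsDetectionModel

variable {μ : ℕ → ℕ → Measure α} {ε : ℕ → ℕ → ℝ} [∀ n i, IsProbabilityMeasure (P n i)]
  [∀ n i, IsProbabilityMeasure (μ n i)]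

lemma eventually_abs_maxQ_sub_maxMu_le (hM : IsDetectionModel P μ ε k)
    (hk : ∀ᶠ n in atTop, k n ≠ 0) {η : ℝ} (hη : 0 < η) :
    ∀ᶠ n in atTop, ∀ᵐ y ∂Pprod P k n, |maxQ P μ ε k n y - 1 - maxMu P μ ε k n y| ≤ η := by
  filter_upwards [hM.isNullArray.uniformlySmall η hη, hk] with n hn hkn
  filter_upwards [ae_pprod_forall n fun i ↦
    rnDeriv_qmix (hM.absolutelyContinuous n i) (hM.mem_Icc n i)] with y hy
  have : NeZero (k n) := ⟨hkn⟩
  have hε (i : Fin (k n)) : ε n i ≤ η := by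
    simpa only [hM.integral_signalDensity, Real.norm_of_nonneg (hM.mem_Icc n i).1] using
      hn i (Finset.mem_range.2 i.2)
  have hnonneg (i : Fin (k n)) : 0 ≤ 1 + (ε n i * dmuP (μ n i) (P n i) (y i) - ε n i) := by
    have := (hM.isNullArray.isSubdensity n i).neg_one_le_sub (y i)
    rw [hM.integral_signalDensity, signalDensity] at this
    linarith
  have hmaxMu (i : Fin (k n)) := le_ciSup
    (f := fun i : Fin (k n) ↦ ε n i * dmuP (μ n i) (P n i) (y i)) (Set.finite_range _).bddAbove i
  have hmaxQ (i : Fin (k n)) := le_ciSup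
    (f := fun i : Fin (k n) ↦ 1 + (ε n i * dmuP (μ n i) (P n i) (y i) - ε n i))
    (Set.finite_range _).bddAbove i
  simp only [maxQ, maxMu, hy, ENNReal.toReal_ofReal (hnonneg _)]
  rw [abs_le, neg_le_sub_iff_le_add, sub_le_iff_le_add, sub_le_iff_le_add]
  exact ⟨ciSup_le fun i ↦ by linarith [hmaxQ i, hε i],
    ciSup_le fun i ↦ by linarith [hmaxMu i, (hM.mem_Icc n i).1]⟩

lemma tendsto_measure_le_abs_maxQ_sub_one_iff (hM : IsDetectionModel P μ ε k)
    (hk : ∀ᶠ n in atTop, k n ≠ 0) :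
    (∀ δ, 0 < δ → Tendsto (fun n ↦ Pprod P k n {y | δ ≤ |maxQ P μ ε k n y - 1|}) atTop (𝓝 0)) ↔
      ∀ δ, 0 < δ → Tendsto (fun n ↦ Pprod P k n {y | δ ≤ maxMu P μ ε k n y}) atTop (𝓝 0) := by
  have hmaxMu (n : ℕ) (y : Fin (k n) → α) : 0 ≤ maxMu P μ ε k n y :=
    Real.iSup_nonneg fun i ↦ (hM.isNullArray.isSubdensity n i).nonneg (y i)
  refine ⟨tendsto_measure_ge_of_ae_le_add fun η hη ↦ ?_,
    tendsto_measure_ge_of_ae_le_add fun η hη ↦ ?_⟩ <;>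
    filter_upwards [hM.eventually_abs_maxQ_sub_maxMu_le hk hη] with n hn <;>
    filter_upwards [hn] with y hy <;>
    obtain ⟨hlower, hupper⟩ := abs_le.1 hy
  · linarith [le_abs_self (maxQ P μ ε k n y - 1)]
  · exact abs_le.2 ⟨by linarith [hmaxMu n y], by linarith⟩

lemma tendsto_measure_le_maxMu_iff (hM : IsDetectionModel P μ ε k) {δ : ℝ} (hδ : 0 < δ) :
    Tendsto (fun n ↦ Pprod P k n {y | δ ≤ maxMu P μ ε k n y}) atTop (𝓝 0) ↔
      Tendsto (tailProbSum P k (signalDensity P μ ε) δ) atTop (𝓝 0) :=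
  hM.isNullArray.tendsto_measure_le_iSup_iff hδ

end IsDetectionModel

end Maxima

/-! ### Gaussian limits -/

namespace IsLikelihoodPair

variable {ν₁ ν₂ : Measure EReal} [IsProbabilityMeasure ν₁] [IsProbabilityMeasure ν₂] {a s : ℝ}

lemma eq_neg_half_of_left_eq_gaussE (h : IsLikelihoodPair ν₁ ν₂)
    (hreal : ν₂ {x | x = ⊥ ∨ x = ⊤} = 0) (hs : 0 ≤ s) (hν₁ : ν₁ = gaussE a s) : a = -s / 2 := by
  have hcont : Continuous fun r : ℝ ↦ Real.exp (a * r + s * r ^ 2 / 2) := by fun_prop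
  have hlim : Tendsto (hellingerTransform ν₁ ν₂) (𝓝[<] 1)
      (𝓝 (Real.exp (a * 1 + s * 1 ^ 2 / 2))) := by
    refine ((hcont.tendsto 1).mono_left nhdsWithin_le_nhds).congr' ?_
    filter_upwards [Ioo_mem_nhdsLT (zero_lt_one (α := ℝ))] with r hr
    exact ((h.left_eq_gaussE_iff hs).1 hν₁ r hr).symm
  have hexp := tendsto_nhds_unique hlim (h.tendsto_hellingerTransform_one hreal)
  linarith [Real.exp_eq_one_iff _ |>.1 hexp]

lemma left_eq_gaussE_neg_half_iff (h : IsLikelihoodPair ν₁ ν₂) (hs : 0 ≤ s) :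
    ν₁ = gaussE (-s / 2) s ↔
      ∀ r ∈ Set.Ioo 0 1, hellingerTransform ν₁ ν₂ r = Real.exp (-(s * (r * (1 - r) / 2))) := by
  rw [h.left_eq_gaussE_iff hs]
  ring_nf

lemma right_eq_gaussE_half_iff (h : IsLikelihoodPair ν₁ ν₂) (hs : 0 ≤ s) :
    ν₂ = gaussE (s / 2) s ↔
      ∀ r ∈ Set.Ioo 0 1, hellingerTransform ν₁ ν₂ r = Real.exp (-(s * (r * (1 - r) / 2))) := by
  rw [h.right_eq_gaussE_iff hs]
  ring_nf

lemma left_eq_gaussE_iff_right_eq_gaussE (h : IsLikelihoodPair ν₁ ν₂) (hs : 0 ≤ s) :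
    ν₁ = gaussE (-s / 2) s ↔ ν₂ = gaussE (s / 2) s :=
  (h.left_eq_gaussE_neg_half_iff hs).trans (h.right_eq_gaussE_half_iff hs).symm

lemma right_setOf_eq_bot_or_eq_top (h : IsLikelihoodPair ν₁ ν₂) (hs : 0 ≤ s)
    (hν₁ : ν₁ = gaussE (-s / 2) s) : ν₂ {x | x = ⊥ ∨ x = ⊤} = 0 := by
  rw [(h.left_eq_gaussE_iff_right_eq_gaussE hs).1 hν₁]
  exact gaussE_setOf_eq_bot_or_eq_top _ _

lemma exists_left_eq_gaussE_iff_exists (h : IsLikelihoodPair ν₁ ν₂) :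
    (∃ s, 0 ≤ s ∧ ν₁ = gaussE (-s / 2) s) ↔
      ν₂ {x | x = ⊥ ∨ x = ⊤} = 0 ∧ ∃ a s, 0 ≤ s ∧ ν₁ = gaussE a s := by
  refine ⟨fun ⟨s, hs, hν₁⟩ ↦ ⟨h.right_setOf_eq_bot_or_eq_top hs hν₁, _, s, hs, hν₁⟩, ?_⟩
  rintro ⟨hreal, a, s, hs, hν₁⟩
  obtain rfl := h.eq_neg_half_of_left_eq_gaussE hreal hs hν₁
  exact ⟨s, hs, hν₁⟩

lemma gaussE_and_gaussE_or_dirac_iff (h : IsLikelihoodPair ν₁ ν₂) :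
    ((∃ a₁ s₁ a₂ s₂ : ℝ, 0 < s₁ ∧ 0 < s₂ ∧ ν₁ = gaussE a₁ s₁ ∧ ν₂ = gaussE a₂ s₂) ∨
        (ν₁ = Measure.dirac ((0 : ℝ) : EReal) ∧ ν₂ = Measure.dirac ((0 : ℝ) : EReal))) ↔
      ∃ s, 0 ≤ s ∧ ν₁ = gaussE (-s / 2) s := by
  constructor
  · rintro (⟨a₁, s₁, a₂, s₂, hs₁, -, hν₁, hν₂⟩ | ⟨hν₁, -⟩)
    · exact h.exists_left_eq_gaussE_iff_exists.2
        ⟨hν₂ ▸ gaussE_setOf_eq_bot_or_eq_top a₂ s₂, a₁, s₁, hs₁.le, hν₁⟩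
    · exact ⟨0, le_rfl, by rw [hν₁, neg_zero, zero_div, gaussE_zero_right]⟩
  · rintro ⟨s, hs, hν₁⟩
    have hν₂ := (h.left_eq_gaussE_iff_right_eq_gaussE hs).1 hν₁
    obtain rfl | hpos := hs.eq_or_lt
    · rw [neg_zero, zero_div, gaussE_zero_right] at hν₁
      rw [zero_div, gaussE_zero_right] at hν₂
      exact .inr ⟨hν₁, hν₂⟩
    · exact .inl ⟨_, s, _, s, hpos, hpos, hν₁, hν₂⟩

end IsLikelihoodPair

namespace IsDetectionModel

variable {α : Type*} [MeasurableSpace α] {P μ : ℕ → ℕ → Measure α} {ε : ℕ → ℕ → ℝ} {k : ℕ → ℕ}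
  [∀ n i, IsProbabilityMeasure (P n i)] [∀ n i, IsProbabilityMeasure (μ n i)]

lemma weakLim_zstat_iff (hM : IsDetectionModel P μ ε k) {s : ℝ} (hs : 0 ≤ s) :
    WeakLim (fun n ↦ (Pprod P k n).map (Zstat P μ ε k n)) (gaussianReal 0 s.toNNReal) ↔
      IsLindeberg P k (signalDensity P μ ε) s := by
  rw [hM.zstat_eq_centredSum]
  exact ⟨hM.isNullArray.isLindeberg_of_weakLim_centredSum hs, hM.isNullArray.weakLim_centredSum hs⟩

lemma exists_tendsto_I1_and_tendsto_I2_iff (hM : IsDetectionModel P μ ε k) {s : ℝ} :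
    (∃ τ, 0 < τ ∧ (∀ x, 0 < x → Tendsto (I1 P μ ε k x) atTop (𝓝 0)) ∧
      Tendsto (I2 P μ ε k τ) atTop (𝓝 s)) ↔ IsLindeberg P k (signalDensity P μ ε) s := by
  simp only [funext (hM.I1_eq_tailMeanSum _), funext (hM.I2_eq_truncVarSum _)]
  exact ⟨fun ⟨_, hτ, htail, hvar⟩ ↦
    hM.isNullArray.isLindeberg_of_tendsto_truncVarSum htail hτ hvar,
    fun hs ↦ ⟨1, one_pos, hs.1, hs.2 1 one_pos⟩⟩

variable {ν₁ ν₂ : Measure EReal}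

lemma hellingerTransform_eq_iff (hM : IsDetectionModel P μ ε k)
    (h₁ : WeakLim (lawP P μ ε k) ν₁) (h₂ : WeakLim (lawQ P μ ε k) ν₂) {r L : ℝ}
    (hr : r ∈ Set.Ioo 0 1) :
    hellingerTransform ν₁ ν₂ r = Real.exp (-L) ↔
      Tendsto (testSum P k (signalDensity P μ ε) (hellingerTest r)) atTop (𝓝 L) := by
  rw [← hM.isNullArray.tendsto_hellingerProd_iff hr.1.le hr.2.le]
  have hlim := hM.tendsto_hellingerProd h₁ h₂ hr
  exact ⟨fun h ↦ h ▸ hlim, tendsto_nhds_unique hlim⟩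

variable [IsProbabilityMeasure ν₁] [IsProbabilityMeasure ν₂]

lemma left_eq_gaussE_iff_isLindeberg (hM : IsDetectionModel P μ ε k)
    (h₁ : WeakLim (lawP P μ ε k) ν₁) (h₂ : WeakLim (lawQ P μ ε k) ν₂) {s : ℝ} (hs : 0 ≤ s) :
    ν₁ = gaussE (-s / 2) s ↔ IsLindeberg P k (signalDensity P μ ε) s := by
  rw [(hM.isLikelihoodPair h₁ h₂).left_eq_gaussE_neg_half_iff hs]
  refine ⟨fun h ↦ hM.isNullArray.isLindeberg_of_tendsto_testSum_hellingerTest fun r hr ↦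
    (hM.hellingerTransform_eq_iff h₁ h₂ hr).1 (h r hr), fun h r hr ↦ ?_⟩
  exact (hM.hellingerTransform_eq_iff h₁ h₂ hr).2
    (hM.isNullArray.tendsto_testSum h (isSecondOrderTest_hellingerTest hr.1.le hr.2.le))

/-- The exponent `L r` of the Hellinger transform satisfies `0 ≤ L r ≤ 10 * r * L (1 / 2)`, and
tends to `a - s / 2` as `r → 0`. -/
lemma eq_half_of_right_eq_gaussE (hM : IsDetectionModel P μ ε k)
    (h₁ : WeakLim (lawP P μ ε k) ν₁) (h₂ : WeakLim (lawQ P μ ε k) ν₂) {a s : ℝ} (hs : 0 ≤ s)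
    (hν₂ : ν₂ = gaussE a s) : a = s / 2 := by
  let L (r : ℝ) : ℝ := (1 - r) * a - (1 - r) ^ 2 * s / 2
  have hL {r : ℝ} (hr : r ∈ Set.Ioo 0 1) :
      Tendsto (testSum P k (signalDensity P μ ε) (hellingerTest r)) atTop (𝓝 (L r)) := by
    rw [← hM.hellingerTransform_eq_iff h₁ h₂ hr,
      ((hM.isLikelihoodPair h₁ h₂).right_eq_gaussE_iff hs).1 hν₂ r hr]
    congr 1
    ring
  have hnonneg {r : ℝ} (hr : r ∈ Set.Ioo 0 1) : 0 ≤ L r := ge_of_tendsto' (hL hr)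
    (hM.isNullArray.testSum_nonneg fun x hx ↦ hellingerTest_nonneg hr.1.le hr.2.le hx)
  have hle {r : ℝ} (hr : r ∈ Set.Ioo 0 1) : L r ≤ 10 * r * L (1 / 2) :=
    le_of_tendsto_of_tendsto (hL hr) ((hL (by norm_num)).const_mul _)
      (hM.isNullArray.eventually_testSum_hellingerTest_le.mono
        fun n hn ↦ hn r (Set.Ioo_subset_Icc_self hr))
  have hmem : ∀ᶠ r : ℝ in 𝓝[>] 0, r ∈ Set.Ioo (0 : ℝ) 1 := Ioo_mem_nhdsGT one_pos
  have hlim_bound : Tendsto (fun r : ℝ ↦ 10 * r * L (1 / 2)) (𝓝[>] 0) (𝓝 0) :=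
    tendsto_nhdsWithin_of_tendsto_nhds (Continuous.tendsto' (by fun_prop) _ _ (by simp))
  have hcont : Continuous L := by fun_prop
  have hlim : Tendsto L (𝓝[>] 0) (𝓝 (L 0)) := (hcont.tendsto 0).mono_left nhdsWithin_le_nhds
  have hzero := tendsto_nhds_unique hlim
    (squeeze_zero' (hmem.mono fun r ↦ hnonneg) (hmem.mono fun r ↦ hle) hlim_bound)
  simp only [L] at hzero
  linarith

lemma exists_left_eq_gaussE_iff_exists_right (hM : IsDetectionModel P μ ε k)
    (h₁ : WeakLim (lawP P μ ε k) ν₁) (h₂ : WeakLim (lawQ P μ ε k) ν₂) :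
    (∃ s, 0 ≤ s ∧ ν₁ = gaussE (-s / 2) s) ↔ ∃ a s, 0 ≤ s ∧ ν₂ = gaussE a s := by
  have hpair := hM.isLikelihoodPair h₁ h₂
  constructor
  · rintro ⟨s, hs, hν₁⟩
    exact ⟨_, s, hs, (hpair.left_eq_gaussE_iff_right_eq_gaussE hs).1 hν₁⟩
  · rintro ⟨a, s, hs, hν₂⟩
    obtain rfl := hM.eq_half_of_right_eq_gaussE h₁ h₂ hs hν₂
    exact ⟨s, hs, (hpair.left_eq_gaussE_iff_right_eq_gaussE hs).2 hν₂⟩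

/-- `8 * L (1 / 2)` because `hellingerTest (1 / 2)` has second-order coefficient `1 / 8`. -/
lemma exists_isLindeberg_of_tendsto_tailProbSum (hM : IsDetectionModel P μ ε k)
    (h₁ : WeakLim (lawP P μ ε k) ν₁) (h₂ : WeakLim (lawQ P μ ε k) ν₂)
    (hreal : ν₂ {x | x = ⊥ ∨ x = ⊤} = 0)
    (hprob : ∀ δ, 0 < δ → Tendsto (tailProbSum P k (signalDensity P μ ε) δ) atTop (𝓝 0)) :
    ∃ s, 0 ≤ s ∧ IsLindeberg P k (signalDensity P μ ε) s := by
  have hpair := hM.isLikelihoodPair h₁ h₂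
  let L (r : ℝ) : ℝ := -Real.log (hellingerTransform ν₁ ν₂ r)
  have hL (r : ℝ) (hr : r ∈ Set.Ioo 0 1) :
      Tendsto (testSum P k (signalDensity P μ ε) (hellingerTest r)) atTop (𝓝 (L r)) := by
    rw [← hM.hellingerTransform_eq_iff h₁ h₂ hr, neg_neg,
      Real.exp_log (hpair.hellingerTransform_pos hreal hr)]
  have hL1 : Tendsto L (𝓝[<] 1) (𝓝 0) := by
    simpa using ((hpair.tendsto_hellingerTransform_one hreal).log one_ne_zero).neg
  have hhalf := hL (1 / 2) (by norm_num)
  have hnonneg : 0 ≤ L (1 / 2) := ge_of_tendsto' hhalf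
    (hM.isNullArray.testSum_nonneg fun x hx ↦ hellingerTest_nonneg (by norm_num) (by norm_num) hx)
  refine ⟨8 * L (1 / 2), by positivity, hM.isNullArray.isLindeberg_of_tendsto_testSum
    (fun x ↦ hM.isNullArray.tendsto_tailMeanSum_of_hellingerTest hprob hL hL1)
    (isSecondOrderTest_hellingerTest (r := 1 / 2) (by norm_num) (by norm_num)) (by norm_num) ?_⟩
  exact hhalf.trans_eq (by ring_nf)

lemma exists_left_eq_gaussE_iff_tendsto_maxMu (hM : IsDetectionModel P μ ε k)
    (h₁ : WeakLim (lawP P μ ε k) ν₁) (h₂ : WeakLim (lawQ P μ ε k) ν₂) :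
    (∃ s, 0 ≤ s ∧ ν₁ = gaussE (-s / 2) s) ↔ ν₂ {x | x = ⊥ ∨ x = ⊤} = 0 ∧
      ∀ δ, 0 < δ → Tendsto (fun n ↦ Pprod P k n {y | δ ≤ maxMu P μ ε k n y}) atTop (𝓝 0) := by
  have hB {s : ℝ} (hs : 0 ≤ s) := hM.left_eq_gaussE_iff_isLindeberg h₁ h₂ hs
  constructor
  · rintro ⟨s, hs, hν₁⟩
    exact ⟨(hM.isLikelihoodPair h₁ h₂).right_setOf_eq_bot_or_eq_top hs hν₁, fun δ hδ ↦
      (hM.tendsto_measure_le_maxMu_iff hδ).2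
        (hM.isNullArray.tendsto_tailProbSum_of_tailMeanSum ((hB hs).1 hν₁).1 hδ)⟩
  · rintro ⟨hreal, hmax⟩
    obtain ⟨s, hs, hlind⟩ := hM.exists_isLindeberg_of_tendsto_tailProbSum h₁ h₂ hreal
      fun δ hδ ↦ (hM.tendsto_measure_le_maxMu_iff hδ).1 (hmax δ hδ)
    exact ⟨s, hs, (hB hs).2 hlind⟩

end IsDetectionModel

/-- Gaussian limits: equivalent conditions (a)–(i), with matching
variances σ². -/
theorem statement17 {α : Type*} [MeasurableSpace α]
    (k : ℕ → ℕ) (P μ : ℕ → ℕ → Measure α) (ε : ℕ → ℕ → ℝ)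
    (hk : Tendsto k atTop atTop)
    (hP : ∀ n i, IsProbabilityMeasure (P n i))
    (hμ : ∀ n i, IsProbabilityMeasure (μ n i))
    (hac : ∀ n i, μ n i ≪ P n i)
    (hε : ∀ n i, ε n i ∈ Set.Icc (0 : ℝ) 1)
    (hεmax : Tendsto (fun n => ⨆ i : Fin (k n), ε n i) atTop (nhds 0))
    (ν1 ν2 : Measure EReal)
    (hν1 : IsProbabilityMeasure ν1) (hν2 : IsProbabilityMeasure ν2)
    (hwP : WeakLim (lawP P μ ε k) ν1) (hwQ : WeakLim (lawQ P μ ε k) ν2) :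
    -- the nine equivalent conditions
    letI PA : Prop := (∃ a1 s1 a2 s2 : ℝ, 0 < s1 ∧ 0 < s2 ∧
        ν1 = gaussE a1 s1 ∧ ν2 = gaussE a2 s2) ∨
      (ν1 = Measure.dirac ((0 : ℝ) : EReal) ∧ ν2 = Measure.dirac ((0 : ℝ) : EReal))
    letI PB : ℝ → Prop := fun s => ν1 = gaussE (-s / 2) s
    letI PC : ℝ → Prop := fun s => ν2 = gaussE (s / 2) s
    letI PD : Prop := ν2 {x : EReal | x = ⊥ ∨ x = ⊤} = 0 ∧
      ∃ a s : ℝ, 0 ≤ s ∧ ν1 = gaussE a s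
    letI PE : Prop := ∃ a s : ℝ, 0 ≤ s ∧ ν2 = gaussE a s
    letI PF : ℝ → Prop := fun s =>
      WeakLim (fun n => (Pprod P k n).map (Zstat P μ ε k n))
        (gaussianReal 0 s.toNNReal)
    letI PG : Prop := ν2 {x : EReal | x = ⊥ ∨ x = ⊤} = 0 ∧
      ∀ δ : ℝ, 0 < δ →
        Tendsto (fun n => (Pprod P k n) {y | δ ≤ |maxQ P μ ε k n y - 1|})
          atTop (nhds 0)
    letI PH : Prop := ν2 {x : EReal | x = ⊥ ∨ x = ⊤} = 0 ∧
      ∀ δ : ℝ, 0 < δ →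
        Tendsto (fun n => (Pprod P k n) {y | δ ≤ maxMu P μ ε k n y})
          atTop (nhds 0)
    letI PI : ℝ → Prop := fun s => ∃ τ : ℝ, 0 < τ ∧
      (∀ x : ℝ, 0 < x → Tendsto (fun n => I1 P μ ε k x n) atTop (nhds 0)) ∧
      Tendsto (fun n => I2 P μ ε k τ n) atTop (nhds s)
    (PA ↔ (∃ s, 0 ≤ s ∧ PB s)) ∧
    ((∃ s, 0 ≤ s ∧ PB s) ↔ (∃ s, 0 ≤ s ∧ PC s)) ∧
    ((∃ s, 0 ≤ s ∧ PB s) ↔ PD) ∧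
    ((∃ s, 0 ≤ s ∧ PB s) ↔ PE) ∧
    ((∃ s, 0 ≤ s ∧ PB s) ↔ (∃ s, 0 ≤ s ∧ PF s)) ∧
    ((∃ s, 0 ≤ s ∧ PB s) ↔ PG) ∧
    ((∃ s, 0 ≤ s ∧ PB s) ↔ PH) ∧
    ((∃ s, 0 ≤ s ∧ PB s) ↔ (∃ s, 0 ≤ s ∧ PI s)) ∧
    (∀ s : ℝ, 0 ≤ s → ((PB s ↔ PC s) ∧ (PB s ↔ PF s) ∧ (PB s ↔ PI s))) := by
  have hM : IsDetectionModel P μ ε k := ⟨hac, hε, hεmax⟩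
  have hpair : IsLikelihoodPair ν1 ν2 := hM.isLikelihoodPair hwP hwQ
  have hB {s : ℝ} (hs : 0 ≤ s) := hM.left_eq_gaussE_iff_isLindeberg hwP hwQ hs
  have hBC {s : ℝ} (hs : 0 ≤ s) := hpair.left_eq_gaussE_iff_right_eq_gaussE hs
  have hBF {s : ℝ} (hs : 0 ≤ s) := (hB hs).trans (hM.weakLim_zstat_iff hs).symm
  have hBI {s : ℝ} (hs : 0 ≤ s) := (hB hs).trans hM.exists_tendsto_I1_and_tendsto_I2_iff.symm
  have hBH := hM.exists_left_eq_gaussE_iff_tendsto_maxMu hwP hwQ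
  have hGH := hM.tendsto_measure_le_abs_maxQ_sub_one_iff (hk.eventually_ne_atTop 0)
  exact ⟨hpair.gaussE_and_gaussE_or_dirac_iff,
    exists_congr fun s ↦ and_congr_right hBC,
    hpair.exists_left_eq_gaussE_iff_exists,
    hM.exists_left_eq_gaussE_iff_exists_right hwP hwQ,
    exists_congr fun s ↦ and_congr_right hBF,
    hBH.trans (and_congr_right fun _ ↦ hGH.symm),
    hBH,
    exists_congr fun s ↦ and_congr_right hBI,
    fun s hs ↦ ⟨hBC hs, hBF hs, hBI hs⟩⟩

end
end

section
/- Let Φ be the standard normal distribution function. Then: (i) for all x > 0, (x/(√(2π)(1+x²)))·exp(−x²/2) ≤ 1 − Φ(x) ≤ (1/(√(2π)·x))·exp(−x²/2); and (ii) there exists U > 0 such that for all u ∈ (0,U): −Φ^{−1}(u) = Φ^{−1}(1−u) ≥ √(2·log(1/u)) · ( 1 − (7 + log log(1/u))/(4·log(1/u)) ). -/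
open MeasureTheory ProbabilityTheory

noncomputable section

/-- Standard normal distribution function `Φ`. -/
def Phi (x : ℝ) : ℝ := ((gaussianReal 0 1) (Set.Iic x)).toReal

/-!
Let `φ` be the normal density with mean `m` and variance `v`; its derivative at `t` is
`-((t - m) / v) * φ t`. Hence `(1 + v / (t - m) ^ 2) * φ t` has the primitive
`-(v / (t - m)) * φ t`, which vanishes at infinity. For `t > x > m` the factor
`1 + v / (t - m) ^ 2` lies between `1` and `1 + v / (x - m) ^ 2`; this traps the tail mass beyond
`x` from both sides.

For the quantile bound put `L = log (1 / u)` and let `w` be the claimed lower bound. Squaring gives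
`w ^ 2 = 2 * L - (7 + log L) + (7 + log L) ^ 2 / (8 * L)`, where the last term is at most `1` for
large `L`, so `exp (-w ^ 2 / 2) ≥ exp 3 * √L * exp (-L)`. As `w ≤ √(2 * L)`, the lower tail bound
yields `1 - Φ w ≥ exp 3 / (4 * √π) * u > u = 1 - Φ y`, that is `w < y`.
-/

section MonotoneDistribution

open Set

variable {α : Type*} [LinearOrder α] [TopologicalSpace α] [OrderClosedTopology α]
  [DenselyOrdered α] [MeasurableSpace α] [OpensMeasurableSpace α]

lemma strictMono_measureReal_Iic (μ : Measure α) [IsFiniteMeasure μ] [μ.IsOpenPosMeasure] :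
    StrictMono fun x ↦ μ.real (Iic x) := by
  intro a b hab
  have hIoo : 0 < μ (Ioo a b) := isOpen_Ioo.measure_pos μ (nonempty_Ioo.2 hab)
  have hpos : 0 < μ.real (Ioc a b) :=
    ENNReal.toReal_pos (hIoo.trans_le (measure_mono Ioo_subset_Ioc_self)).ne' (measure_ne_top μ _)
  calc μ.real (Iic a) < μ.real (Iic a) + μ.real (Ioc a b) := lt_add_of_pos_right _ hpos
    _ = μ.real (Iic b) := by
      rw [← measureReal_union (Iic_disjoint_Ioc le_rfl) measurableSet_Ioc,
        Iic_union_Ioc_eq_Iic hab.le]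

end MonotoneDistribution

section GaussianTail

open Filter Set
open scoped NNReal Topology

variable {m x : ℝ} {v : ℝ≥0}

lemma isOpenPosMeasure_gaussianReal (m : ℝ) (hv : v ≠ 0) : (gaussianReal m v).IsOpenPosMeasure :=
  (gaussianReal_absolutelyContinuous' m hv).isOpenPosMeasure

lemma measureReal_gaussianReal_eq_integral (m : ℝ) (hv : v ≠ 0) (s : Set ℝ) :
    (gaussianReal m v).real s = ∫ t in s, gaussianPDFReal m v t := by
  rw [measureReal_def, gaussianReal_apply_eq_integral m hv,
    ENNReal.toReal_ofReal (integral_nonneg fun t ↦ gaussianPDFReal_nonneg m v t)]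

lemma measureReal_gaussianReal_Iic_neg (hv : v ≠ 0) (m x : ℝ) :
    (gaussianReal m v).real (Iic (-x)) = (gaussianReal (-m) v).real (Ioi x) := by
  have := nullSingletonClass_gaussianReal (μ := -m) hv
  rw [measureReal_congr Ioi_ae_eq_Ici, ← gaussianReal_map_neg,
    map_measureReal_apply measurable_neg measurableSet_Ici, neg_preimage, neg_Ici]

lemma gaussianPDFReal_le (m : ℝ) (v : ℝ≥0) (x : ℝ) :
    gaussianPDFReal m v x ≤ (√(2 * Real.pi * v))⁻¹ := by
  refine mul_le_of_le_one_right (by positivity) (Real.exp_le_one_iff.2 ?_)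
  exact div_nonpos_of_nonpos_of_nonneg (by simpa using sq_nonneg _) (by positivity)

lemma hasDerivAt_gaussianPDFReal (m : ℝ) (v : ℝ≥0) (x : ℝ) :
    HasDerivAt (gaussianPDFReal m v) (-((x - m) / v) * gaussianPDFReal m v x) x := by
  have hexponent : HasDerivAt (fun t ↦ -(t - m) ^ 2 / (2 * v)) (-((x - m) / v)) x :=
    ((((hasDerivAt_id' x).sub_const m).fun_pow 2).fun_neg.div_const (2 * v)).congr_deriv
      (by push_cast; ring)
  exact (hexponent.exp.const_mul _).congr_deriv (by rw [gaussianPDFReal]; ring)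

lemma hasDerivAt_div_sub_mul_gaussianPDFReal (hv : v ≠ 0) (hx : x ≠ m) :
    HasDerivAt (fun t ↦ v / (t - m) * gaussianPDFReal m v t)
      (-((1 + v / (x - m) ^ 2) * gaussianPDFReal m v x)) x := by
  have hv' : (v : ℝ) ≠ 0 := NNReal.coe_ne_zero.2 hv
  have hx' : x - m ≠ 0 := sub_ne_zero.2 hx
  have hquot : HasDerivAt (fun t ↦ v / (t - m)) (-(v / (x - m) ^ 2)) x :=
    ((hasDerivAt_const x (v : ℝ)).fun_div ((hasDerivAt_id' x).sub_const m) hx').congr_deriv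
      (by ring)
  refine (hquot.fun_mul (hasDerivAt_gaussianPDFReal m v x)).congr_deriv ?_
  field_simp
  ring

lemma tendsto_div_sub_mul_gaussianPDFReal_atTop (m : ℝ) (v : ℝ≥0) :
    Tendsto (fun t ↦ v / (t - m) * gaussianPDFReal m v t) atTop (𝓝 0) := by
  have hquot : Tendsto (fun t : ℝ ↦ v / (t - m)) atTop (𝓝 0) :=
    (tendsto_atTop_add_const_right atTop (-m) tendsto_id).const_div_atTop (v : ℝ)
  refine hquot.zero_mul_isBoundedUnder_le 
    (isBoundedUnder_of ⟨(√(2 * Real.pi * v))⁻¹, fun t ↦ ?_⟩)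
  rw [Function.comp_apply, Real.norm_of_nonneg (gaussianPDFReal_nonneg m v t)]
  exact gaussianPDFReal_le m v t

lemma integrableOn_Ioi_one_add_div_sq_mul_gaussianPDFReal (hv : v ≠ 0) (hx : m < x) :
    IntegrableOn (fun t ↦ (1 + v / (t - m) ^ 2) * gaussianPDFReal m v t) (Ioi x) := by
  refine integrable_neg_iff.1 (integrableOn_Ioi_deriv_of_nonpos'
    (fun t ht ↦ hasDerivAt_div_sub_mul_gaussianPDFReal hv (hx.trans_le ht).ne')
    (fun t _ ↦ ?_) (tendsto_div_sub_mul_gaussianPDFReal_atTop m v))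
  have := gaussianPDFReal_nonneg m v t
  exact neg_nonpos.2 (by positivity)

lemma integral_Ioi_one_add_div_sq_mul_gaussianPDFReal (hv : v ≠ 0) (hx : m < x) :
    ∫ t in Ioi x, (1 + v / (t - m) ^ 2) * gaussianPDFReal m v t =
      v / (x - m) * gaussianPDFReal m v x := by
  have hFTC := integral_Ioi_of_hasDerivAt_of_tendsto'
    (fun t ht ↦ hasDerivAt_div_sub_mul_gaussianPDFReal hv (hx.trans_le ht).ne')
    (integrableOn_Ioi_one_add_div_sq_mul_gaussianPDFReal hv hx).neg
    (tendsto_div_sub_mul_gaussianPDFReal_atTop m v)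
  simpa only [integral_neg, zero_sub, neg_inj] using hFTC

lemma measureReal_gaussianReal_Ioi_le (hv : v ≠ 0) (hx : m < x) :
    (gaussianReal m v).real (Ioi x) ≤ v / (x - m) * gaussianPDFReal m v x := by
  rw [measureReal_gaussianReal_eq_integral m hv,
    ← integral_Ioi_one_add_div_sq_mul_gaussianPDFReal hv hx]
  refine setIntegral_mono_on (integrable_gaussianPDFReal m v).integrableOn
    (integrableOn_Ioi_one_add_div_sq_mul_gaussianPDFReal hv hx) measurableSet_Ioi fun t _ ↦ ?_
  exact le_mul_of_one_le_left (gaussianPDFReal_nonneg m v t)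
    (le_add_of_nonneg_right (by positivity))

lemma le_measureReal_gaussianReal_Ioi (hv : v ≠ 0) (hx : m < x) :
    v * (x - m) / (v + (x - m) ^ 2) * gaussianPDFReal m v x ≤ (gaussianReal m v).real (Ioi x) := by
  have hx' : 0 < x - m := sub_pos.2 hx
  have hprimitive : v / (x - m) * gaussianPDFReal m v x ≤
      (1 + v / (x - m) ^ 2) * (gaussianReal m v).real (Ioi x) := by
    rw [measureReal_gaussianReal_eq_integral m hv, ← integral_const_mul,
      ← integral_Ioi_one_add_div_sq_mul_gaussianPDFReal hv hx]
    refine setIntegral_mono_on (integrableOn_Ioi_one_add_div_sq_mul_gaussianPDFReal hv hx)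
      ((integrable_gaussianPDFReal m v).const_mul _).integrableOn measurableSet_Ioi fun t ht ↦ ?_
    have := gaussianPDFReal_nonneg m v t
    have : x ≤ t := le_of_lt ht
    gcongr
  calc v * (x - m) / (v + (x - m) ^ 2) * gaussianPDFReal m v x
      = v / (x - m) * gaussianPDFReal m v x / (1 + v / (x - m) ^ 2) := by field_simp; ring
    _ ≤ (gaussianReal m v).real (Ioi x) := (div_le_iff₀' (by positivity)).2 hprimitive

end GaussianTail

section StandardNormal

variable {x : ℝ}

lemma one_sub_Phi (x : ℝ) : 1 - Phi x = (gaussianReal 0 1).real (Set.Ioi x) := by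
  rw [← Set.compl_Iic, probReal_compl_eq_one_sub measurableSet_Iic, Phi, measureReal_def]

lemma Phi_neg (x : ℝ) : Phi (-x) = 1 - Phi x := by
  rw [one_sub_Phi, Phi, ← measureReal_def, measureReal_gaussianReal_Iic_neg one_ne_zero, neg_zero]

lemma strictMono_Phi : StrictMono Phi :=
  have := isOpenPosMeasure_gaussianReal 0 one_ne_zero
  strictMono_measureReal_Iic (gaussianReal 0 1)

lemma gaussianPDFReal_zero_one (x : ℝ) :
    gaussianPDFReal 0 1 x = (√(2 * Real.pi))⁻¹ * Real.exp (-(x ^ 2) / 2) := by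
  simp only [gaussianPDFReal, NNReal.coe_one, mul_one, sub_zero]

lemma one_sub_Phi_le (hx : 0 < x) :
    1 - Phi x ≤ 1 / (√(2 * Real.pi) * x) * Real.exp (-(x ^ 2) / 2) := by
  rw [one_sub_Phi]
  refine (measureReal_gaussianReal_Ioi_le one_ne_zero hx).trans_eq ?_
  rw [gaussianPDFReal_zero_one, NNReal.coe_one, sub_zero]
  field_simp

lemma le_one_sub_Phi (hx : 0 < x) :
    x / (√(2 * Real.pi) * (1 + x ^ 2)) * Real.exp (-(x ^ 2) / 2) ≤ 1 - Phi x := by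
  rw [one_sub_Phi]
  refine (le_measureReal_gaussianReal_Ioi one_ne_zero hx).trans_eq' ?_
  rw [gaussianPDFReal_zero_one, NNReal.coe_one, sub_zero]
  field_simp

lemma exp_div_le_one_sub_Phi (hx : 1 ≤ x) :
    Real.exp (-(x ^ 2) / 2) / (2 * √(2 * Real.pi) * x) ≤ 1 - Phi x := by
  have hx₀ : 0 < x := one_pos.trans_le hx
  have hfactor : 1 / (2 * √(2 * Real.pi) * x) ≤ x / (√(2 * Real.pi) * (1 + x ^ 2)) := by
    rw [div_le_div_iff₀ (by positivity) (by positivity)]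
    nlinarith [mul_le_mul_of_nonneg_left (one_le_pow₀ hx : 1 ≤ x ^ 2)
      (Real.sqrt_nonneg (2 * Real.pi))]
  calc Real.exp (-(x ^ 2) / 2) / (2 * √(2 * Real.pi) * x)
      = 1 / (2 * √(2 * Real.pi) * x) * Real.exp (-(x ^ 2) / 2) := by ring
    _ ≤ x / (√(2 * Real.pi) * (1 + x ^ 2)) * Real.exp (-(x ^ 2) / 2) := by gcongr
    _ ≤ 1 - Phi x := le_one_sub_Phi hx₀

end StandardNormal

section Quantile

/-- The lower bound for the standard normal quantile `Φ⁻¹ (1 - u)`, as a function of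
`L = log (1 / u)`. -/
def quantileMinorant (L : ℝ) : ℝ := √(2 * L) * (1 - (7 + Real.log L) / (4 * L))

variable {L : ℝ}

lemma log_le_sqrt (hL : 0 < L) : Real.log L ≤ √L := by
  have hsqrt : 0 < √L := Real.sqrt_pos.2 hL
  have htangent : Real.log (√L / 2) ≤ √L / 2 - 1 := Real.log_le_sub_one_of_pos (by positivity)
  rw [Real.log_div hsqrt.ne' two_ne_zero, Real.log_sqrt hL.le] at htangent
  linarith [Real.log_two_lt_d9]

lemma seven_add_log_sq_le (hL : 16 ≤ L) : (7 + Real.log L) ^ 2 ≤ 8 * L := by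
  have hlog : Real.log L ≤ √L := log_le_sqrt (by linarith)
  have hlog₀ : 0 ≤ Real.log L := Real.log_nonneg (by linarith)
  have hsqrt : 4 ≤ √L := Real.le_sqrt_of_sq_le (by linarith)
  calc (7 + Real.log L) ^ 2 ≤ (7 + √L) ^ 2 := by gcongr
    _ ≤ 8 * √L ^ 2 := by nlinarith
    _ = 8 * L := by rw [Real.sq_sqrt (by linarith)]

lemma quantileMinorant_sq (hL : 0 < L) :
    quantileMinorant L ^ 2 = 2 * L - (7 + Real.log L) + (7 + Real.log L) ^ 2 / (8 * L) := by
  rw [quantileMinorant, mul_pow, Real.sq_sqrt (by positivity)]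
  field_simp
  ring

lemma quantileMinorant_sq_le (hL : 16 ≤ L) :
    quantileMinorant L ^ 2 ≤ 2 * L - 6 - Real.log L := by
  have hquot : (7 + Real.log L) ^ 2 / (8 * L) ≤ 1 :=
    div_le_one_of_le₀ (seven_add_log_sq_le hL) (by linarith)
  rw [quantileMinorant_sq (by linarith)]
  linarith

lemma one_le_quantileMinorant (hL : 16 ≤ L) : 1 ≤ quantileMinorant L := by
  have hroot : 2 ≤ √(2 * L) := Real.le_sqrt_of_sq_le (by linarith)
  have hfactor : 1 / 2 ≤ 1 - (7 + Real.log L) / (4 * L) := by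
    have : 7 + Real.log L ≤ 2 * L :=
      le_of_sq_le_sq ((seven_add_log_sq_le hL).trans (by nlinarith)) (by linarith)
    have : (7 + Real.log L) / (4 * L) ≤ 1 / 2 := (div_le_iff₀ (by linarith)).2 (by linarith)
    linarith
  calc (1 : ℝ) = 2 * (1 / 2) := by norm_num
    _ ≤ quantileMinorant L := mul_le_mul hroot hfactor (by norm_num) (by positivity)

lemma quantileMinorant_le_sqrt (hL : 16 ≤ L) : quantileMinorant L ≤ √(2 * L) :=
  Real.le_sqrt_of_sq_le <| by
    linarith [quantileMinorant_sq_le hL, Real.log_nonneg (show 1 ≤ L by linarith)]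

lemma exp_three_mul_sqrt_mul_exp_neg_le (hL : 16 ≤ L) :
    Real.exp 3 * √L * Real.exp (-L) ≤ Real.exp (-(quantileMinorant L ^ 2) / 2) := by
  have hL₀ : 0 < L := by linarith
  rw [← Real.exp_log (Real.sqrt_pos.2 hL₀), Real.log_sqrt hL₀.le, ← Real.exp_add, ← Real.exp_add]
  exact Real.exp_le_exp.2 (by linarith [quantileMinorant_sq_le hL])

lemma four_mul_sqrt_pi_lt_exp_three : 4 * √Real.pi < Real.exp 3 := by
  have hpi : √Real.pi ≤ 2 := Real.sqrt_le_iff.2 ⟨two_pos.le, by linarith [Real.pi_lt_four]⟩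
  linarith [Real.quadratic_le_exp_of_nonneg (show (0 : ℝ) ≤ 3 by norm_num)]

lemma exp_neg_lt_one_sub_Phi_quantileMinorant (hL : 16 ≤ L) :
    Real.exp (-L) < 1 - Phi (quantileMinorant L) := by
  have hw : 0 < quantileMinorant L := one_pos.trans_le (one_le_quantileMinorant hL)
  have hsqrt : √(2 * Real.pi) * √(2 * L) = 2 * √Real.pi * √L := by
    rw [← Real.sqrt_mul (by positivity), show 2 * Real.pi * (2 * L) = 2 ^ 2 * Real.pi * L by ring,
      Real.sqrt_mul (by positivity), Real.sqrt_mul (by positivity), Real.sqrt_sq two_pos.le]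
  calc Real.exp (-L)
      < Real.exp 3 / (4 * √Real.pi) * Real.exp (-L) :=
        lt_mul_of_one_lt_left (Real.exp_pos _)
          ((one_lt_div (by positivity)).2 four_mul_sqrt_pi_lt_exp_three)
    _ = Real.exp 3 * √L * Real.exp (-L) / (2 * √(2 * Real.pi) * √(2 * L)) := by
        rw [mul_assoc 2, hsqrt]
        field_simp
        norm_num
    _ ≤ Real.exp (-(quantileMinorant L ^ 2) / 2) /
          (2 * √(2 * Real.pi) * quantileMinorant L) := by
        gcongr
        · exact exp_three_mul_sqrt_mul_exp_neg_le hL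
        · exact quantileMinorant_le_sqrt hL
    _ ≤ 1 - Phi (quantileMinorant L) := exp_div_le_one_sub_Phi (one_le_quantileMinorant hL)

lemma quantileMinorant_lt_of_Phi_eq {u y : ℝ} (hu : 0 < u) (hu' : u ≤ Real.exp (-16))
    (hy : Phi y = 1 - u) : quantileMinorant (Real.log u⁻¹) < y := by
  have hL : 16 ≤ Real.log u⁻¹ := by
    rw [Real.log_inv]
    linarith [(Real.log_le_iff_le_exp hu).2 hu']
  have htail := exp_neg_lt_one_sub_Phi_quantileMinorant hL
  rw [Real.log_inv, neg_neg, Real.exp_log hu, ← Real.log_inv] at htail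
  exact strictMono_Phi.lt_iff_lt.1 (by linarith)

end Quantile

/-- tail and quantile estimates for the standard normal law:
(i) `x/(√(2π)(1+x²))·e^{−x²/2} ≤ 1 − Φ(x) ≤ 1/(√(2π)x)·e^{−x²/2}` for all `x > 0`;
(ii) there is `U > 0` such that for all `u ∈ (0,U)`, writing `z = Φ⁻¹(u)` and
`y = Φ⁻¹(1−u)`, one has `−z = y` and
`y ≥ √(2 log(1/u))·(1 − (7 + log log(1/u))/(4 log(1/u)))`. -/
theorem statement19 :
    (∀ x : ℝ, 0 < x →
      (x / (Real.sqrt (2 * Real.pi) * (1 + x ^ 2)) * Real.exp (-(x ^ 2) / 2) ≤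
          1 - Phi x ∧
        1 - Phi x ≤ 1 / (Real.sqrt (2 * Real.pi) * x) * Real.exp (-(x ^ 2) / 2))) ∧
    (∃ U : ℝ, 0 < U ∧ ∀ u ∈ Set.Ioo (0 : ℝ) U, ∀ z y : ℝ,
      Phi z = u → Phi y = 1 - u →
      (-z = y ∧
        Real.sqrt (2 * Real.log u⁻¹) *
          (1 - (7 + Real.log (Real.log u⁻¹)) / (4 * Real.log u⁻¹)) ≤ y)) := by
  refine ⟨fun x hx ↦ ⟨le_one_sub_Phi hx, one_sub_Phi_le hx⟩, Real.exp (-16), Real.exp_pos _, ?_⟩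
  rintro u ⟨hu, hu'⟩ z y hz hy
  refine ⟨strictMono_Phi.injective ?_, (quantileMinorant_lt_of_Phi_eq hu hu'.le hy).le⟩
  rw [Phi_neg, hz, hy]

end
end
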